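/- Let n ≥ 2 and let P be a uniformly distributed projection in Proj_𝔽(n,2n). Let P̃ be the top-left 2×2 submatrix of P, with eigenvalues λ₁ ≥ λ₂, and let D_Sep = {(x,y) : 0 ≤ y < 1/2 < x ≤ 1}. Then P((λ₁,λ₂) ∈ D_Sep) = B((n−1)/2,(n−1)/2)/(2^n·B(n−1,n−1)) if 𝔽 = ℝ, and P((λ₁,λ₂) ∈ D_Sep) = 1/2 + (8n−4)/((n−1)²·2^{4n−3}·B(n−1,n−1)²) if 𝔽 = ℂ; moreover these probabilities converge to 1/√2 and to 1/2 + 1/π respectively as n → ∞. -/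

import Mathlib

/-!
Let `R = 2P - 1`, a random reflection whose eigenvalues `1` and `-1` have multiplicity `n` each. The
`2 × 2` corner of `P` has its eigenvalues in `[0, 1]`, so they are separated by `1/2` exactly when the
corner of `R`, with diagonal `α`, `γ` and off-diagonal entry `β`, has determinant `αγ - |β|² < 0`
(`mem_sepEvent_iff`).

Only the unitary invariance of the law of `P` is available, and it is exploited by evaluating `R` at
an independent Gaussian vector `v`, whose law is unitarily invariant too. By Fubini one may then fix
`P` and integrate over `v`, where only the spectrum of a Hermitian form matters
(`lintegral_gauss_hermitian`). Applied to `v* R v / |v|²` this shows that `α` is distributed as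
`(X - Y) / (X + Y)` with `X`, `Y` independent Gamma variables, that is, `α` has density proportional
to `(1 - c²) ^ (a - 1)` with `a` half the real dimension of `𝕜 ^ n` (`lintegral_reflQ_density`).
Applied to the form `α v* R v - |e₁* R v|²`, whose eigenvalues are `0`, `-1`, and `α`, `-α` with
multiplicity `n - 1`, it shows that the determinant has the sign of `α (X - Y) - G` with Gamma
variables `X`, `Y`, `G` that are independent of each other and of `α` (`lintegral_tForm`).

Over `ℂ` the variable `G` is exponential, so the integral over `G`, `X` and `Y` is elementary, and the
hyperbolic translation `b ↦ (c + b) / (1 + c b)` evaluates the remaining double integral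
(`lintegral_hyperbolic`, `lintegral_complex_total`).

Over `ℝ` a Crofton argument is used. Rotating `e₁` in the plane of `e₁` and `e₂` makes `α` sweep the
interval between the eigenvalues of the corner with speed proportional to `|β|`, so for every test
function `φ` one has `π E[φ(α) |β|] = ∫ φ(s) p(s) ds`, where `p(s)` is the probability that `s` lies
strictly between the eigenvalues (`crofton`). Given `α`, the remaining entries of the first row of `R`
are uniform on a sphere of radius `√(1 - α²)`, so the left-hand side is a constant times
`E[φ(α) √(1 - α²)]` (`lintegral_offdiag`), and the density of `α` determines `p` almost everywhere.
Since the determinant almost surely does not vanish, `p` is continuous at `0`, and `p(0)` is the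
probability in question (`real_prob`).

Both constants simplify through `gammaRatio x = Γ(x + 1/2) / Γ(x)`, and the limits follow from
`gammaRatio x ~ √x`, a consequence of the log-convexity of `Γ` (`tendsto_gammaRatio`).
-/

open MeasureTheory ProbabilityTheory Matrix
open scoped ComplexOrder

noncomputable section

attribute [local instance] Classical.propDecidable

variable {𝕜 : Type} [RCLike 𝕜]

/-- The measurable space structure on matrices (entrywise). -/
instance matrixMeasurableSpace {d : ℕ} : MeasurableSpace (Matrix (Fin d) (Fin d) 𝕜) :=
  inferInstanceAs (MeasurableSpace (Fin d → Fin d → 𝕜))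

/-- `β = 1/2` for `𝔽 = ℝ` and `β = 1` for `𝔽 = ℂ`. -/
def fieldBeta (𝕜 : Type) [RCLike 𝕜] : ℝ := (Module.finrank ℝ 𝕜 : ℝ) / 2

/-- `P` is an orthogonal projection of rank `k`. -/
def IsProjOfRank {d : ℕ} (k : ℕ) (P : Matrix (Fin d) (Fin d) 𝕜) : Prop :=
  P.IsHermitian ∧ P * P = P ∧ P.rank = k

/-- `ν` is the uniform (rotation invariant) probability distribution on the set of
rank-`k` orthogonal projections on `𝔽^d`. -/
def IsUniformProj {d : ℕ} (k : ℕ) (ν : Measure (Matrix (Fin d) (Fin d) 𝕜)) : Prop :=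
  IsProbabilityMeasure ν ∧ (∀ᵐ P ∂ν, IsProjOfRank k P) ∧
    ∀ U ∈ Matrix.unitaryGroup (Fin d) 𝕜,
      ν.map (fun P => U * P * star U) = ν

/-- The real number `tr (P X)`. -/
def traceInner {d : ℕ} (P X : Matrix (Fin d) (Fin d) 𝕜) : ℝ := RCLike.re (P * X).trace

/-- The proximally flipped projection `P̂(X)`. -/
def flipProj {d : ℕ} (P X : Matrix (Fin d) (Fin d) 𝕜) : Matrix (Fin d) (Fin d) 𝕜 :=
  if (1:ℝ)/2 ≤ traceInner P X then P else 1 - P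

/-- The empirical average `Q̂_𝒫(X)` of the proximally flipped projections. -/
def Qhat {d m : ℕ} (P : Fin m → Matrix (Fin d) (Fin d) 𝕜)
    (X : Matrix (Fin d) (Fin d) 𝕜) : Matrix (Fin d) (Fin d) 𝕜 :=
  ((m : 𝕜)⁻¹) • ∑ j, flipProj (P j) X

/-- Entrywise expectation of a random matrix. -/
def matExp {Ω : Type} [MeasurableSpace Ω] (μ : Measure Ω) {d : ℕ}
    (f : Ω → Matrix (Fin d) (Fin d) 𝕜) : Matrix (Fin d) (Fin d) 𝕜 :=
  Matrix.of fun i j => ∫ ω, f ω i j ∂μ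

/-- The Euler Beta function. -/
def eulerBeta (a b : ℝ) : ℝ := ∫ t in (0:ℝ)..1, t ^ (a - 1) * (1 - t) ^ (b - 1)

def mu1R (b : ℝ) (n : ℕ) : ℝ :=
  1/2 + 1 / (b * n * (4:ℝ) ^ (b * n) * eulerBeta (b * n) (b * n))

def mu2R (b : ℝ) (n : ℕ) : ℝ :=
  1/2 - 1 / (b * n * (2 * n - 1) * (4:ℝ) ^ (b * n) * eulerBeta (b * n) (b * n))

def mu1 (𝕜 : Type) [RCLike 𝕜] (n : ℕ) : ℝ := mu1R (fieldBeta 𝕜) n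

def mu2 (𝕜 : Type) [RCLike 𝕜] (n : ℕ) : ℝ := mu2R (fieldBeta 𝕜) n

/-- The operator norm (ℓ² → ℓ²) of a matrix. -/
def opNorm {d : ℕ} (A : Matrix (Fin d) (Fin d) 𝕜) : ℝ :=
  ‖Matrix.toEuclideanCLM (𝕜 := 𝕜) A‖

/-- `Xhat` is a solution of the principal eigenspace program for the matrix `M`:
a rank-one orthogonal projection maximizing `Y ↦ tr (M Y)` over all positive semidefinite
`Y` with `tr Y ≤ 1`. -/
def IsPEP {d : ℕ} (M Xhat : Matrix (Fin d) (Fin d) 𝕜) : Prop :=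
  IsProjOfRank 1 Xhat ∧
    ∀ Y : Matrix (Fin d) (Fin d) 𝕜, Y.PosSemidef → RCLike.re Y.trace ≤ 1 →
      RCLike.re (M * Y).trace ≤ RCLike.re (M * Xhat).trace

/-- The binary question `φ_P` with strict threshold. -/
def phiGT {d : ℕ} (P X : Matrix (Fin d) (Fin d) 𝕜) : Bool := (1:ℝ)/2 < traceInner P X

/-- The binary question `φ_P` with non-strict threshold. -/
def phiGE {d : ℕ} (P X : Matrix (Fin d) (Fin d) 𝕜) : Bool := (1:ℝ)/2 ≤ traceInner P X

/-- The normalized measurement Hamming distance `d_𝒫(X,Y)`. -/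
def hamDist {d m : ℕ} (P : Fin m → Matrix (Fin d) (Fin d) 𝕜)
    (X Y : Matrix (Fin d) (Fin d) 𝕜) : ℝ :=
  (m:ℝ)⁻¹ * ∑ j, if phiGT (P j) X ≠ phiGT (P j) Y then 1 else 0

/-- `P` `t`-separates `X` and `Y`. -/
def softSep {d : ℕ} (t : ℝ) (X Y P : Matrix (Fin d) (Fin d) 𝕜) : Prop :=
  (traceInner P X + t < 1/2 ∧ 1/2 ≤ traceInner P Y - t) ∨
  (traceInner P Y + t < 1/2 ∧ 1/2 ≤ traceInner P X - t)

/-- The `t`-soft Hamming distance `d^t_𝒫(X,Y)`. -/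
def softHam {d m : ℕ} (t : ℝ) (P : Fin m → Matrix (Fin d) (Fin d) 𝕜)
    (X Y : Matrix (Fin d) (Fin d) 𝕜) : ℝ :=
  (m:ℝ)⁻¹ * ∑ j, if softSep t X Y (P j) then 1 else 0

/-- The faulty empirical average built from the bit vector `b`. -/
def Qtilde {d m : ℕ} (P : Fin m → Matrix (Fin d) (Fin d) 𝕜) (b : Fin m → Bool) :
    Matrix (Fin d) (Fin d) 𝕜 :=
  ((m : 𝕜)⁻¹) • ∑ j, (if b j then P j else 1 - P j)

/-- Normalized Hamming distance between bit vectors. -/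
def bitHamDist {m : ℕ} (a b : Fin m → Bool) : ℝ :=
  (m:ℝ)⁻¹ * ∑ j, if a j ≠ b j then 1 else 0

/-- The larger eigenvalue of a `2 × 2` Hermitian matrix. -/
def lam1 {𝕜 : Type} [RCLike 𝕜] (M : Matrix (Fin 2) (Fin 2) 𝕜) : ℝ :=
  (RCLike.re M.trace + Real.sqrt ((RCLike.re M.trace)^2 - 4 * RCLike.re M.det)) / 2

/-- The smaller eigenvalue of a `2 × 2` Hermitian matrix. -/
def lam2 {𝕜 : Type} [RCLike 𝕜] (M : Matrix (Fin 2) (Fin 2) 𝕜) : ℝ :=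
  (RCLike.re M.trace - Real.sqrt ((RCLike.re M.trace)^2 - 4 * RCLike.re M.det)) / 2

/-- The top-left `2 × 2` submatrix. -/
def topLeft2 {𝕜 : Type} [RCLike 𝕜] {d : ℕ} (h : 2 ≤ d) (P : Matrix (Fin d) (Fin d) 𝕜) :
    Matrix (Fin 2) (Fin 2) 𝕜 :=
  Matrix.of fun i j => P (Fin.castLE h i) (Fin.castLE h j)

/-- The event that the eigenvalue pair of the top-left `2 × 2` submatrix lies in
`D_Sep = {(x,y) : 0 ≤ y < 1/2 < x ≤ 1}`. -/
def sepEvent {𝕜 : Type} [RCLike 𝕜] {d : ℕ} (h : 2 ≤ d) : Set (Matrix (Fin d) (Fin d) 𝕜) :=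
  {P | 0 ≤ lam2 (topLeft2 h P) ∧ lam2 (topLeft2 h P) < 1/2 ∧
       1/2 < lam1 (topLeft2 h P) ∧ lam1 (topLeft2 h P) ≤ 1}

/-- Closed form of the probability in the real case. -/
def sepProbR (n : ℕ) : ℝ :=
  eulerBeta (((n:ℝ) - 1)/2) (((n:ℝ) - 1)/2) / (2^n * eulerBeta ((n:ℝ) - 1) ((n:ℝ) - 1))

/-- Closed form of the probability in the complex case. -/
def sepProbC (n : ℕ) : ℝ :=
  1/2 + (8*(n:ℝ) - 4) /
    (((n:ℝ) - 1)^2 * (2:ℝ) ^ ((4:ℝ)*n - 3) * eulerBeta ((n:ℝ) - 1) ((n:ℝ) - 1) ^ 2)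

/-! ### The standard Gaussian measure on `𝕜 ^ ι` -/

/-- The squared Euclidean length `∑ ‖v i‖²` of a coordinate vector. -/
def sqLen {ι : Type} [Fintype ι] (v : ι → 𝕜) : ℝ := ∑ i, ‖v i‖ ^ 2

/-- Product Haar measure on `𝕜 ^ ι`. -/
def haarPi (𝕜 : Type) [RCLike 𝕜] (ι : Type) [Fintype ι] : Measure (ι → 𝕜) :=
  Measure.pi fun _ => (Measure.addHaar : Measure 𝕜)

instance haarPi_isAddHaarMeasure {ι : Type} [Fintype ι] : (haarPi 𝕜 ι).IsAddHaarMeasure := by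
  unfold haarPi; infer_instance

/-- The Gaussian weight `exp (-|v|²)` against product Haar measure, not normalized. -/
def gaussWeight (𝕜 : Type) [RCLike 𝕜] (ι : Type) [Fintype ι] : Measure (ι → 𝕜) :=
  (haarPi 𝕜 ι).withDensity fun v => ENNReal.ofReal (Real.exp (-sqLen v))

/-- The Gaussian probability measure on `𝕜 ^ ι`, with density proportional to `exp (-|v|²)`. -/
def gauss (𝕜 : Type) [RCLike 𝕜] (ι : Type) [Fintype ι] : Measure (ι → 𝕜) :=
  (gaussWeight 𝕜 ι Set.univ)⁻¹ • gaussWeight 𝕜 ι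

lemma continuous_sqLen {ι : Type} [Fintype ι] : Continuous (sqLen : (ι → 𝕜) → ℝ) := by
  unfold sqLen; fun_prop

lemma measurable_sqLen {ι : Type} [Fintype ι] : Measurable (sqLen : (ι → 𝕜) → ℝ) := by
  unfold sqLen; fun_prop

lemma sqLen_nonneg {ι : Type} [Fintype ι] (v : ι → 𝕜) : 0 ≤ sqLen v :=
  Finset.sum_nonneg fun _ _ => by positivity

lemma sqLen_eq_zero {ι : Type} [Fintype ι] {v : ι → 𝕜} : sqLen v = 0 ↔ v = 0 := by
  unfold sqLen
  rw [Finset.sum_eq_zero_iff_of_nonneg (fun _ _ => by positivity)]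
  simp [funext_iff]

lemma measurable_gaussDensity {ι : Type} [Fintype ι] :
    Measurable fun v : ι → 𝕜 => ENNReal.ofReal (Real.exp (-sqLen v)) :=
  (Real.measurable_exp.comp measurable_sqLen.neg).ennreal_ofReal

lemma lintegral_gaussWeight {ι : Type} [Fintype ι] {f : (ι → 𝕜) → ENNReal} (hf : Measurable f) :
    ∫⁻ v, f v ∂gaussWeight 𝕜 ι
      = ∫⁻ v, ENNReal.ofReal (Real.exp (-sqLen v)) * f v ∂haarPi 𝕜 ι := by
  rw [gaussWeight, lintegral_withDensity_eq_lintegral_mul _ measurable_gaussDensity hf]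
  rfl

/-- Polar coordinates for nonnegative integrands. -/
lemma lintegral_norm_addHaar {E : Type} [NormedAddCommGroup E] [NormedSpace ℝ E]
    [MeasurableSpace E] [Nontrivial E] (μ : Measure E) [FiniteDimensional ℝ E] [BorelSpace E]
    [μ.IsAddHaarMeasure] {f : ℝ → ENNReal} (hf : Measurable f) :
    ∫⁻ x, f ‖x‖ ∂μ = μ.toSphere Set.univ *
      ∫⁻ r in Set.Ioi (0 : ℝ), ENNReal.ofReal (r ^ (Module.finrank ℝ E - 1)) * f r := by
  calc
    ∫⁻ x, f ‖x‖ ∂μ = ∫⁻ x : ({(0)}ᶜ : Set E), f ‖x.1‖ ∂(μ.comap (↑)) := by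
      rw [lintegral_subtype_comap (measurableSet_singleton _).compl fun x ↦ f ‖x‖,
        restrict_compl_singleton (μ := μ) 0]
    _ = ∫⁻ x, f x.2 ∂μ.toSphere.prod (.volumeIoiPow (Module.finrank ℝ E - 1)) := by
      simpa using (μ.measurePreserving_homeomorphUnitSphereProd.lintegral_comp_emb
        (Homeomorph.measurableEmbedding _) (f ∘ Subtype.val ∘ Prod.snd))
    _ = μ.toSphere Set.univ *
        ∫⁻ x : Set.Ioi (0 : ℝ), f x ∂.volumeIoiPow (Module.finrank ℝ E - 1) := by
      rw [lintegral_prod _ (by fun_prop)]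
      simp [mul_comm]
    _ = _ := by
      rw [Measure.volumeIoiPow, lintegral_withDensity_eq_lintegral_mul _ (by fun_prop)
        (by fun_prop)]
      congr 1
      exact lintegral_subtype_comap measurableSet_Ioi
        (fun r : ℝ => ENNReal.ofReal (r ^ (Module.finrank ℝ E - 1)) * f r)

/-- The substitution `a = r²` on the half-line. -/
lemma lintegral_comp_sq {f : ℝ → ENNReal} :
    ∫⁻ a in Set.Ioi (0 : ℝ), f a = ∫⁻ r in Set.Ioi (0 : ℝ), ENNReal.ofReal (2 * r) * f (r ^ 2) := by
  have him : (fun r : ℝ => r ^ 2) '' Set.Ioi 0 = Set.Ioi 0 := by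
    ext a
    constructor
    · rintro ⟨r, hr, rfl⟩; exact pow_pos (Set.mem_Ioi.1 hr) 2
    · intro ha
      exact ⟨Real.sqrt a, Real.sqrt_pos.2 ha, Real.sq_sqrt (le_of_lt ha)⟩
  have hinj : Set.InjOn (fun r : ℝ => r ^ 2) (Set.Ioi 0) := fun x hx y hy h =>
    (pow_left_inj₀ (le_of_lt hx) (le_of_lt hy) two_ne_zero).1 h
  have h := lintegral_image_eq_lintegral_abs_deriv_mul (s := Set.Ioi (0 : ℝ))
    (f := fun r : ℝ => r ^ 2) (f' := fun r => 2 * r) measurableSet_Ioi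
    (fun x _ => by simpa using (hasDerivAt_pow 2 x).hasDerivWithinAt) hinj f
  rw [him] at h
  rw [h]
  refine setLIntegral_congr_fun measurableSet_Ioi fun r hr => ?_
  rw [abs_of_pos (by have : (0:ℝ) < r := hr; positivity)]

/-- The real dimension of `𝕜 ^ ι`. -/
def realDim (𝕜 : Type) [RCLike 𝕜] (ι : Type) [Fintype ι] : ℕ :=
  Module.finrank ℝ 𝕜 * Fintype.card ι

lemma realDim_pos {ι : Type} [Fintype ι] [Nonempty ι] : 0 < realDim 𝕜 ι :=
  Nat.mul_pos Module.finrank_pos Fintype.card_pos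

/-- Integrals of functions of `|v|²` over `𝕜 ^ ι` reduce to one-dimensional integrals. -/
lemma exists_lintegral_sqLen {ι : Type} [Fintype ι] [Nonempty ι] :
    ∃ C : ENNReal, C ≠ ⊤ ∧ ∀ f : ℝ → ENNReal, Measurable f →
      ∫⁻ v, f (sqLen v) ∂haarPi 𝕜 ι =
        C * ∫⁻ a in Set.Ioi (0 : ℝ),
          ENNReal.ofReal (a ^ ((realDim 𝕜 ι : ℝ) / 2 - 1)) * f a := by
  let L : (ι → 𝕜) ≃L[ℝ] EuclideanSpace 𝕜 ι := (PiLp.continuousLinearEquiv 2 ℝ fun _ : ι => 𝕜).symm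
  let μ : Measure (EuclideanSpace 𝕜 ι) := (haarPi 𝕜 ι).map L
  have : μ.IsAddHaarMeasure := L.isAddHaarMeasure_map _
  have : FiniteDimensional ℝ (EuclideanSpace 𝕜 ι) := L.toLinearEquiv.finiteDimensional
  have hdim : Module.finrank ℝ (EuclideanSpace 𝕜 ι) = realDim 𝕜 ι := by
    rw [← L.toLinearEquiv.finrank_eq, Module.finrank_pi_fintype]
    simp [realDim, mul_comm]
  have hnorm : ∀ v : ι → 𝕜, ‖L v‖ ^ 2 = sqLen v := fun v => by
    rw [EuclideanSpace.norm_sq_eq]; rfl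
  refine ⟨μ.toSphere Set.univ * ENNReal.ofReal (1 / 2),
    ENNReal.mul_ne_top (measure_ne_top _ _) ENNReal.ofReal_ne_top, fun f hf => ?_⟩
  have h1 := lintegral_norm_addHaar μ (f := fun r => f (r ^ 2)) (by fun_prop)
  rw [lintegral_map (by fun_prop) L.continuous.measurable] at h1
  simp_rw [hnorm] at h1
  rw [h1, hdim, lintegral_comp_sq (f := fun a =>
      ENNReal.ofReal (a ^ ((realDim 𝕜 ι : ℝ) / 2 - 1)) * f a), mul_assoc,
    ← lintegral_const_mul' _ _ ENNReal.ofReal_ne_top]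
  congr 1
  refine setLIntegral_congr_fun measurableSet_Ioi fun r hr => ?_
  have hr' : (0:ℝ) < r := hr
  rw [← mul_assoc, ← mul_assoc, ← ENNReal.ofReal_mul (by positivity),
    ← ENNReal.ofReal_mul (by positivity)]
  congr 2
  have h2 : (r ^ 2) ^ ((realDim 𝕜 ι : ℝ) / 2 - 1) = r ^ ((realDim 𝕜 ι : ℝ) - 2) := by
    rw [← Real.rpow_natCast r 2, ← Real.rpow_mul hr'.le]
    congr 1
    push_cast; ring
  rw [h2, ← Real.rpow_natCast r (realDim 𝕜 ι - 1), Nat.cast_sub realDim_pos]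
  have : ((realDim 𝕜 ι : ℝ) - (1:ℕ)) = 1 + ((realDim 𝕜 ι : ℝ) - 2) := by push_cast; ring
  rw [this, Real.rpow_add hr', Real.rpow_one]
  ring

lemma lintegral_gammaMeasure {a : ℝ} (ha : 0 < a) {f : ℝ → ENNReal} (hf : Measurable f) :
    ∫⁻ x, f x ∂gammaMeasure a 1 = ENNReal.ofReal (1 / Real.Gamma a) *
      ∫⁻ x in Set.Ioi (0 : ℝ), ENNReal.ofReal (x ^ (a - 1)) *
        (ENNReal.ofReal (Real.exp (-x)) * f x) := by
  rw [gammaMeasure, lintegral_withDensity_eq_lintegral_mul _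
      (show Measurable (gammaPDF a 1) from (measurable_gammaPDFReal a 1).ennreal_ofReal) hf,
    ← lintegral_const_mul' _ _ ENNReal.ofReal_ne_top]
  rw [← setLIntegral_univ, ← Set.Iic_union_Ioi (a := (0:ℝ)),
    lintegral_union measurableSet_Ioi (Set.Iic_disjoint_Ioi le_rfl)]
  have h0 : ∫⁻ x in Set.Iic (0:ℝ), (gammaPDF a 1 * f) x = 0 := by
    rw [setLIntegral_congr Iio_ae_eq_Iic.symm,
      setLIntegral_eq_zero measurableSet_Iio]
    intro x hx
    simp [gammaPDF_of_neg hx]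
  rw [h0, zero_add]
  refine setLIntegral_congr_fun measurableSet_Ioi fun x hx => ?_
  have hx' : (0:ℝ) < x := hx
  have hG := Real.Gamma_pos_of_pos ha
  simp only [Pi.mul_apply]
  rw [gammaPDF_of_nonneg hx'.le, ← mul_assoc, ← mul_assoc, ← ENNReal.ofReal_mul (by positivity),
    ← ENNReal.ofReal_mul (by positivity)]
  simp

lemma gaussWeight_univ_ne_zero {ι : Type} [Fintype ι] : gaussWeight 𝕜 ι Set.univ ≠ 0 := by
  rw [gaussWeight, withDensity_apply _ MeasurableSet.univ, Measure.restrict_univ, Ne,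
    lintegral_eq_zero_iff measurable_gaussDensity]
  intro h
  have : ∀ᵐ v ∂haarPi 𝕜 ι, False := by
    filter_upwards [h] with v hv
    simp only [Pi.zero_apply, ENNReal.ofReal_eq_zero] at hv
    exact absurd hv (not_le.2 (Real.exp_pos _))
  simp [ae_iff] at this
  exact NeZero.ne (haarPi 𝕜 ι) this

lemma exists_gaussWeight_gamma {ι : Type} [Fintype ι] [Nonempty ι] :
    ∃ C : ENNReal, C ≠ ⊤ ∧ ∀ f : ℝ → ENNReal, Measurable f →
      ∫⁻ v, f (sqLen v) ∂gaussWeight 𝕜 ι =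
        C * ∫⁻ a, f a ∂gammaMeasure ((realDim 𝕜 ι : ℝ) / 2) 1 := by
  obtain ⟨C, hC, h⟩ := exists_lintegral_sqLen (𝕜 := 𝕜) (ι := ι)
  have hD : (0:ℝ) < (realDim 𝕜 ι : ℝ) / 2 := by
    have : (0:ℝ) < realDim 𝕜 ι := by exact_mod_cast realDim_pos
    positivity
  have hG := Real.Gamma_pos_of_pos hD
  refine ⟨C * ENNReal.ofReal (Real.Gamma ((realDim 𝕜 ι : ℝ) / 2)),
    ENNReal.mul_ne_top hC ENNReal.ofReal_ne_top, fun f hf => ?_⟩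
  rw [lintegral_gaussWeight (f := fun v => f (sqLen v)) (hf.comp measurable_sqLen), lintegral_gammaMeasure hD hf,
    mul_assoc, ← mul_assoc (ENNReal.ofReal (Real.Gamma _)), ← ENNReal.ofReal_mul hG.le,
    mul_one_div_cancel hG.ne', ENNReal.ofReal_one, one_mul]
  exact h (fun a => ENNReal.ofReal (Real.exp (-a)) * f a) (by fun_prop)

lemma gaussWeight_univ_ne_top {ι : Type} [Fintype ι] : gaussWeight 𝕜 ι Set.univ ≠ ⊤ := by
  rcases isEmpty_or_nonempty ι with hι | hι
  · rw [gaussWeight, withDensity_apply _ MeasurableSet.univ, Measure.restrict_univ, haarPi,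
      Measure.pi_of_empty]
    simp
  · obtain ⟨C, hC, h⟩ := exists_gaussWeight_gamma (𝕜 := 𝕜) (ι := ι)
    have hD : (0:ℝ) < (realDim 𝕜 ι : ℝ) / 2 := by
      have : (0:ℝ) < realDim 𝕜 ι := by exact_mod_cast realDim_pos
      positivity
    have := isProbabilityMeasure_gammaMeasure hD one_pos
    have := h (fun _ => 1) measurable_const
    simp only [lintegral_const, one_mul, measure_univ, mul_one] at this
    rw [this]; exact hC

instance isProbabilityMeasure_gauss {ι : Type} [Fintype ι] :
    IsProbabilityMeasure (gauss 𝕜 ι) :=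
  ⟨by
    rw [gauss, Measure.smul_apply, smul_eq_mul,
      ENNReal.inv_mul_cancel gaussWeight_univ_ne_zero gaussWeight_univ_ne_top]⟩

/-- `|v|²` is Gamma distributed under the Gaussian measure, with half the real dimension as shape
parameter. -/
lemma lintegral_gauss_sqLen {ι : Type} [Fintype ι] [Nonempty ι] {f : ℝ → ENNReal}
    (hf : Measurable f) :
    ∫⁻ v, f (sqLen v) ∂gauss 𝕜 ι = ∫⁻ a, f a ∂gammaMeasure ((realDim 𝕜 ι : ℝ) / 2) 1 := by
  obtain ⟨C, hC, h⟩ := exists_gaussWeight_gamma (𝕜 := 𝕜) (ι := ι)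
  have hD : (0:ℝ) < (realDim 𝕜 ι : ℝ) / 2 := by
    have : (0:ℝ) < realDim 𝕜 ι := by exact_mod_cast realDim_pos
    positivity
  have := isProbabilityMeasure_gammaMeasure hD one_pos
  have h1 := h (fun _ => 1) measurable_const
  simp only [lintegral_const, one_mul, measure_univ, mul_one] at h1
  rw [gauss, lintegral_smul_measure, h f hf, ← h1, smul_eq_mul, ← mul_assoc,
    ENNReal.inv_mul_cancel gaussWeight_univ_ne_zero gaussWeight_univ_ne_top, one_mul]

/-- A real-linear automorphism of `𝕜 ^ ι` preserving `|v|²` preserves the Gaussian measure. -/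
lemma measurePreserving_gauss_of_sqLen {ι : Type} [Fintype ι] (L : (ι → 𝕜) ≃L[ℝ] (ι → 𝕜))
    (hL : ∀ v, sqLen (L v) = sqLen v) : MeasurePreserving L (gauss 𝕜 ι) (gauss 𝕜 ι) := by
  have hLm : Measurable L := L.continuous.measurable
  have hdet : LinearMap.det (L.toLinearEquiv : (ι → 𝕜) →ₗ[ℝ] (ι → 𝕜)) ≠ 0 :=
    (LinearEquiv.isUnit_det' L.toLinearEquiv).ne_zero
  have hmap := Measure.map_linearMap_addHaar_eq_smul_addHaar (haarPi 𝕜 ι) hdet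
  set c := ENNReal.ofReal
    |(LinearMap.det (L.toLinearEquiv : (ι → 𝕜) →ₗ[ℝ] (ι → 𝕜)))⁻¹| with hc
  have hmap' : (haarPi 𝕜 ι).map L = c • haarPi 𝕜 ι := hmap
  have hw : ∀ f : (ι → 𝕜) → ENNReal, Measurable f →
      ∫⁻ v, f (L v) ∂gaussWeight 𝕜 ι = c * ∫⁻ v, f v ∂gaussWeight 𝕜 ι := by
    intro f hf
    rw [lintegral_gaussWeight (f := fun v => f (L v)) (hf.comp hLm), lintegral_gaussWeight hf, ← smul_eq_mul,
      ← lintegral_smul_measure, ← hmap',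
      lintegral_map (f := fun v => ENNReal.ofReal (Real.exp (-sqLen v)) * f v)
        (measurable_gaussDensity.mul hf) hLm]
    simp_rw [hL]
  have hc1 : c = 1 := by
    have h1 := hw (fun _ => 1) measurable_const
    simp only [lintegral_const, one_mul] at h1
    have h2 : 1 * gaussWeight 𝕜 ι Set.univ = c * gaussWeight 𝕜 ι Set.univ := by rwa [one_mul]
    exact ((ENNReal.mul_left_inj gaussWeight_univ_ne_zero gaussWeight_univ_ne_top).1 h2).symm
  refine ⟨hLm, ?_⟩
  refine Measure.ext_of_lintegral _ fun f hf => ?_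
  rw [lintegral_map hf hLm, gauss, lintegral_smul_measure, lintegral_smul_measure, hw f hf, hc1,
    one_mul]

/-! ### Symmetries of the Gaussian measure -/

lemma sqLen_eq_dotProduct {ι : Type} [Fintype ι] (v : ι → 𝕜) : ((sqLen v : ℝ) : 𝕜) = star v ⬝ᵥ v := by
  simp only [sqLen, dotProduct, Pi.star_apply, RCLike.star_def, RCLike.conj_mul]
  push_cast
  rfl

lemma sqLen_mulVec_of_star_mul {ι κ : Type} [Fintype ι] [Fintype κ] [DecidableEq ι]
    {U : Matrix κ ι 𝕜} (hU : Uᴴ * U = 1) (v : ι → 𝕜) : sqLen (U *ᵥ v) = sqLen v := by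
  have h : ((sqLen (U *ᵥ v) : ℝ) : 𝕜) = (sqLen v : ℝ) := by
    rw [sqLen_eq_dotProduct, sqLen_eq_dotProduct, star_mulVec, ← dotProduct_mulVec,
      mulVec_mulVec, hU, one_mulVec]
  exact_mod_cast h

lemma measurePreserving_gauss_mulVec {ι : Type} [Fintype ι] [DecidableEq ι] {U : Matrix ι ι 𝕜}
    (hU : U ∈ unitaryGroup ι 𝕜) :
    MeasurePreserving (fun v => U *ᵥ v) (gauss 𝕜 ι) (gauss 𝕜 ι) := by
  let L : (ι → 𝕜) ≃L[ℝ] (ι → 𝕜) :=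
    ((UnitaryGroup.toLinearEquiv (⟨U, hU⟩ : unitaryGroup ι 𝕜)).restrictScalars ℝ).toContinuousLinearEquiv
  exact measurePreserving_gauss_of_sqLen L fun v =>
    sqLen_mulVec_of_star_mul (mem_unitaryGroup_iff'.1 hU) v

lemma sqLen_sum {ι κ : Type} [Fintype ι] [Fintype κ] (v : ι ⊕ κ → 𝕜) :
    sqLen v = sqLen (fun i => v (Sum.inl i)) + sqLen (fun i => v (Sum.inr i)) := by
  simp [sqLen, Fintype.sum_sum_type]

lemma sqLen_comp_equiv {ι κ : Type} [Fintype ι] [Fintype κ] (e : ι ≃ κ) (v : κ → 𝕜) :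
    sqLen (v ∘ e) = sqLen v := by
  simp only [sqLen, Function.comp]
  exact Equiv.sum_comp e (fun i => ‖v i‖ ^ 2)

lemma measurePreserving_gauss_sum {ι κ : Type} [Fintype ι] [Fintype κ] :
    MeasurePreserving (MeasurableEquiv.sumPiEquivProdPi fun _ : ι ⊕ κ => 𝕜) (gauss 𝕜 (ι ⊕ κ))
      ((gauss 𝕜 ι).prod (gauss 𝕜 κ)) := by
  have hmp := measurePreserving_sumPiEquivProdPi
    (fun _ : ι ⊕ κ => (Measure.addHaar : Measure 𝕜))
  have hw : (gaussWeight 𝕜 (ι ⊕ κ)).map (MeasurableEquiv.sumPiEquivProdPi fun _ : ι ⊕ κ => 𝕜)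
      = (gaussWeight 𝕜 ι).prod (gaussWeight 𝕜 κ) := by
    rw [gaussWeight, gaussWeight, gaussWeight, prod_withDensity measurable_gaussDensity measurable_gaussDensity]
    refine Measure.ext_of_lintegral _ fun f hf => ?_
    rw [lintegral_map hf (MeasurableEquiv.measurable _),
      lintegral_withDensity_eq_lintegral_mul _ measurable_gaussDensity
        (g := fun v => f (MeasurableEquiv.sumPiEquivProdPi (fun _ : ι ⊕ κ => 𝕜) v)) (hf.comp (MeasurableEquiv.measurable _)),
      lintegral_withDensity_eq_lintegral_mul _ (f := fun z : (ι → 𝕜) × (κ → 𝕜) =>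
          ENNReal.ofReal (Real.exp (-sqLen z.1)) * ENNReal.ofReal (Real.exp (-sqLen z.2)))
        ((measurable_gaussDensity.comp measurable_fst).mul
          (measurable_gaussDensity.comp measurable_snd)) hf]
    have h := hmp.lintegral_comp_emb (MeasurableEquiv.measurableEmbedding _)
      (fun z : (ι → 𝕜) × (κ → 𝕜) => ENNReal.ofReal (Real.exp (-sqLen z.1)) *
        ENNReal.ofReal (Real.exp (-sqLen z.2)) * f z)
    refine Eq.trans ?_ h
    refine lintegral_congr fun v => ?_
    simp only [Pi.mul_apply, Function.comp]
    rw [sqLen_sum, neg_add, Real.exp_add, ENNReal.ofReal_mul (Real.exp_pos _).le]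
    rfl
  refine ⟨MeasurableEquiv.measurable _, ?_⟩
  have hu : gaussWeight 𝕜 (ι ⊕ κ) Set.univ
      = gaussWeight 𝕜 ι Set.univ * gaussWeight 𝕜 κ Set.univ := by
    have : IsFiniteMeasure (gaussWeight 𝕜 κ) := ⟨lt_top_iff_ne_top.2 gaussWeight_univ_ne_top⟩
    rw [← Measure.prod_prod, ← hw, Set.univ_prod_univ,
      Measure.map_apply (MeasurableEquiv.measurable _) MeasurableSet.univ, Set.preimage_univ]
  have : IsFiniteMeasure (gaussWeight 𝕜 κ) := ⟨lt_top_iff_ne_top.2 gaussWeight_univ_ne_top⟩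
  have : IsFiniteMeasure (gaussWeight 𝕜 ι) := ⟨lt_top_iff_ne_top.2 gaussWeight_univ_ne_top⟩
  rw [gauss, Measure.map_smul, hw, hu, gauss, gauss, Measure.prod_smul_left,
    Measure.prod_smul_right, smul_smul,
    ENNReal.mul_inv (Or.inl gaussWeight_univ_ne_zero) (Or.inl gaussWeight_univ_ne_top)]

lemma measurePreserving_gauss_reindex {ι κ : Type} [Fintype ι] [Fintype κ] (e : ι ≃ κ) :
    MeasurePreserving (fun v : κ → 𝕜 => v ∘ e) (gauss 𝕜 κ) (gauss 𝕜 ι) := by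
  have hm : Measurable (fun v : κ → 𝕜 => v ∘ e) := by
    rw [measurable_pi_iff]; exact fun i => measurable_pi_apply _
  have hmp : MeasurePreserving (fun v : κ → 𝕜 => v ∘ e) (haarPi 𝕜 κ) (haarPi 𝕜 ι) := by
    have h := measurePreserving_piCongrLeft (fun _ : ι => (Measure.addHaar : Measure 𝕜)) e.symm
    have he : (MeasurableEquiv.piCongrLeft (fun _ : ι => 𝕜) e.symm : (κ → 𝕜) → ι → 𝕜)
        = fun v => v ∘ e := by
      funext v i
      obtain ⟨k, rfl⟩ := e.symm.surjective i
      rw [MeasurableEquiv.coe_piCongrLeft, Equiv.piCongrLeft_apply_apply]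
      simp
    rw [he] at h
    exact h
  have hw : (gaussWeight 𝕜 κ).map (fun v : κ → 𝕜 => v ∘ e) = gaussWeight 𝕜 ι := by
    refine Measure.ext_of_lintegral _ fun f hf => ?_
    rw [lintegral_map hf hm, lintegral_gaussWeight (f := fun v => f (v ∘ e)) (hf.comp hm),
      lintegral_gaussWeight hf, ← hmp.lintegral_comp (f := fun v =>
        ENNReal.ofReal (Real.exp (-sqLen v)) * f v) (measurable_gaussDensity.mul hf)]
    simp_rw [sqLen_comp_equiv]
  refine ⟨hm, ?_⟩
  have hu : gaussWeight 𝕜 κ Set.univ = gaussWeight 𝕜 ι Set.univ := by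
    rw [← hw, Measure.map_apply hm MeasurableSet.univ, Set.preimage_univ]
  rw [gauss, Measure.map_smul, hw, hu, gauss]

/-- Two finite families with the same multiset of values differ by a bijection of the index sets. -/
lemma exists_equiv_of_map_univ_eq {ι κ α : Type} [Fintype ι] [Fintype κ] {e : ι → α} {e' : κ → α}
    (h : Finset.univ.val.map e = Finset.univ.val.map e') : ∃ σ : ι ≃ κ, ∀ i, e' (σ i) = e i := by
  have hcard : ∀ x, Nonempty ({i // e i = x} ≃ {k // e' k = x}) := fun x => by
    rw [← Fintype.card_eq, Fintype.card_subtype, Fintype.card_subtype]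
    have := congrArg (Multiset.count x) h
    rw [Multiset.count_map, Multiset.count_map] at this
    simpa [Finset.card_def, eq_comm] using this
  let σ : ι ≃ κ := (Equiv.sigmaFiberEquiv e).symm.trans
    ((Equiv.sigmaCongrRight fun x => (hcard x).some).trans (Equiv.sigmaFiberEquiv e'))
  exact ⟨σ, fun i => ((hcard (e i)).some ⟨i, rfl⟩).2⟩

/-- Under the Gaussian measure the joint law of `|v|²` and of the Hermitian form `v* H v` depends on
the eigenvalues of `H` only: the form may be taken diagonal. -/
lemma lintegral_gauss_hermitian {ι κ : Type} [Fintype ι] [DecidableEq ι] [Fintype κ]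
    {H : Matrix ι ι 𝕜} (hH : H.IsHermitian) {e : κ → ℝ}
    (he : H.charpoly.roots = Finset.univ.val.map fun k => ((e k : ℝ) : 𝕜))
    {f : ℝ → ℝ → ENNReal} (hf : Measurable (Function.uncurry f)) :
    ∫⁻ v, f (sqLen v) (RCLike.re (star v ⬝ᵥ (H *ᵥ v))) ∂gauss 𝕜 ι
      = ∫⁻ y, f (sqLen y) (∑ k, e k * ‖y k‖ ^ 2) ∂gauss 𝕜 κ := by
  have h1 : Finset.univ.val.map hH.eigenvalues = Finset.univ.val.map e := by
    have h2 := hH.roots_charpoly_eq_eigenvalues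
    rw [he] at h2
    have := congrArg (Multiset.map (RCLike.re : 𝕜 → ℝ)) h2
    simpa [Multiset.map_map, Function.comp_def] using this.symm
  obtain ⟨σ, hσ⟩ := exists_equiv_of_map_univ_eq h1
  set U : Matrix ι ι 𝕜 := (hH.eigenvectorUnitary : Matrix ι ι 𝕜) with hU
  have hUm : U ∈ unitaryGroup ι 𝕜 := hH.eigenvectorUnitary.2
  have hform : ∀ v : ι → 𝕜, RCLike.re (star (U *ᵥ v) ⬝ᵥ (H *ᵥ (U *ᵥ v)))
      = ∑ i, hH.eigenvalues i * ‖v i‖ ^ 2 := by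
    intro v
    have hs : Uᴴ * H * U = diagonal (RCLike.ofReal ∘ hH.eigenvalues) := by
      have := hH.conjStarAlgAut_star_eigenvectorUnitary
      simpa [hU, Unitary.conjStarAlgAut_apply, star_eq_conjTranspose] using this
    rw [star_mulVec, ← dotProduct_mulVec, mulVec_mulVec, mulVec_mulVec, hs]
    simp only [dotProduct, mulVec_diagonal, map_sum, Pi.star_apply, RCLike.star_def,
      Function.comp]
    refine Finset.sum_congr rfl fun i _ => ?_
    rw [mul_left_comm, RCLike.conj_mul, ← RCLike.ofReal_pow, ← RCLike.ofReal_mul, RCLike.ofReal_re]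
  have hmeasH : Measurable fun v : ι → 𝕜 => RCLike.re (star v ⬝ᵥ (H *ᵥ v)) := by
    refine Continuous.measurable ?_
    fun_prop
  have hmeas1 : Measurable fun v : ι → 𝕜 => f (sqLen v) (RCLike.re (star v ⬝ᵥ (H *ᵥ v))) :=
    hf.comp (measurable_sqLen.prodMk hmeasH)
  rw [← (measurePreserving_gauss_mulVec hUm).lintegral_comp hmeas1]
  simp_rw [hform, sqLen_mulVec_of_star_mul (mem_unitaryGroup_iff'.1 hUm)]
  have hmeas3 : Measurable fun v : ι → 𝕜 => ∑ i, hH.eigenvalues i * ‖v i‖ ^ 2 := by fun_prop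
  have hmeas2 : Measurable fun v : ι → 𝕜 => f (sqLen v) (∑ i, hH.eigenvalues i * ‖v i‖ ^ 2) :=
    hf.comp (measurable_sqLen.prodMk hmeas3)
  rw [← (measurePreserving_gauss_reindex σ).lintegral_comp hmeas2]
  simp_rw [sqLen_comp_equiv]
  refine lintegral_congr fun y => ?_
  congr 1
  rw [← Equiv.sum_comp σ]
  simp [hσ]

/-! ### The reflection `2P - 1` and its quadratic forms -/

/-- The reflection `R = 2P - 1` attached to a projection `P`. -/
def reflMat {d : ℕ} (P : Matrix (Fin d) (Fin d) 𝕜) : Matrix (Fin d) (Fin d) 𝕜 := (2 : 𝕜) • P - 1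

/-- The sesquilinear form `u* (2P - 1) v`. -/
def reflS {d : ℕ} (P : Matrix (Fin d) (Fin d) 𝕜) (u v : Fin d → 𝕜) : 𝕜 :=
  star u ⬝ᵥ (reflMat P *ᵥ v)

/-- The real quadratic form `u* (2P - 1) u`. -/
def reflQ {d : ℕ} (P : Matrix (Fin d) (Fin d) 𝕜) (u : Fin d → 𝕜) : ℝ := RCLike.re (reflS P u u)

lemma reflMat_conj {d : ℕ} (P U : Matrix (Fin d) (Fin d) 𝕜) (hU : U ∈ unitaryGroup (Fin d) 𝕜) :
    reflMat (star U * P * star (star U)) = star U * reflMat P * U := by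
  have h : star U * U = 1 := mem_unitaryGroup_iff'.1 hU
  simp [reflMat, mul_sub, sub_mul, h]

lemma reflS_conj {d : ℕ} (P U : Matrix (Fin d) (Fin d) 𝕜) (hU : U ∈ unitaryGroup (Fin d) 𝕜)
    (u v : Fin d → 𝕜) :
    reflS (star U * P * star (star U)) u v = reflS P (U *ᵥ u) (U *ᵥ v) := by
  rw [reflS, reflS, reflMat_conj P U hU, star_mulVec, ← dotProduct_mulVec, mulVec_mulVec,
    mulVec_mulVec, star_eq_conjTranspose, mul_assoc]

lemma reflMat_isHermitian {d : ℕ} {P : Matrix (Fin d) (Fin d) 𝕜} (hP : P.IsHermitian) :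
    (reflMat P).IsHermitian := by
  unfold reflMat
  refine IsHermitian.sub ?_ isHermitian_one
  rw [IsHermitian, conjTranspose_smul, hP]
  simp

lemma reflMat_mul_self {d : ℕ} {P : Matrix (Fin d) (Fin d) 𝕜} (hP : P * P = P) :
    reflMat P * reflMat P = 1 := by
  simp only [reflMat, sub_mul, mul_sub, smul_mul_assoc, mul_smul_comm, hP, one_mul, mul_one]
  module

lemma measurable_reflMat_apply {d : ℕ} (i j : Fin d) :
    Measurable fun P : Matrix (Fin d) (Fin d) 𝕜 => reflMat P i j := by
  have h : Measurable fun P : Matrix (Fin d) (Fin d) 𝕜 => P i j :=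
    (measurable_pi_apply j).comp (measurable_pi_apply i)
  simp only [reflMat, Matrix.sub_apply, Matrix.smul_apply, smul_eq_mul]
  exact (h.const_mul _).sub_const _

lemma measurable_reflS_prod {d : ℕ} :
    Measurable fun z : Matrix (Fin d) (Fin d) 𝕜 × (Fin d → 𝕜) × (Fin d → 𝕜) =>
      reflS z.1 z.2.1 z.2.2 := by
  simp only [reflS, dotProduct, mulVec, Pi.star_apply, RCLike.star_def]
  refine Finset.measurable_sum _ fun i _ => Measurable.mul ?_ ?_
  · exact (RCLike.continuous_conj.measurable.comp
      ((measurable_pi_apply i).comp (measurable_fst.comp measurable_snd)))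
  · refine Finset.measurable_sum _ fun j _ => Measurable.mul ?_ ?_
    · exact (measurable_reflMat_apply i j).comp measurable_fst
    · exact (measurable_pi_apply j).comp (measurable_snd.comp measurable_snd)

lemma measurable_reflS {d : ℕ} {α : Type} [MeasurableSpace α]
    {p : α → Matrix (Fin d) (Fin d) 𝕜} {u v : α → Fin d → 𝕜} (hp : Measurable p)
    (hu : Measurable u) (hv : Measurable v) : Measurable fun z => reflS (p z) (u z) (v z) :=
  measurable_reflS_prod.comp (hp.prodMk (hu.prodMk hv))

lemma measurable_reflQ {d : ℕ} {α : Type} [MeasurableSpace α]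
    {p : α → Matrix (Fin d) (Fin d) 𝕜} {u : α → Fin d → 𝕜} (hp : Measurable p)
    (hu : Measurable u) : Measurable fun z => reflQ (p z) (u z) :=
  RCLike.measurable_re.comp (measurable_reflS hp hu hu)

/-- Any orthonormal pair is the image of a given pair of standard basis vectors under a unitary. -/
lemma exists_unitary_of_orthonormal {d : ℕ} {i j : Fin d} (hij : i ≠ j) {u v : Fin d → 𝕜}
    (hu : sqLen u = 1) (hv : sqLen v = 1) (huv : star u ⬝ᵥ v = 0) :
    ∃ U ∈ unitaryGroup (Fin d) 𝕜, U *ᵥ Pi.single i 1 = u ∧ U *ᵥ Pi.single j 1 = v := by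
  let E := EuclideanSpace 𝕜 (Fin d)
  let w : Fin d → E := fun k => if k = i then WithLp.toLp 2 u else WithLp.toLp 2 v
  have hin : ∀ x y : Fin d → 𝕜, inner 𝕜 (WithLp.toLp 2 x : E) (WithLp.toLp 2 y) = star x ⬝ᵥ y := by
    intro x y
    rw [EuclideanSpace.inner_eq_star_dotProduct, dotProduct_comm]
  have hn : ∀ x : Fin d → 𝕜, sqLen x = 1 → ‖(WithLp.toLp 2 x : E)‖ = 1 := fun x hx => by
    rw [EuclideanSpace.norm_eq, ← Real.sqrt_one, ← hx]
    rfl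
  have huv' : star v ⬝ᵥ u = 0 := by
    have := congrArg star huv
    rwa [star_dotProduct, star_star, star_zero, dotProduct_comm, dotProduct_comm] at this
  have hw : Orthonormal 𝕜 (({i, j} : Set (Fin d)).domRestrict w) := by
    rw [orthonormal_iff_ite]
    rintro ⟨a, ha⟩ ⟨b, hb⟩
    simp only [Set.mem_insert_iff, Set.mem_singleton_iff] at ha hb
    rcases ha with rfl | rfl <;> rcases hb with rfl | rfl <;>
      simp [w, hin, huv, huv', hij, hij.symm, hn u hu, hn v hv]
  obtain ⟨b, hb⟩ := hw.exists_orthonormalBasis_extension_of_card_eq (ι := Fin d)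
    (by rw [finrank_euclideanSpace])
  have hbi : b i = WithLp.toLp 2 u := by rw [hb i (by simp)]; simp [w]
  have hbj : b j = WithLp.toLp 2 v := by rw [hb j (by simp)]; simp [w, hij.symm]
  refine ⟨Matrix.of fun k l => b l k, ?_, ?_, ?_⟩
  · rw [mem_unitaryGroup_iff']
    ext k l
    have h := orthonormal_iff_ite.1 b.orthonormal k l
    rw [EuclideanSpace.inner_eq_star_dotProduct] at h
    rw [one_apply, ← h, dotProduct_comm]
    rfl
  · ext k; simp [hbi]
  · ext k; simp [hbj]

lemma IsUniformProj.lintegral_conj {d k : ℕ} {ν : Measure (Matrix (Fin d) (Fin d) 𝕜)}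
    (hν : IsUniformProj k ν) {U : Matrix (Fin d) (Fin d) 𝕜} (hU : U ∈ unitaryGroup (Fin d) 𝕜)
    {f : Matrix (Fin d) (Fin d) 𝕜 → ENNReal} (hf : Measurable f) :
    ∫⁻ P, f (U * P * star U) ∂ν = ∫⁻ P, f P ∂ν := by
  have hm : Measurable fun P : Matrix (Fin d) (Fin d) 𝕜 => U * P * star U := by
    refine measurable_pi_iff.2 fun i => measurable_pi_iff.2 fun j => ?_
    simp only [mul_apply]
    refine Finset.measurable_sum _ fun a _ => Measurable.mul_const ?_ _
    refine Finset.measurable_sum _ fun b _ => Measurable.const_mul ?_ _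
    exact (measurable_pi_apply a).comp (measurable_pi_apply b)
  conv_rhs => rw [← hν.2.2 U hU, lintegral_map hf hm]

/-- Rotation invariance: the joint law of the entries of `2P - 1` on an orthonormal pair does not
depend on the pair. -/
lemma IsUniformProj.lintegral_orthonormal {d k : ℕ} {ν : Measure (Matrix (Fin d) (Fin d) 𝕜)}
    (hν : IsUniformProj k ν) {i j : Fin d} (hij : i ≠ j) {u v : Fin d → 𝕜}
    (hu : sqLen u = 1) (hv : sqLen v = 1) (huv : star u ⬝ᵥ v = 0)
    {f : ℝ → ℝ → ℝ → ENNReal} (hf : Measurable fun z : ℝ × ℝ × ℝ => f z.1 z.2.1 z.2.2) :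
    ∫⁻ P, f (reflQ P (Pi.single i 1)) ‖reflS P (Pi.single i 1) (Pi.single j 1)‖
        (reflQ P (Pi.single j 1)) ∂ν
      = ∫⁻ P, f (reflQ P u) ‖reflS P u v‖ (reflQ P v) ∂ν := by
  obtain ⟨U, hU, hUi, hUj⟩ := exists_unitary_of_orthonormal hij hu hv huv
  have hm : Measurable fun P : Matrix (Fin d) (Fin d) 𝕜 =>
      f (reflQ P (Pi.single i 1)) ‖reflS P (Pi.single i 1) (Pi.single j 1)‖
        (reflQ P (Pi.single j 1)) :=
    hf.comp ((measurable_reflQ measurable_id measurable_const).prodMk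
      ((measurable_reflS measurable_id measurable_const measurable_const).norm.prodMk
        (measurable_reflQ measurable_id measurable_const)))
  rw [← hν.lintegral_conj (Unitary.star_mem hU) hm]
  simp_rw [reflQ, reflS_conj _ _ hU, hUi, hUj]

lemma reflS_single {d : ℕ} (P : Matrix (Fin d) (Fin d) 𝕜) (i j : Fin d) :
    reflS P (Pi.single i 1) (Pi.single j 1) = reflMat P i j := by
  simp [reflS]

/-! ### Corners and spectra of `2P - 1` -/

/-- For a projection, the eigenvalues of the corner lie in `[0, 1]`, so the separation event says
exactly that the corner of `2P - 1` has negative determinant. -/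
lemma mem_sepEvent_iff {d k : ℕ} (h : 2 ≤ d) {P : Matrix (Fin d) (Fin d) 𝕜}
    (hP : IsProjOfRank k P) {i j : Fin d} (hi : i = Fin.castLE h 0) (hj : j = Fin.castLE h 1) :
    P ∈ sepEvent h ↔ reflQ P (Pi.single i 1) * reflQ P (Pi.single j 1)
      - ‖reflS P (Pi.single i 1) (Pi.single j 1)‖ ^ 2 < 0 := by
  obtain ⟨hH, hPP, -⟩ := hP
  have hij : i ≠ j := by
    rw [hi, hj]; intro h'; simp [Fin.ext_iff] at h'
  have hp : P.PosSemidef := by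
    have := posSemidef_conjTranspose_mul_self P
    rwa [hH, hPP] at this
  have hq : (1 - P).PosSemidef := by
    have := posSemidef_conjTranspose_mul_self (1 - P)
    rwa [conjTranspose_sub, conjTranspose_one, hH, mul_sub, mul_one, sub_mul, one_mul, hPP, sub_self,
      sub_zero] at this
  have hdet : ∀ M : Matrix (Fin d) (Fin d) 𝕜, M.PosSemidef →
      0 ≤ RCLike.re (M i i) ∧ 0 ≤ RCLike.re (M j j) ∧
        ‖M i j‖ ^ 2 ≤ RCLike.re (M i i) * RCLike.re (M j j) := by
    intro M hM
    have h1 := RCLike.le_iff_re_im.1 (hM.diag_nonneg (i := i))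
    have h2 := RCLike.le_iff_re_im.1 (hM.diag_nonneg (i := j))
    have h3 := RCLike.le_iff_re_im.1 ((hM.submatrix ![i, j]).det_nonneg)
    rw [det_fin_two] at h3
    have h4 : M j i = star (M i j) := (hM.1.apply j i).symm
    simp only [map_zero, submatrix_apply, cons_val_zero, cons_val_one] at h1 h2 h3
    rw [h4, RCLike.star_def, RCLike.mul_conj] at h3
    refine ⟨h1.1, h2.1, ?_⟩
    have h5 := h3.1
    rw [map_sub, RCLike.mul_re, ← h1.2, ← RCLike.ofReal_pow, RCLike.ofReal_re] at h5
    linarith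
  obtain ⟨p1, p2, p3⟩ := hdet P hp
  obtain ⟨q1, q2, q3⟩ := hdet _ hq
  have him1 : RCLike.im (P i i) = 0 := by
    have := congrArg RCLike.im (hH.apply i i)
    rw [RCLike.star_def, RCLike.conj_im] at this
    linarith
  simp only [Matrix.sub_apply, one_apply_eq, one_apply_ne hij, map_sub, RCLike.one_re, zero_sub,
    norm_neg] at q1 q2 q3
  have hQ : ∀ l, reflQ P (Pi.single l 1) = 2 * RCLike.re (P l l) - 1 := by
    intro l
    rw [reflQ, reflS_single]
    simp [reflMat, RCLike.mul_re]
  have hS : ‖reflS P (Pi.single i 1) (Pi.single j 1)‖ ^ 2 = 4 * ‖P i j‖ ^ 2 := by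
    rw [reflS_single]
    simp [reflMat, one_apply_ne hij, mul_pow]
    norm_num
  have htr : RCLike.re (topLeft2 h P).trace = RCLike.re (P i i) + RCLike.re (P j j) := by
    simp [topLeft2, trace_fin_two, hi, hj]
  have hde : RCLike.re (topLeft2 h P).det
      = RCLike.re (P i i) * RCLike.re (P j j) - ‖P i j‖ ^ 2 := by
    have h4 : P j i = star (P i j) := (hH.apply j i).symm
    have h5 : (topLeft2 h P).det = P i i * P j j - P i j * P j i := by
      simp [topLeft2, det_fin_two, hi, hj]
    rw [h5, h4, RCLike.star_def, RCLike.mul_conj, map_sub, RCLike.mul_re, him1,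
      ← RCLike.ofReal_pow, RCLike.ofReal_re]
    ring
  rw [hQ, hQ, hS]
  simp only [sepEvent, Set.mem_ofPred_eq, lam1, lam2, htr, hde]
  generalize RCLike.re (P i i) = a at *
  generalize RCLike.re (P j j) = b at *
  generalize ‖P i j‖ ^ 2 = s at *
  set D := (a + b) ^ 2 - 4 * (a * b - s) with hD
  have hs : 0 ≤ s ∨ s < 0 := le_or_gt 0 s
  constructor
  · rintro ⟨-, h2, h3, -⟩
    have h4 : 0 < Real.sqrt D := by linarith
    have h5 : Real.sqrt D ^ 2 = D := Real.sq_sqrt (Real.sqrt_pos.1 h4).le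
    nlinarith
  · intro hneg
    have hD0 : (a + b - 1) ^ 2 < D := by nlinarith
    have h5 : |a + b - 1| < Real.sqrt D := by
      rw [← Real.sqrt_sq_eq_abs]; exact Real.sqrt_lt_sqrt (sq_nonneg _) hD0
    obtain ⟨h6, h7⟩ := abs_lt.1 h5
    refine ⟨?_, by linarith, by linarith, ?_⟩
    · have : Real.sqrt D ≤ a + b := Real.sqrt_le_iff.2 ⟨by linarith, by nlinarith⟩
      linarith
    · have : Real.sqrt D ≤ 2 - (a + b) := Real.sqrt_le_iff.2 ⟨by linarith, by nlinarith⟩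
      linarith

/-- A rank-`n` projection on `𝕜 ^ 2n` has eigenvalues `0` and `1`, each of multiplicity `n`. -/
lemma det_smul_sub_proj {n : ℕ} {P : Matrix (Fin (2 * n)) (Fin (2 * n)) 𝕜} (hP : IsProjOfRank n P)
    (a b : 𝕜) : (a • (1 : Matrix (Fin (2 * n)) (Fin (2 * n)) 𝕜) - b • P).det
      = a ^ n * (a - b) ^ n := by
  obtain ⟨hH, hPP, hr⟩ := hP
  set U : Matrix (Fin (2 * n)) (Fin (2 * n)) 𝕜 := 
    (hH.eigenvectorUnitary : Matrix (Fin (2 * n)) (Fin (2 * n)) 𝕜) with hU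
  have hUU : Uᴴ * U = 1 := mem_unitaryGroup_iff'.1 hH.eigenvectorUnitary.2
  have hs : Uᴴ * P * U = diagonal (RCLike.ofReal ∘ hH.eigenvalues) := by
    have := hH.conjStarAlgAut_star_eigenvectorUnitary
    simpa [hU, Unitary.conjStarAlgAut_apply, star_eq_conjTranspose] using this
  have hev : ∀ i, hH.eigenvalues i = 0 ∨ hH.eigenvalues i = 1 := by
    intro i
    have h1 : diagonal (RCLike.ofReal ∘ hH.eigenvalues) * diagonal (RCLike.ofReal ∘ hH.eigenvalues)
        = (diagonal (RCLike.ofReal ∘ hH.eigenvalues) : Matrix _ _ 𝕜) := by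
      rw [← hs]
      have hUU' : U * Uᴴ = 1 := mem_unitaryGroup_iff.1 hH.eigenvectorUnitary.2
      calc Uᴴ * P * U * (Uᴴ * P * U) = Uᴴ * P * (U * Uᴴ) * P * U := by simp only [mul_assoc]
        _ = Uᴴ * (P * P) * U := by rw [hUU', mul_one]; simp only [mul_assoc]
        _ = _ := by rw [hPP]
    have h2 := congrFun (congrFun h1 i) i
    simp only [diagonal_mul_diagonal, diagonal_apply_eq, Function.comp] at h2
    have h3 : hH.eigenvalues i * hH.eigenvalues i = hH.eigenvalues i := by exact_mod_cast h2
    rcases eq_or_ne (hH.eigenvalues i) 0 with h | h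
    · exact Or.inl h
    · exact Or.inr (mul_left_cancel₀ h (by rw [h3, mul_one]))
  have hdet : (a • (1 : Matrix (Fin (2 * n)) (Fin (2 * n)) 𝕜) - b • P).det
      = ∏ i, (a - b * (hH.eigenvalues i : 𝕜)) := by
    have h1 : Uᴴ * (a • (1 : Matrix (Fin (2 * n)) (Fin (2 * n)) 𝕜) - b • P) * U
        = diagonal fun i => a - b * (hH.eigenvalues i : 𝕜) := by
      rw [mul_sub, sub_mul, mul_smul_comm, smul_mul_assoc, mul_one, hUU, mul_smul_comm,
        smul_mul_assoc, hs]
      ext i j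
      by_cases hij : i = j <;> simp [hij, one_apply]
    rw [← det_diagonal, ← h1, det_mul, det_mul, mul_right_comm, ← det_mul, hUU, det_one, one_mul]
  rw [hdet]
  have hcard : (Finset.univ.filter fun i => hH.eigenvalues i ≠ 0).card = n := by
    rw [← Fintype.card_subtype, ← hH.rank_eq_card_non_zero_eigs, hr]
  have hcard' : (Finset.univ.filter fun i => ¬ hH.eigenvalues i ≠ 0).card = n := by
    have := Finset.card_filter_add_card_filter_not (s := (Finset.univ : Finset (Fin (2 * n))))
      (fun i => hH.eigenvalues i ≠ 0)
    rw [hcard, Finset.card_univ, Fintype.card_fin] at this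
    omega
  rw [← Finset.prod_filter_mul_prod_filter_not Finset.univ (fun i => hH.eigenvalues i ≠ 0)]
  rw [Finset.prod_congr rfl (g := fun _ => a - b), Finset.prod_const, hcard,
    Finset.prod_congr rfl (g := fun _ => a), Finset.prod_const, hcard', mul_comm]
  · intro i hi
    have : hH.eigenvalues i = 0 := by simpa using hi
    simp [this]
  · intro i hi
    have : hH.eigenvalues i = 1 := (hev i).resolve_left (by simpa using hi)
    simp [this]

lemma roots_charpoly_of_det {ι κ : Type} [Fintype ι] [DecidableEq ι] [Fintype κ]
    {H : Matrix ι ι 𝕜} {e : κ → ℝ} {S : Set 𝕜} (hS : S.Infinite)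
    (h : ∀ x ∈ S, (x • (1 : Matrix ι ι 𝕜) - H).det = ∏ k, (x - (e k : 𝕜))) :
    H.charpoly.roots = Finset.univ.val.map fun k => ((e k : ℝ) : 𝕜) := by
  have h1 : H.charpoly = ∏ k, (Polynomial.X - Polynomial.C ((e k : ℝ) : 𝕜)) := by
    refine Polynomial.eq_of_infinite_eval_eq _ _ (hS.mono fun x hx => ?_)
    rw [Set.mem_ofPred_eq, Polynomial.eval_prod, eval_charpoly, scalar_apply,
      ← smul_one_eq_diagonal, h x hx]
    simp
  rw [h1, Polynomial.roots_prod _ _ (Finset.prod_ne_zero_iff.2 fun k _ =>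
    Polynomial.X_sub_C_ne_zero _)]
  simp [Polynomial.roots_X_sub_C]

lemma roots_charpoly_reflMat {n : ℕ} {P : Matrix (Fin (2 * n)) (Fin (2 * n)) 𝕜}
    (hP : IsProjOfRank n P) : (reflMat P).charpoly.roots =
      Finset.univ.val.map fun k : Fin n ⊕ Fin n =>
        ((Sum.elim (fun _ => (1 : ℝ)) (fun _ => (-1 : ℝ)) k : ℝ) : 𝕜) := by
  refine roots_charpoly_of_det Set.infinite_univ fun x _ => ?_
  have : x • (1 : Matrix (Fin (2 * n)) (Fin (2 * n)) 𝕜) - reflMat P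
      = (x + 1) • (1 : Matrix (Fin (2 * n)) (Fin (2 * n)) 𝕜) - (2 : 𝕜) • P := by
    rw [reflMat]; module
  rw [this, det_smul_sub_proj hP, Fintype.prod_sum_type]
  simp
  ring

/-- The matrix of the Hermitian form `v ↦ R_ii (v* R v) - |e_i* R v|²`, `R = 2P - 1`. -/
def tMat {d : ℕ} (P : Matrix (Fin d) (Fin d) 𝕜) (i : Fin d) : Matrix (Fin d) (Fin d) 𝕜 :=
  ((reflQ P (Pi.single i 1) : ℝ) : 𝕜) • reflMat P
    - vecMulVec (reflMat P *ᵥ Pi.single i 1) (star (reflMat P *ᵥ Pi.single i 1))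

lemma tMat_isHermitian {d : ℕ} {P : Matrix (Fin d) (Fin d) 𝕜} (hP : P.IsHermitian) (i : Fin d) :
    (tMat P i).IsHermitian := by
  unfold tMat
  refine IsHermitian.sub ?_ ?_
  · rw [IsHermitian, conjTranspose_smul, reflMat_isHermitian hP]
    simp
  · rw [IsHermitian, conjTranspose_vecMulVec, star_star]

lemma reflS_star {d : ℕ} {P : Matrix (Fin d) (Fin d) 𝕜} (hP : P.IsHermitian) (u v : Fin d → 𝕜) :
    star (reflS P u v) = reflS P v u := by
  have hR : (reflMat P)ᴴ = reflMat P := reflMat_isHermitian hP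
  rw [reflS, ← star_dotProduct, star_mulVec, hR, ← dotProduct_mulVec, reflS]

lemma reflQ_coe {d : ℕ} {P : Matrix (Fin d) (Fin d) 𝕜} (hP : P.IsHermitian) (v : Fin d → 𝕜) :
    ((reflQ P v : ℝ) : 𝕜) = reflS P v v :=
  RCLike.conj_eq_iff_re.1 (reflS_star hP v v)

/-- With `R = 2P - 1` and `c = R_ii`, the rank-one update `tMat P i` of `c R` has simple eigenvalues
`0` and `-1`, and the eigenvalues `c` and `-c` with multiplicity `m` each. -/
lemma roots_charpoly_tMat {m : ℕ} {P : Matrix (Fin (2 * (m + 1))) (Fin (2 * (m + 1))) 𝕜}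
    (hP : IsProjOfRank (m + 1) P) (i : Fin (2 * (m + 1))) : (tMat P i).charpoly.roots =
      Finset.univ.val.map fun k : (Unit ⊕ Unit) ⊕ (Fin m ⊕ Fin m) =>
        ((Sum.elim (Sum.elim (fun _ => (0 : ℝ)) (fun _ => -1))
          (Sum.elim (fun _ => reflQ P (Pi.single i 1))
            (fun _ => - reflQ P (Pi.single i 1))) k : ℝ) : 𝕜) := by
  set R := reflMat P with hR
  set e : Fin (2 * (m + 1)) → 𝕜 := Pi.single i 1 with he
  set c := reflQ P e with hc
  have hRH : Rᴴ = R := reflMat_isHermitian hP.1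
  have hRR : R * R = 1 := reflMat_mul_self hP.2.1
  have hcS : (c : 𝕜) = star e ⬝ᵥ (R *ᵥ e) := reflQ_coe hP.1 e
  have hee : star e ⬝ᵥ e = 1 := by simp [he]
  have hinf : {x : 𝕜 | x ^ 2 - (c : 𝕜) ^ 2 ≠ 0}.Infinite := by
    refine Set.Infinite.mono (s := (({(c : 𝕜), -(c : 𝕜)} : Set 𝕜))ᶜ) ?_
      (Set.Finite.infinite_compl (Set.toFinite _))
    intro x hx
    simp only [Set.mem_compl_iff, Set.mem_insert_iff, Set.mem_singleton_iff, not_or] at hx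
    rw [Set.mem_ofPred_eq, sq_sub_sq]
    refine mul_ne_zero (fun h => hx.2 (eq_neg_of_add_eq_zero_left h)) (sub_ne_zero.2 hx.1)
  refine roots_charpoly_of_det hinf fun x hx => ?_
  rw [Set.mem_ofPred_eq] at hx
  have hA : (x • (1 : Matrix (Fin (2 * (m + 1))) (Fin (2 * (m + 1))) 𝕜) - (c : 𝕜) • R).det
      = (x + c) ^ (m + 1) * (x - c) ^ (m + 1) := by
    have : x • (1 : Matrix (Fin (2 * (m + 1))) (Fin (2 * (m + 1))) 𝕜) - (c : 𝕜) • R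
        = (x + c) • (1 : Matrix (Fin (2 * (m + 1))) (Fin (2 * (m + 1))) 𝕜) - (2 * (c : 𝕜)) • P := by
      rw [hR, reflMat]; module
    rw [this, det_smul_sub_proj hP]
    ring
  set A := x • (1 : Matrix (Fin (2 * (m + 1))) (Fin (2 * (m + 1))) 𝕜) - (c : 𝕜) • R with hAdef
  set B := (x ^ 2 - (c : 𝕜) ^ 2)⁻¹ •
    (x • (1 : Matrix (Fin (2 * (m + 1))) (Fin (2 * (m + 1))) 𝕜) + (c : 𝕜) • R) with hB
  have hAB : A * B = 1 := by
    have h1 : A * (x • (1 : Matrix (Fin (2 * (m + 1))) (Fin (2 * (m + 1))) 𝕜) + (c : 𝕜) • R)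
        = (x * x) • 1 + (x * (c:𝕜)) • R - (((c:𝕜) * x) • R + ((c:𝕜) * c) • (R * R)) := by
      simp only [hAdef, Matrix.sub_mul, Matrix.mul_add, smul_mul_assoc, mul_smul_comm, one_mul,
        mul_one, smul_smul]
      module
    have h2 : (x * x) • (1 : Matrix (Fin (2 * (m + 1))) (Fin (2 * (m + 1))) 𝕜) + (x * (c:𝕜)) • R
        - (((c:𝕜) * x) • R + ((c:𝕜) * c) • (1 : Matrix _ _ 𝕜))
        = (x ^ 2 - (c:𝕜) ^ 2) • (1 : Matrix _ _ 𝕜) := by module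
    rw [hB, mul_smul_comm, h1, hRR, h2, smul_smul, inv_mul_cancel₀ hx, one_smul]
  have hT : x • (1 : Matrix (Fin (2 * (m + 1))) (Fin (2 * (m + 1))) 𝕜) - tMat P i
      = A * (1 + vecMulVec (B *ᵥ (R *ᵥ e)) (star (R *ᵥ e))) := by
    rw [Matrix.mul_add A, Matrix.mul_one A, mul_vecMulVec, mulVec_mulVec, hAB, one_mulVec, tMat, hAdef]
    abel
  have hdot : star (R *ᵥ e) ⬝ᵥ (B *ᵥ (R *ᵥ e)) = (x ^ 2 - (c : 𝕜) ^ 2)⁻¹ * (x + (c:𝕜) ^ 2) := by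
    have h1 : star (R *ᵥ e) ⬝ᵥ (R *ᵥ e) = 1 := by
      rw [star_mulVec, ← dotProduct_mulVec, hRH, mulVec_mulVec, hRR, one_mulVec, hee]
    have h2 : star (R *ᵥ e) ⬝ᵥ (R *ᵥ (R *ᵥ e)) = c := by
      rw [star_mulVec, ← dotProduct_mulVec, hRH, mulVec_mulVec, mulVec_mulVec, hRR, Matrix.one_mul, hcS]
    rw [hB, smul_mulVec, add_mulVec, smul_mulVec, smul_mulVec, one_mulVec, dotProduct_smul,
      dotProduct_add, dotProduct_smul, dotProduct_smul, h1, h2]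
    simp only [smul_eq_mul]
    ring
  rw [hT, det_mul, hA, vecMulVec_eq Unit, det_one_add_mul_comm]
  have hd : (1 + replicateRow Unit (star (R *ᵥ e)) * replicateCol Unit (B *ᵥ (R *ᵥ e))).det
      = 1 + star (R *ᵥ e) ⬝ᵥ (B *ᵥ (R *ᵥ e)) := by
    simp [det_unique, mul_apply, dotProduct]
  rw [hd]
  rw [hdot, Fintype.prod_sum_type, Fintype.prod_sum_type, Fintype.prod_sum_type]
  simp only [Sum.elim_inl, Sum.elim_inr, Finset.prod_const, Finset.card_univ, Fintype.card_unit,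
    Fintype.card_fin, pow_one]
  push_cast
  have : (x + (c:𝕜)) ^ (m + 1) * (x - c) ^ (m + 1) = (x ^ 2 - (c:𝕜) ^ 2) * ((x + c) ^ m * (x - c) ^ m) := by
    ring
  rw [this]
  field_simp
  ring

/-! ### Integrating out an independent Gaussian vector -/

/-- The law of `|v|²` for a Gaussian vector `v` in `𝕜 ^ ι`. -/
def sqLaw (𝕜 : Type) [RCLike 𝕜] (ι : Type) [Fintype ι] : Measure ℝ :=
  gammaMeasure ((realDim 𝕜 ι : ℝ) / 2) 1

lemma realDim_half_pos {ι : Type} [Fintype ι] [Nonempty ι] : (0:ℝ) < (realDim 𝕜 ι : ℝ) / 2 := by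
  have : (0:ℝ) < realDim 𝕜 ι := by exact_mod_cast realDim_pos
  positivity

instance isProbabilityMeasure_sqLaw {ι : Type} [Fintype ι] [Nonempty ι] :
    IsProbabilityMeasure (sqLaw 𝕜 ι) :=
  isProbabilityMeasure_gammaMeasure realDim_half_pos one_pos

lemma lintegral_gauss_sum {ι κ : Type} [Fintype ι] [Fintype κ] {f : (ι ⊕ κ → 𝕜) → ENNReal}
    (hf : Measurable f) :
    ∫⁻ v, f v ∂gauss 𝕜 (ι ⊕ κ) = ∫⁻ x, ∫⁻ y, f (Sum.elim x y) ∂gauss 𝕜 κ ∂gauss 𝕜 ι := by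
  let e := MeasurableEquiv.sumPiEquivProdPi fun _ : ι ⊕ κ => 𝕜
  have hm : Measurable fun z => f (e.symm z) := hf.comp e.symm.measurable
  have h1 := (measurePreserving_gauss_sum (𝕜 := 𝕜) (ι := ι) (κ := κ)).lintegral_comp hm
  rw [lintegral_prod _ hm.aemeasurable] at h1
  have h2 : ∀ v, f (e.symm (e v)) = f v := fun v => by rw [e.symm_apply_apply]
  have h3 : ∀ x y, e.symm (x, y) = Sum.elim x y := fun x y => by
    funext k; cases k <;> rfl
  calc _ = ∫⁻ v, f (e.symm (e v)) ∂gauss 𝕜 (ι ⊕ κ) := by simp_rw [h2]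
    _ = _ := h1
    _ = _ := by simp_rw [h3]

lemma lintegral_gauss_sqLen_sum {ι κ : Type} [Fintype ι] [Fintype κ] [Nonempty ι] [Nonempty κ]
    {f : ℝ → ℝ → ENNReal} (hf : Measurable (Function.uncurry f)) :
    ∫⁻ v, f (sqLen fun i => v (Sum.inl i)) (sqLen fun i => v (Sum.inr i)) ∂gauss 𝕜 (ι ⊕ κ)
      = ∫⁻ a, ∫⁻ b, f a b ∂sqLaw 𝕜 κ ∂sqLaw 𝕜 ι := by
  rw [lintegral_gauss_sum]
  · simp only [Sum.elim_inl, Sum.elim_inr]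
    have h1 : ∀ x : ι → 𝕜, ∫⁻ y, f (sqLen x) (sqLen y) ∂gauss 𝕜 κ
        = ∫⁻ b, f (sqLen x) b ∂sqLaw 𝕜 κ := fun x =>
      lintegral_gauss_sqLen (f := fun b => f (sqLen x) b) hf.of_uncurry_left
    have h2 : Measurable fun a => ∫⁻ b, f a b ∂sqLaw 𝕜 κ := hf.lintegral_prod_right'
    simp_rw [h1]
    exact lintegral_gauss_sqLen (f := fun a => ∫⁻ b, f a b ∂sqLaw 𝕜 κ) h2
  · have h1 : Measurable fun v : ι ⊕ κ → 𝕜 => fun i => v (Sum.inl i) :=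
      measurable_pi_iff.2 fun k => measurable_pi_apply _
    have h2 : Measurable fun v : ι ⊕ κ → 𝕜 => fun i => v (Sum.inr i) :=
      measurable_pi_iff.2 fun k => measurable_pi_apply _
    exact hf.comp ((measurable_sqLen.comp h1).prodMk (measurable_sqLen.comp h2))

lemma gauss_absolutelyContinuous {ι : Type} [Fintype ι] : gauss 𝕜 ι ≪ haarPi 𝕜 ι := by
  unfold gauss gaussWeight
  exact Measure.AbsolutelyContinuous.trans Measure.smul_absolutelyContinuous
    (withDensity_absolutelyContinuous _ _)

lemma gauss_ae_apply_ne_zero {ι : Type} [Fintype ι] (j : ι) : ∀ᵐ v ∂gauss 𝕜 ι, v j ≠ 0 := by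
  let S : Submodule ℝ (ι → 𝕜) := LinearMap.ker (LinearMap.proj j : (ι → 𝕜) →ₗ[ℝ] 𝕜)
  have hS : S ≠ ⊤ := by
    intro h
    have : (fun _ => 1 : ι → 𝕜) ∈ S := by rw [h]; trivial
    simp [S] at this
  have h0 := Measure.addHaar_submodule (haarPi 𝕜 ι) S hS
  have h1 : ∀ᵐ v ∂haarPi 𝕜 ι, v j ≠ 0 := by
    rw [ae_iff]
    convert h0 using 2
    ext v
    simp [S]
  exact gauss_absolutelyContinuous.ae_le h1

lemma sqLen_smul {ι : Type} [Fintype ι] (r : 𝕜) (v : ι → 𝕜) : sqLen (r • v) = ‖r‖ ^ 2 * sqLen v := by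
  simp [sqLen, mul_pow, Finset.mul_sum]

lemma exists_unitary_of_unit {d : ℕ} (i : Fin d) {u : Fin d → 𝕜} (hu : sqLen u = 1) :
    ∃ U ∈ unitaryGroup (Fin d) 𝕜, U *ᵥ Pi.single i 1 = u := by
  let E := EuclideanSpace 𝕜 (Fin d)
  let w : Fin d → E := fun _ => WithLp.toLp 2 u
  have hn : ‖(WithLp.toLp 2 u : E)‖ = 1 := by
    rw [EuclideanSpace.norm_eq, ← Real.sqrt_one, ← hu]
    rfl
  have hw : Orthonormal 𝕜 (({i} : Set (Fin d)).domRestrict w) := by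
    rw [orthonormal_iff_ite]
    rintro ⟨a, ha⟩ ⟨b, hb⟩
    obtain rfl : a = i := by simpa using ha
    obtain rfl : b = a := by simpa using hb
    simp [w, hn]
  obtain ⟨b, hb⟩ := hw.exists_orthonormalBasis_extension_of_card_eq (ι := Fin d)
    (by rw [finrank_euclideanSpace])
  have hbi : b i = WithLp.toLp 2 u := by rw [hb i (by simp)]
  refine ⟨Matrix.of fun k l => b l k, ?_, ?_⟩
  · rw [mem_unitaryGroup_iff']
    ext k l
    have h := orthonormal_iff_ite.1 b.orthonormal k l
    rw [EuclideanSpace.inner_eq_star_dotProduct] at h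
    rw [one_apply, ← h, dotProduct_comm]
    rfl
  · ext k; simp [hbi]

lemma IsUniformProj.lintegral_unit {d k : ℕ} {ν : Measure (Matrix (Fin d) (Fin d) 𝕜)}
    (hν : IsUniformProj k ν) (i : Fin d) {u : Fin d → 𝕜} (hu : sqLen u = 1)
    {f : ℝ → ENNReal} (hf : Measurable f) :
    ∫⁻ P, f (reflQ P (Pi.single i 1)) ∂ν = ∫⁻ P, f (reflQ P u) ∂ν := by
  obtain ⟨U, hU, hUi⟩ := exists_unitary_of_unit i hu
  have hm : Measurable fun P : Matrix (Fin d) (Fin d) 𝕜 => f (reflQ P (Pi.single i 1)) :=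
    hf.comp (measurable_reflQ measurable_id measurable_const)
  rw [← hν.lintegral_conj (Unitary.star_mem hU) hm]
  simp_rw [reflQ, reflS_conj _ _ hU, hUi]

lemma reflS_add_right {d : ℕ} (P : Matrix (Fin d) (Fin d) 𝕜) (u v w : Fin d → 𝕜) :
    reflS P u (v + w) = reflS P u v + reflS P u w := by
  simp [reflS, mulVec_add]

lemma reflS_smul_right {d : ℕ} (P : Matrix (Fin d) (Fin d) 𝕜) (r : 𝕜) (u v : Fin d → 𝕜) :
    reflS P u (r • v) = r * reflS P u v := by
  simp [reflS, mulVec_smul]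

lemma reflS_add_left {d : ℕ} (P : Matrix (Fin d) (Fin d) 𝕜) (u v w : Fin d → 𝕜) :
    reflS P (u + v) w = reflS P u w + reflS P v w := by
  simp [reflS]

lemma reflS_smul_left {d : ℕ} (P : Matrix (Fin d) (Fin d) 𝕜) (r : 𝕜) (u v : Fin d → 𝕜) :
    reflS P (r • u) v = star r * reflS P u v := by
  simp [reflS]

lemma reflQ_smul {d : ℕ} (P : Matrix (Fin d) (Fin d) 𝕜) (r : 𝕜) (v : Fin d → 𝕜) :
    reflQ P (r • v) = ‖r‖ ^ 2 * reflQ P v := by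
  rw [reflQ, reflS_smul_left, reflS_smul_right, ← mul_assoc, RCLike.star_def, RCLike.conj_mul,
    ← RCLike.ofReal_pow, RCLike.re_ofReal_mul, reflQ]

/-- The law of a diagonal entry of `2P - 1`, in terms of two independent Gamma variables. -/
lemma IsUniformProj.lintegral_reflQ {n : ℕ} [NeZero n]
    {ν : Measure (Matrix (Fin (2 * n)) (Fin (2 * n)) 𝕜)}
    (hν : IsUniformProj n ν) (i : Fin (2 * n)) {f : ℝ → ENNReal} (hf : Measurable f) :
    ∫⁻ P, f (reflQ P (Pi.single i 1)) ∂ν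
      = ∫⁻ a, ∫⁻ b, f ((a - b) / (a + b)) ∂sqLaw 𝕜 (Fin n) ∂sqLaw 𝕜 (Fin n) := by
  have := hν.1
  have h1 : ∀ᵐ v ∂gauss 𝕜 (Fin (2 * n)), ∫⁻ P, f (reflQ P (Pi.single i 1)) ∂ν
      = ∫⁻ P, f (reflQ P v / sqLen v) ∂ν := by
    filter_upwards [gauss_ae_apply_ne_zero i] with v hv
    have hpos : 0 < sqLen v := lt_of_le_of_ne (sqLen_nonneg v) fun h =>
      hv (by rw [sqLen_eq_zero.1 h.symm]; rfl)
    have hr : ‖(((Real.sqrt (sqLen v))⁻¹ : ℝ) : 𝕜)‖ ^ 2 = (sqLen v)⁻¹ := by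
      rw [RCLike.norm_ofReal, sq_abs, inv_pow, Real.sq_sqrt hpos.le]
    rw [hν.lintegral_unit i (u := (((Real.sqrt (sqLen v))⁻¹ : ℝ) : 𝕜) • v) _ hf]
    · simp_rw [reflQ_smul, hr, div_eq_inv_mul]
    · rw [sqLen_smul, hr, inv_mul_cancel₀ hpos.ne']
  have hmeas : Measurable fun z : (Fin (2 * n) → 𝕜) × Matrix (Fin (2 * n)) (Fin (2 * n)) 𝕜 =>
      f (reflQ z.2 z.1 / sqLen z.1) :=
    hf.comp ((measurable_reflQ measurable_snd measurable_fst).div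
      (measurable_sqLen.comp measurable_fst))
  calc ∫⁻ P, f (reflQ P (Pi.single i 1)) ∂ν
      = ∫⁻ _v, ∫⁻ P, f (reflQ P (Pi.single i 1)) ∂ν ∂gauss 𝕜 (Fin (2 * n)) := by simp
    _ = ∫⁻ v, ∫⁻ P, f (reflQ P v / sqLen v) ∂ν ∂gauss 𝕜 (Fin (2 * n)) := lintegral_congr_ae h1
    _ = ∫⁻ P, ∫⁻ v, f (reflQ P v / sqLen v) ∂gauss 𝕜 (Fin (2 * n)) ∂ν :=
        lintegral_lintegral_swap hmeas.aemeasurable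
    _ = ∫⁻ _P, (∫⁻ a, ∫⁻ b, f ((a - b) / (a + b)) ∂sqLaw 𝕜 (Fin n) ∂sqLaw 𝕜 (Fin n)) ∂ν := by
        refine lintegral_congr_ae ?_
        filter_upwards [hν.2.1] with P hP
        have h2 := lintegral_gauss_hermitian (reflMat_isHermitian hP.1) (roots_charpoly_reflMat hP)
          (f := fun s q => f (q / s)) (hf.comp (by fun_prop))
        refine h2.trans ?_
        rw [← lintegral_gauss_sqLen_sum (f := fun a b => f ((a - b) / (a + b)))
          (hf.comp (by fun_prop))]
        refine lintegral_congr fun y => ?_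
        rw [sqLen_sum, Fintype.sum_sum_type]
        simp [sqLen, sub_eq_add_neg]
    _ = _ := by simp

/-- The form `v ↦ R_ii (v* R v) - |e_i* R v|²` with `R = 2P - 1`. -/
def tForm {d : ℕ} (P : Matrix (Fin d) (Fin d) 𝕜) (i : Fin d) (v : Fin d → 𝕜) : ℝ :=
  reflQ P (Pi.single i 1) * reflQ P v - ‖reflS P (Pi.single i 1) v‖ ^ 2

lemma re_tMat {d : ℕ} {P : Matrix (Fin d) (Fin d) 𝕜} (hP : P.IsHermitian) (i : Fin d)
    (v : Fin d → 𝕜) : RCLike.re (star v ⬝ᵥ (tMat P i *ᵥ v)) = tForm P i v := by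
  have h1 : star (reflMat P *ᵥ Pi.single i 1) ⬝ᵥ v = reflS P (Pi.single i 1) v := by
    have hR : (reflMat P)ᴴ = reflMat P := reflMat_isHermitian hP
    rw [star_mulVec, hR, ← dotProduct_mulVec, reflS]
  have h2 : star v ⬝ᵥ (tMat P i *ᵥ v) = ((reflQ P (Pi.single i 1) : ℝ) : 𝕜) * reflS P v v
      - reflS P (Pi.single i 1) v * reflS P v (Pi.single i 1) := by
    rw [tMat, sub_mulVec, dotProduct_sub, smul_mulVec, dotProduct_smul, smul_eq_mul,
      vecMulVec_mulVec, h1]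
    simp only [dotProduct_smul, reflS, op_smul_eq_smul, smul_eq_mul]
  rw [h2, ← reflS_star hP (Pi.single i 1) v, RCLike.star_def, RCLike.mul_conj, map_sub,
    RCLike.re_ofReal_mul, ← RCLike.ofReal_pow, RCLike.ofReal_re, tForm, reflQ, reflQ]

/-- The form `tForm P i` does not see the `e_i` component of its argument. -/
lemma tForm_add_smul {d : ℕ} {P : Matrix (Fin d) (Fin d) 𝕜} (hP : P.IsHermitian) (i : Fin d)
    (a r : 𝕜) (u : Fin d → 𝕜) :
    tForm P i (a • Pi.single i 1 + r • u) = ‖r‖ ^ 2 * tForm P i u := by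
  set e : Fin d → 𝕜 := Pi.single i 1 with he
  have hc := reflQ_coe hP e
  have hu := reflQ_coe hP u
  have hue : reflS P u e = star (reflS P e u) := (reflS_star hP e u).symm
  have hS : reflS P e (a • e + r • u) = a * (reflQ P e : 𝕜) + r * reflS P e u := by
    rw [reflS_add_right, reflS_smul_right, reflS_smul_right, hc]
  have hQ : ((reflQ P (a • e + r • u) : ℝ) : 𝕜) = star a * a * (reflQ P e : 𝕜)
      + star a * r * reflS P e u + star r * a * star (reflS P e u)
        + star r * r * (reflQ P u : 𝕜) := by
    rw [reflQ_coe hP, hc, hu, ← hue]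
    simp only [reflS_add_right, reflS_add_left, reflS_smul_right, reflS_smul_left]
    ring
  have key : ((tForm P i (a • e + r • u) : ℝ) : 𝕜) = ((‖r‖ ^ 2 * tForm P i u : ℝ) : 𝕜) := by
    rw [tForm, tForm, ← he]
    simp only [RCLike.ofReal_sub, RCLike.ofReal_mul, RCLike.ofReal_pow]
    rw [hQ, hS]
    simp only [← RCLike.conj_mul, RCLike.star_def, map_add, map_mul, RCLike.conj_ofReal]
    ring
  exact_mod_cast key

lemma measurable_tForm {d : ℕ} {α : Type} [MeasurableSpace α]
    {p : α → Matrix (Fin d) (Fin d) 𝕜} {v : α → Fin d → 𝕜} (hp : Measurable p)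
    (hv : Measurable v) (i : Fin d) : Measurable fun z => tForm (p z) i (v z) := by
  unfold tForm
  exact ((measurable_reflQ hp measurable_const).mul (measurable_reflQ hp hv)).sub
    ((measurable_reflS hp measurable_const hv).norm.pow_const 2)

/-- The expectation of `φ` at the determinant of a `2 × 2` corner of `2P - 1`, for `φ` invariant under
positive scaling (such as the indicator of the negative half-line or of `{0}`), through three
independent Gamma variables and a diagonal entry of `2P - 1`: the basis vector `e_j` may be replaced
by a Gaussian vector `v`, and for fixed `P` the form `tForm P i v` is diagonalized. -/
lemma IsUniformProj.lintegral_tForm {m : ℕ} [NeZero m]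
    {ν : Measure (Matrix (Fin (2 * (m + 1))) (Fin (2 * (m + 1))) 𝕜)}
    (hν : IsUniformProj (m + 1) ν) {i j : Fin (2 * (m + 1))} (hij : i ≠ j) {φ : ℝ → ENNReal}
    (hφ : Measurable φ) (hcone : ∀ r x : ℝ, 0 < r → φ (r * x) = φ x) :
    ∫⁻ P, φ (tForm P i (Pi.single j 1)) ∂ν
      = ∫⁻ P, ∫⁻ g, ∫⁻ a, ∫⁻ b, φ (reflQ P (Pi.single i 1) * (a - b) - g)
        ∂sqLaw 𝕜 (Fin m) ∂sqLaw 𝕜 (Fin m) ∂sqLaw 𝕜 Unit ∂ν := by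
  have := hν.1
  have h1 : ∀ᵐ v ∂gauss 𝕜 (Fin (2 * (m + 1))), ∫⁻ P, φ (tForm P i (Pi.single j 1)) ∂ν
      = ∫⁻ P, φ (tForm P i v) ∂ν := by
    filter_upwards [gauss_ae_apply_ne_zero j] with v hv
    set w : Fin (2 * (m + 1)) → 𝕜 := v - v i • Pi.single i 1 with hw
    have hpos : 0 < sqLen w := lt_of_le_of_ne (sqLen_nonneg w) fun h => by
      have h2 := congrFun (sqLen_eq_zero.1 h.symm) j
      simp [hw, hij.symm] at h2
      exact hv h2
    set r : ℝ := Real.sqrt (sqLen w) with hr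
    have hrpos : 0 < r := Real.sqrt_pos.2 hpos
    have hv' : v = v i • Pi.single i 1 + ((r : ℝ) : 𝕜) • (((r⁻¹ : ℝ) : 𝕜) • w) := by
      rw [smul_smul, ← RCLike.ofReal_mul, mul_inv_cancel₀ hrpos.ne', RCLike.ofReal_one, one_smul, hw]
      abel
    have hu : sqLen (((r⁻¹ : ℝ) : 𝕜) • w) = 1 := by
      rw [sqLen_smul, RCLike.norm_ofReal, sq_abs, inv_pow, hr, Real.sq_sqrt hpos.le,
        inv_mul_cancel₀ hpos.ne']
    have hinv := hν.lintegral_orthonormal hij (u := Pi.single i 1) (v := ((r⁻¹ : ℝ) : 𝕜) • w)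
      (by simp [sqLen, Pi.single_apply, apply_ite]) hu (by simp [hw])
      (f := fun x y z => φ (x * z - y ^ 2)) (hφ.comp (by fun_prop))
    refine hinv.trans (lintegral_congr_ae ?_)
    filter_upwards [hν.2.1] with P hP
    rw [hv', tForm_add_smul hP.1, hcone _ _ (by rw [RCLike.norm_ofReal, sq_abs]; positivity), tForm]
  have hmeas : Measurable fun z : (Fin (2 * (m + 1)) → 𝕜) ×
      Matrix (Fin (2 * (m + 1))) (Fin (2 * (m + 1))) 𝕜 => φ (tForm z.2 i z.1) :=
    hφ.comp (measurable_tForm measurable_snd measurable_fst i)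
  calc ∫⁻ P, φ (tForm P i (Pi.single j 1)) ∂ν
      = ∫⁻ _v, ∫⁻ P, φ (tForm P i (Pi.single j 1)) ∂ν ∂gauss 𝕜 (Fin (2 * (m + 1))) := by simp
    _ = ∫⁻ v, ∫⁻ P, φ (tForm P i v) ∂ν ∂gauss 𝕜 (Fin (2 * (m + 1))) := lintegral_congr_ae h1
    _ = ∫⁻ P, ∫⁻ v, φ (tForm P i v) ∂gauss 𝕜 (Fin (2 * (m + 1))) ∂ν :=
        lintegral_lintegral_swap hmeas.aemeasurable
    _ = _ := by
        refine lintegral_congr_ae ?_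
        filter_upwards [hν.2.1] with P hP
        have h2 := lintegral_gauss_hermitian (tMat_isHermitian hP.1 i) (roots_charpoly_tMat hP i)
          (f := fun _ q => φ q) (hφ.comp (by fun_prop))
        simp_rw [re_tMat hP.1] at h2
        refine h2.trans ?_
        set c := reflQ P (Pi.single i 1) with hc
        have h3 : ∀ y : (Unit ⊕ Unit) ⊕ (Fin m ⊕ Fin m) → 𝕜,
            (∑ k, Sum.elim (Sum.elim (fun _ => (0 : ℝ)) (fun _ => -1))
              (Sum.elim (fun _ => c) (fun _ => - c)) k * ‖y k‖ ^ 2)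
            = c * (sqLen (fun k => y (Sum.inr (Sum.inl k))) - sqLen (fun k => y (Sum.inr (Sum.inr k))))
              - sqLen (fun k => y (Sum.inl (Sum.inr k))) := by
          intro y
          simp only [Fintype.sum_sum_type, Sum.elim_inl, Sum.elim_inr, sqLen, Finset.univ_unique,
            Finset.sum_singleton, ← Finset.mul_sum]
          ring
        simp_rw [h3]
        have hm1 : ∀ k : (Unit ⊕ Unit) ⊕ (Fin m ⊕ Fin m),
            Measurable fun y : (Unit ⊕ Unit) ⊕ (Fin m ⊕ Fin m) → 𝕜 => y k := fun k =>
          measurable_pi_apply k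
        rw [lintegral_gauss_sum]
        · simp only [Sum.elim_inl, Sum.elim_inr]
          have h4 : ∀ g : ℝ, ∫⁻ y : Fin m ⊕ Fin m → 𝕜, φ (c * (sqLen (fun k => y (Sum.inl k))
              - sqLen (fun k => y (Sum.inr k))) - g) ∂gauss 𝕜 (Fin m ⊕ Fin m)
              = ∫⁻ a, ∫⁻ b, φ (c * (a - b) - g) ∂sqLaw 𝕜 (Fin m) ∂sqLaw 𝕜 (Fin m) := fun g =>
            lintegral_gauss_sqLen_sum (f := fun a b => φ (c * (a - b) - g)) (hφ.comp (by fun_prop))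
          simp_rw [h4]
          have hm3 : Measurable fun z : (ℝ × ℝ) × ℝ => φ (c * (z.1.2 - z.2) - z.1.1) :=
            hφ.comp (by fun_prop)
          have hm4 : Measurable fun z : ℝ × ℝ => ∫⁻ b, φ (c * (z.2 - b) - z.1) ∂sqLaw 𝕜 (Fin m) :=
            hm3.lintegral_prod_right'
          have hm5 : Measurable fun g => ∫⁻ a, ∫⁻ b, φ (c * (a - b) - g) ∂sqLaw 𝕜 (Fin m)
              ∂sqLaw 𝕜 (Fin m) := hm4.lintegral_prod_right'
          have h5 := lintegral_gauss_sqLen_sum (𝕜 := 𝕜) (ι := Unit) (κ := Unit)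
            (f := fun _ g => ∫⁻ a, ∫⁻ b, φ (c * (a - b) - g) ∂sqLaw 𝕜 (Fin m) ∂sqLaw 𝕜 (Fin m))
            (hm5.comp measurable_snd)
          rw [h5]
          simp
        · refine hφ.comp (Measurable.sub (Measurable.const_mul (Measurable.sub ?_ ?_) _) ?_) <;>
          · refine measurable_sqLen.comp (measurable_pi_iff.2 fun k => hm1 _)

/-! ### Two independent Gamma variables: their sum and their normalized difference -/

/-- The normalizing constant of the density `(1 - c²) ^ (a - 1)` on `(-1, 1)`. -/
def symBetaConst (a : ℝ) : ℝ := Real.Gamma (2 * a) / (Real.Gamma a ^ 2 * 2 ^ (2 * a - 1))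

lemma symBetaConst_pos {a : ℝ} (ha : 0 < a) : 0 < symBetaConst a := by
  have h1 := Real.Gamma_pos_of_pos ha
  have h2 := Real.Gamma_pos_of_pos (by positivity : 0 < 2 * a)
  unfold symBetaConst; positivity

/-- For independent `X, Y` of law `Gamma a`, the variables `τ = X + Y` and `c = (X - Y) / (X + Y)`
are independent, `τ` is `Gamma (2a)` and `c` has density proportional to `(1 - c²) ^ (a - 1)`. -/
lemma lintegral_gamma_pair {a : ℝ} (ha : 0 < a) {f : ℝ → ℝ → ENNReal}
    (hf : Measurable (Function.uncurry f)) :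
    ∫⁻ x, ∫⁻ y, f x y ∂gammaMeasure a 1 ∂gammaMeasure a 1
      = ENNReal.ofReal (symBetaConst a) * ∫⁻ c in Set.Ioo (-1) 1, ENNReal.ofReal ((1 - c ^ 2) ^ (a - 1))
        * ∫⁻ t, f (t * (1 + c) / 2) (t * (1 - c) / 2) ∂gammaMeasure (2 * a) 1 := by
  have hG1 := Real.Gamma_pos_of_pos ha
  have hG2 := Real.Gamma_pos_of_pos (by positivity : 0 < 2 * a)
  -- the weighted integrand, extended by zero to the plane
  let w : ℝ → ENNReal := fun x => (Set.Ioi (0:ℝ)).indicator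
    (fun x => ENNReal.ofReal (x ^ (a - 1)) * ENNReal.ofReal (Real.exp (-x))) x
  have hw : Measurable w := Measurable.indicator (by fun_prop) measurableSet_Ioi
  let g : ℝ → ℝ → ENNReal := fun x y => w x * (w y * f x y)
  have hg : Measurable (Function.uncurry g) :=
    (hw.comp measurable_fst).mul ((hw.comp measurable_snd).mul hf)
  have hwint : ∀ F : ℝ → ENNReal, Measurable F → ∫⁻ x, F x ∂gammaMeasure a 1
      = ENNReal.ofReal (1 / Real.Gamma a) * ∫⁻ x, w x * F x := by
    intro F hF
    rw [lintegral_gammaMeasure ha hF, ← lintegral_indicator measurableSet_Ioi]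
    congr 1
    refine lintegral_congr fun x => ?_
    by_cases hx : x ∈ Set.Ioi (0:ℝ)
    · simp only [w, Set.indicator_of_mem hx, mul_assoc]
    · simp only [w, Set.indicator_of_notMem hx, zero_mul]
  have hL : ∫⁻ x, ∫⁻ y, f x y ∂gammaMeasure a 1 ∂gammaMeasure a 1
      = ENNReal.ofReal (1 / Real.Gamma a) * (ENNReal.ofReal (1 / Real.Gamma a)
        * ∫⁻ x, ∫⁻ y, g x y) := by
    have h1 : ∀ x, ∫⁻ y, f x y ∂gammaMeasure a 1
        = ENNReal.ofReal (1 / Real.Gamma a) * ∫⁻ y, w y * f x y := fun x =>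
      hwint _ hf.of_uncurry_left
    have hm : Measurable fun x => ∫⁻ y, w y * f x y :=
      Measurable.lintegral_prod_right' (f := fun z : ℝ × ℝ => w z.2 * f z.1 z.2)
        ((hw.comp measurable_snd).mul hf)
    simp_rw [h1]
    rw [lintegral_const_mul _ hm, hwint _ hm, mul_left_comm]
    congr 2
    refine lintegral_congr fun x => ?_
    exact (lintegral_const_mul (w x) (f := fun y => w y * f x y)
      (hw.mul hf.of_uncurry_left)).symm
  have hshear : ∫⁻ x, ∫⁻ y, g x y = ∫⁻ t, ∫⁻ x, g x (t - x) := by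
    have h1 : ∀ x, ∫⁻ y, g x y = ∫⁻ t, g x (t - x) := fun x =>
      (lintegral_sub_right_eq_self (fun y => g x y) x).symm
    simp_rw [h1]
    refine lintegral_lintegral_swap (Measurable.aemeasurable ?_)
    exact hg.comp (measurable_fst.prodMk (measurable_snd.sub measurable_fst))
  have hneg : ∀ t : ℝ, t ≤ 0 → ∫⁻ x, g x (t - x) = 0 := by
    intro t ht
    rw [← lintegral_zero (μ := (volume : Measure ℝ))]
    refine lintegral_congr fun x => ?_
    by_cases hx : 0 < x
    · have : w (t - x) = 0 := Set.indicator_of_notMem (by simp; linarith) _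
      simp [g, this]
    · have : w x = 0 := Set.indicator_of_notMem (by simpa using hx) _
      simp [g, this]
  have hpos : ∀ t : ℝ, 0 < t → ∫⁻ x, g x (t - x) = ∫⁻ c, ENNReal.ofReal (t / 2)
      * g (t * (1 + c) / 2) (t * (1 - c) / 2) := by
    intro t ht
    have hd : ∀ c ∈ (Set.univ : Set ℝ), HasDerivWithinAt (fun c : ℝ => t * (1 + c) / 2) (t / 2)
        Set.univ c := by
      intro c _
      have := (((hasDerivAt_id c).const_add 1).const_mul t).div_const 2
      simpa using this
    have hi : Set.InjOn (fun c : ℝ => t * (1 + c) / 2) Set.univ := by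
      intro x _ y _ hxy
      have : t * (x - y) = 0 := by simp only at hxy; linarith
      rcases mul_eq_zero.1 this with h | h <;> linarith
    have h1 := lintegral_image_eq_lintegral_abs_deriv_mul MeasurableSet.univ hd hi
      (fun x => g x (t - x))
    have him : (fun c : ℝ => t * (1 + c) / 2) '' Set.univ = Set.univ := by
      rw [Set.image_univ, Set.range_eq_univ]
      intro y
      exact ⟨2 * y / t - 1, by field_simp; ring⟩
    rw [him, Measure.restrict_univ, abs_of_pos (by positivity)] at h1
    rw [h1]
    refine lintegral_congr fun c => ?_
    congr 2
    ring
  have hval : ∀ t c : ℝ, 0 < t → ENNReal.ofReal (t / 2) * g (t * (1 + c) / 2) (t * (1 - c) / 2)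
      = (Set.Ioo (-1:ℝ) 1).indicator (fun c => ENNReal.ofReal (2 ^ (1 - 2 * a))
        * (ENNReal.ofReal ((1 - c ^ 2) ^ (a - 1)) * (ENNReal.ofReal (t ^ (2 * a - 1))
          * (ENNReal.ofReal (Real.exp (-t)) * f (t * (1 + c) / 2) (t * (1 - c) / 2))))) c := by
    intro t c ht
    by_cases hc : c ∈ Set.Ioo (-1:ℝ) 1
    · have h1 : 0 < 1 + c := by linarith [hc.1]
      have h2 : 0 < 1 - c := by linarith [hc.2]
      have hx : t * (1 + c) / 2 ∈ Set.Ioi (0:ℝ) := by simp only [Set.mem_Ioi]; positivity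
      have hy : t * (1 - c) / 2 ∈ Set.Ioi (0:ℝ) := by simp only [Set.mem_Ioi]; positivity
      rw [Set.indicator_of_mem hc]
      simp only [g, w, Set.indicator_of_mem hx, Set.indicator_of_mem hy, ← mul_assoc]
      congr 1
      have hsq : 0 ≤ 1 - c ^ 2 := by nlinarith
      rw [← ENNReal.ofReal_mul (by positivity), ← ENNReal.ofReal_mul (by positivity),
        ← ENNReal.ofReal_mul (by positivity), ← ENNReal.ofReal_mul (by positivity),
        ← ENNReal.ofReal_mul (by positivity), ← ENNReal.ofReal_mul (by positivity),
        ← ENNReal.ofReal_mul (by positivity)]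
      congr 1
      have e1 : Real.exp (-t) = Real.exp (-(t * (1 + c) / 2)) * Real.exp (-(t * (1 - c) / 2)) := by
        rw [← Real.exp_add]; congr 1; ring
      have e2 : t * (1 + c) / 2 = (t / 2) * (1 + c) := by ring
      have e3 : t * (1 - c) / 2 = (t / 2) * (1 - c) := by ring
      have e4 : (1 - c ^ 2) = (1 + c) * (1 - c) := by ring
      have e5 : (2:ℝ) ^ (1 - 2 * a) * t ^ (2 * a - 1) = (t / 2) * (t / 2) ^ (a - 1) * (t / 2) ^ (a - 1) := by
        have h3 : (t / 2) * (t / 2) ^ (a - 1) * (t / 2) ^ (a - 1) = (t / 2) ^ (2 * a - 1) := by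
          rw [mul_assoc, ← Real.rpow_add (by positivity)]
          nth_rewrite 1 [← Real.rpow_one (t / 2)]
          rw [← Real.rpow_add (by positivity)]
          congr 1; ring
        rw [h3, Real.div_rpow ht.le (by norm_num), show 1 - 2 * a = -(2 * a - 1) by ring,
          Real.rpow_neg (by norm_num)]
        field_simp
      rw [e1, e4, Real.mul_rpow h1.le h2.le]
      have e6 : (t * (1 + c) / 2) ^ (a - 1) = (t / 2) ^ (a - 1) * (1 + c) ^ (a - 1) := by
        rw [e2, Real.mul_rpow (by positivity) h1.le]
      have e7 : (t * (1 - c) / 2) ^ (a - 1) = (t / 2) ^ (a - 1) * (1 - c) ^ (a - 1) := by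
        rw [e3, Real.mul_rpow (by positivity) h2.le]
      rw [e6, e7]
      linear_combination (-((1 + c) ^ (a - 1) * (1 - c) ^ (a - 1) * Real.exp (-(t * (1 + c) / 2))
        * Real.exp (-(t * (1 - c) / 2)))) * e5
    · rw [Set.indicator_of_notMem hc]
      by_cases h1 : -1 < c
      · have h2 : 1 ≤ c := by by_contra h; exact hc ⟨h1, not_le.1 h⟩
        have : w (t * (1 - c) / 2) = 0 :=
          Set.indicator_of_notMem (by simp only [Set.mem_Ioi, not_lt]; nlinarith) _
        simp [g, this]
      · have : w (t * (1 + c) / 2) = 0 :=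
          Set.indicator_of_notMem (by simp only [Set.mem_Ioi, not_lt]; nlinarith) _
        simp [g, this]
  have hfm : ∀ c, Measurable fun t : ℝ => f (t * (1 + c) / 2) (t * (1 - c) / 2) := fun c =>
    hf.comp (by fun_prop : Measurable fun t : ℝ => (t * (1 + c) / 2, t * (1 - c) / 2))
  have hfm2 : Measurable fun z : ℝ × ℝ => f (z.1 * (1 + z.2) / 2) (z.1 * (1 - z.2) / 2) :=
    hf.comp (by fun_prop : Measurable fun z : ℝ × ℝ => (z.1 * (1 + z.2) / 2, z.1 * (1 - z.2) / 2))
  have hR : ∫⁻ t, ∫⁻ x, g x (t - x) = ENNReal.ofReal (2 ^ (1 - 2 * a)) *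
      ∫⁻ c in Set.Ioo (-1) 1, ENNReal.ofReal ((1 - c ^ 2) ^ (a - 1)) * ∫⁻ t in Set.Ioi (0:ℝ),
        ENNReal.ofReal (t ^ (2 * a - 1)) * (ENNReal.ofReal (Real.exp (-t))
          * f (t * (1 + c) / 2) (t * (1 - c) / 2)) := by
    have hm : Measurable fun z : ℝ × ℝ => ENNReal.ofReal (2 ^ (1 - 2 * a))
        * (ENNReal.ofReal ((1 - z.2 ^ 2) ^ (a - 1)) * (ENNReal.ofReal (z.1 ^ (2 * a - 1))
          * (ENNReal.ofReal (Real.exp (-z.1)) * f (z.1 * (1 + z.2) / 2) (z.1 * (1 - z.2) / 2)))) := by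
      fun_prop
    have hm1 : ∀ c, Measurable fun t : ℝ => ENNReal.ofReal (t ^ (2 * a - 1))
        * (ENNReal.ofReal (Real.exp (-t)) * f (t * (1 + c) / 2) (t * (1 - c) / 2)) := fun c => by
      have := hfm c
      fun_prop
    have hm2 : Measurable fun c : ℝ => ∫⁻ t in Set.Ioi (0:ℝ), ENNReal.ofReal (t ^ (2 * a - 1))
        * (ENNReal.ofReal (Real.exp (-t)) * f (t * (1 + c) / 2) (t * (1 - c) / 2)) :=
      Measurable.lintegral_prod_left' (f := fun z : ℝ × ℝ => ENNReal.ofReal (z.1 ^ (2 * a - 1))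
        * (ENNReal.ofReal (Real.exp (-z.1)) * f (z.1 * (1 + z.2) / 2) (z.1 * (1 - z.2) / 2)))
        (by fun_prop)
    calc ∫⁻ t, ∫⁻ x, g x (t - x) = ∫⁻ t in Set.Ioi (0:ℝ), ∫⁻ x, g x (t - x) := by
          rw [← lintegral_indicator measurableSet_Ioi]
          refine lintegral_congr fun t => ?_
          by_cases ht : t ∈ Set.Ioi (0:ℝ)
          · rw [Set.indicator_of_mem ht]
          · rw [Set.indicator_of_notMem ht, hneg t (not_lt.1 ht)]
      _ = ∫⁻ t in Set.Ioi (0:ℝ), ∫⁻ c in Set.Ioo (-1) 1, ENNReal.ofReal (2 ^ (1 - 2 * a))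
        * (ENNReal.ofReal ((1 - c ^ 2) ^ (a - 1)) * (ENNReal.ofReal (t ^ (2 * a - 1))
          * (ENNReal.ofReal (Real.exp (-t)) * f (t * (1 + c) / 2) (t * (1 - c) / 2)))) := by
          refine setLIntegral_congr_fun measurableSet_Ioi fun t ht => ?_
          rw [hpos t ht, ← lintegral_indicator measurableSet_Ioo]
          exact lintegral_congr fun c => hval t c ht
      _ = _ := by
          rw [lintegral_lintegral_swap hm.aemeasurable, ← lintegral_const_mul _ (by fun_prop)]
          refine lintegral_congr fun c => ?_
          rw [lintegral_const_mul _ ((hm1 c).const_mul _), lintegral_const_mul _ (hm1 c)]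
  have hconst : ENNReal.ofReal (1 / Real.Gamma a) * (ENNReal.ofReal (1 / Real.Gamma a)
      * ENNReal.ofReal (2 ^ (1 - 2 * a))) = ENNReal.ofReal (symBetaConst a)
        * ENNReal.ofReal (1 / Real.Gamma (2 * a)) := by
    rw [← ENNReal.ofReal_mul (by positivity), ← ENNReal.ofReal_mul (by positivity),
      ← ENNReal.ofReal_mul (symBetaConst_pos ha).le]
    congr 1
    rw [symBetaConst, show 1 - 2 * a = -(2 * a - 1) by ring, Real.rpow_neg (by norm_num)]
    field_simp
  rw [hL, hshear, hR, ← mul_assoc, ← mul_assoc, mul_assoc (ENNReal.ofReal (1 / Real.Gamma a)), hconst,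
    mul_assoc]
  congr 1
  rw [← lintegral_const_mul' _ _ ENNReal.ofReal_ne_top]
  refine lintegral_congr fun c => ?_
  rw [lintegral_gammaMeasure (by positivity) (hfm c), mul_left_comm]

/-- The distribution of `(X - Y) / (X + Y)` for independent `X, Y` of law `Gamma a`. -/
lemma lintegral_gamma_ratio {a : ℝ} (ha : 0 < a) {f : ℝ → ENNReal} (hf : Measurable f) :
    ∫⁻ x, ∫⁻ y, f ((x - y) / (x + y)) ∂gammaMeasure a 1 ∂gammaMeasure a 1
      = ENNReal.ofReal (symBetaConst a)
        * ∫⁻ c in Set.Ioo (-1) 1, ENNReal.ofReal ((1 - c ^ 2) ^ (a - 1)) * f c := by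
  rw [lintegral_gamma_pair ha (f := fun x y => f ((x - y) / (x + y))) (hf.comp (by fun_prop))]
  congr 1
  refine lintegral_congr fun c => ?_
  congr 1
  have : IsProbabilityMeasure (gammaMeasure (2 * a) 1) :=
    isProbabilityMeasure_gammaMeasure (by positivity) one_pos
  have h0 : ∀ᵐ t ∂gammaMeasure (2 * a) 1, f c
      = f ((t * (1 + c) / 2 - t * (1 - c) / 2) / (t * (1 + c) / 2 + t * (1 - c) / 2)) := by
    have h1 : gammaMeasure (2 * a) 1 ≪ volume := by
      unfold gammaMeasure; exact withDensity_absolutelyContinuous _ _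
    have h2 : ∀ᵐ t ∂(volume : Measure ℝ), t ≠ 0 := by simp [ae_iff]
    filter_upwards [h1.ae_le h2] with t ht
    congr 1
    field_simp
    ring
  rw [← lintegral_congr_ae h0]
  simp

lemma symBetaConst_mul_lintegral {a : ℝ} (ha : 0 < a) : ENNReal.ofReal (symBetaConst a)
    * ∫⁻ c in Set.Ioo (-1) 1, ENNReal.ofReal ((1 - c ^ 2) ^ (a - 1)) = 1 := by
  have : IsProbabilityMeasure (gammaMeasure a 1) :=
    isProbabilityMeasure_gammaMeasure ha one_pos
  have h := lintegral_gamma_ratio ha (f := fun _ => 1) measurable_const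
  simp only [lintegral_const, measure_univ, mul_one] at h
  exact h.symm

/-! ### The separation event and the law of a diagonal entry -/

lemma measurable_negIndicator : Measurable ((Set.Iio (0:ℝ)).indicator (fun _ => (1:ENNReal))) :=
  measurable_const.indicator measurableSet_Iio

lemma negIndicator_mul (r x : ℝ) (hr : 0 < r) :
    (Set.Iio (0:ℝ)).indicator (fun _ => (1:ENNReal)) (r * x)
      = (Set.Iio (0:ℝ)).indicator (fun _ => (1:ENNReal)) x := by
  have : r * x ∈ Set.Iio (0:ℝ) ↔ x ∈ Set.Iio (0:ℝ) := by
    simp [mul_neg_iff, hr, hr.not_gt]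
  by_cases h : x ∈ Set.Iio (0:ℝ)
  · rw [Set.indicator_of_mem h, Set.indicator_of_mem (this.2 h)]
  · rw [Set.indicator_of_notMem h, Set.indicator_of_notMem (fun h' => h (this.1 h'))]

/-- Up to a null set, the separation event says that the determinant of the `2 × 2` corner of
`2P - 1` is negative. -/
lemma IsUniformProj.measure_sepEvent {d k : ℕ} {ν : Measure (Matrix (Fin d) (Fin d) 𝕜)}
    (hν : IsUniformProj k ν) (h : 2 ≤ d) :
    ν (sepEvent h) = ∫⁻ P, (Set.Iio (0:ℝ)).indicator (fun _ => (1:ENNReal))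
      (tForm P (⟨0, by omega⟩ : Fin d) (Pi.single (⟨1, by omega⟩ : Fin d) 1)) ∂ν := by
  have hm : Measurable fun P : Matrix (Fin d) (Fin d) 𝕜 =>
      tForm P (⟨0, by omega⟩ : Fin d) (Pi.single (⟨1, by omega⟩ : Fin d) 1) :=
    measurable_tForm measurable_id measurable_const _
  have h1 : ν (sepEvent h) = ν ((fun P : Matrix (Fin d) (Fin d) 𝕜 =>
      tForm P (⟨0, by omega⟩ : Fin d) (Pi.single (⟨1, by omega⟩ : Fin d) 1)) ⁻¹' Set.Iio 0) := by
    refine measure_congr ?_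
    filter_upwards [hν.2.1] with P hP
    exact propext (mem_sepEvent_iff h hP rfl rfl)
  rw [h1, ← lintegral_indicator_one (hm measurableSet_Iio)]
  rfl

lemma IsUniformProj.lintegral_reflQ_density {n : ℕ} [NeZero n]
    {ν : Measure (Matrix (Fin (2 * n)) (Fin (2 * n)) 𝕜)}
    (hν : IsUniformProj n ν) (i : Fin (2 * n)) {f : ℝ → ENNReal} (hf : Measurable f) {a : ℝ}
    (ha : (realDim 𝕜 (Fin n) : ℝ) / 2 = a) :
    ∫⁻ P, f (reflQ P (Pi.single i 1)) ∂ν = ENNReal.ofReal (symBetaConst a)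
        * ∫⁻ c in Set.Ioo (-1) 1, ENNReal.ofReal ((1 - c ^ 2) ^ (a - 1)) * f c := by
  rw [hν.lintegral_reflQ i hf]
  subst ha
  exact lintegral_gamma_ratio realDim_half_pos hf

/-! ### The complex case -/

lemma lintegral_exp_indicator (y : ℝ) :
    ∫⁻ g, (Set.Iio (0:ℝ)).indicator (fun _ => (1:ENNReal)) (y - g) ∂gammaMeasure 1 1
      = ENNReal.ofReal (Real.exp (-max y 0)) := by
  rw [lintegral_gammaMeasure one_pos
    (f := fun g => (Set.Iio (0:ℝ)).indicator (fun _ => (1:ENNReal)) (y - g))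
    (measurable_negIndicator.comp (by fun_prop))]
  rw [Real.Gamma_one, div_one, ENNReal.ofReal_one, one_mul, ← lintegral_indicator measurableSet_Ioi]
  rw [← integral_exp_neg_Ioi, ofReal_integral_eq_lintegral_ofReal (integrableOn_exp_neg_Ioi _)
    (Filter.Eventually.of_forall fun x => (Real.exp_pos _).le), ← lintegral_indicator measurableSet_Ioi]
  refine lintegral_congr fun x => ?_
  by_cases h1 : 0 < x <;> by_cases h2 : y < x <;>
    simp [Set.indicator, h1, h2]

lemma lintegral_gamma_laplace {a s : ℝ} (ha : 0 < a) (hs : 0 ≤ s) :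
    ∫⁻ t, ENNReal.ofReal (Real.exp (-(t * s))) ∂gammaMeasure a 1
      = ENNReal.ofReal ((1 + s) ^ (-a)) := by
  have hG := Real.Gamma_pos_of_pos ha
  rw [lintegral_gammaMeasure ha (by fun_prop)]
  have h1 : ∀ t ∈ Set.Ioi (0:ℝ), ENNReal.ofReal (t ^ (a - 1)) * (ENNReal.ofReal (Real.exp (-t))
      * ENNReal.ofReal (Real.exp (-(t * s)))) = ENNReal.ofReal (t ^ (a - 1) * Real.exp (-((1 + s) * t))) := by
    intro t ht
    have ht' : 0 < t := ht
    rw [← ENNReal.ofReal_mul (by positivity), ← ENNReal.ofReal_mul (by positivity), ← Real.exp_add]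
    congr 3
    ring
  have hI := Real.integral_rpow_mul_exp_neg_mul_Ioi ha (by linarith : 0 < 1 + s)
  have hInt : IntegrableOn (fun t : ℝ => t ^ (a - 1) * Real.exp (-((1 + s) * t))) (Set.Ioi 0) := by
    by_contra h
    rw [integral_undef h] at hI
    have : 0 < (1 / (1 + s)) ^ a * Real.Gamma a := by positivity
    linarith
  rw [setLIntegral_congr_fun measurableSet_Ioi h1, ← ofReal_integral_eq_lintegral_ofReal hInt, hI,
    ← ENNReal.ofReal_mul (by positivity)]
  · congr 1
    rw [one_div (1 + s), Real.inv_rpow (by linarith), Real.rpow_neg (by linarith)]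
    field_simp
  · filter_upwards [ae_restrict_mem measurableSet_Ioi] with t ht
    have ht' : 0 < t := ht
    positivity

/-- The conditional probability of separation given the diagonal entry `c`. -/
lemma lintegral_complex_inner {a : ℝ} (ha : 0 < a) (c : ℝ) :
    ∫⁻ g, ∫⁻ x, ∫⁻ y, (Set.Iio (0:ℝ)).indicator (fun _ => (1:ENNReal)) (c * (x - y) - g)
      ∂gammaMeasure a 1 ∂gammaMeasure a 1 ∂gammaMeasure 1 1
      = ENNReal.ofReal (symBetaConst a) * ∫⁻ b in Set.Ioo (-1) 1,
        ENNReal.ofReal ((1 - b ^ 2) ^ (a - 1)) * ENNReal.ofReal ((1 + max (c * b) 0) ^ (-(2 * a))) := by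
  have : IsProbabilityMeasure (gammaMeasure a 1) := isProbabilityMeasure_gammaMeasure ha one_pos
  have : IsProbabilityMeasure (gammaMeasure 1 1) := isProbabilityMeasure_gammaMeasure one_pos one_pos
  have hm : Measurable fun z : (ℝ × ℝ) × ℝ => (Set.Iio (0:ℝ)).indicator (fun _ => (1:ENNReal))
      (c * (z.1.2 - z.2) - z.1.1) := measurable_negIndicator.comp (by fun_prop)
  have hm2 : ∀ x : ℝ, Measurable fun z : ℝ × ℝ => (Set.Iio (0:ℝ)).indicator (fun _ => (1:ENNReal))
      (c * (x - z.2) - z.1) := fun x => measurable_negIndicator.comp (by fun_prop)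
  rw [lintegral_lintegral_swap (hm.lintegral_prod_right').aemeasurable]
  have h1 : ∀ x, ∫⁻ g, ∫⁻ y, (Set.Iio (0:ℝ)).indicator (fun _ => (1:ENNReal)) (c * (x - y) - g)
      ∂gammaMeasure a 1 ∂gammaMeasure 1 1
      = ∫⁻ y, ENNReal.ofReal (Real.exp (-max (c * (x - y)) 0)) ∂gammaMeasure a 1 := by
    intro x
    rw [lintegral_lintegral_swap (hm2 x).aemeasurable]
    simp_rw [lintegral_exp_indicator]
  simp_rw [h1]
  rw [lintegral_gamma_pair ha (f := fun x y => ENNReal.ofReal (Real.exp (-max (c * (x - y)) 0)))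
    (by unfold Function.uncurry; fun_prop)]
  congr 1
  refine lintegral_congr fun b => ?_
  congr 1
  rw [← lintegral_gamma_laplace (by positivity) (le_max_right _ _)]
  refine lintegral_congr_ae ?_
  have h2 : ∀ᵐ t ∂gammaMeasure (2 * a) 1, 0 ≤ t := by
    have h3 : {t : ℝ | ¬ 0 ≤ t} = Set.Iio 0 := by ext t; simp
    rw [ae_iff, h3, ← lintegral_indicator_one measurableSet_Iio,
      lintegral_gammaMeasure (by positivity) (measurable_one.indicator measurableSet_Iio)]
    rw [setLIntegral_congr_fun measurableSet_Ioi (g := fun _ => 0)]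
    · simp
    · intro t ht
      have : 0 < t := ht
      simp [this.le]
  filter_upwards [h2] with t ht
  congr 2
  rw [mul_max_of_nonneg _ _ ht, mul_zero, show c * (t * (1 + b) / 2 - t * (1 - b) / 2) = t * (c * b) by ring]

lemma lintegral_Ioo_symm {r : ℝ} {h : ℝ → ENNReal} (hh : Measurable h) :
    ∫⁻ c in Set.Ioo (-r) r, h c = ∫⁻ c in Set.Ioo 0 r, (h c + h (-c)) := by
  have h1 : ∫⁻ c in Set.Ioo (-r) 0, h c = ∫⁻ c in Set.Ioo 0 r, h (-c) := by
    rw [← lintegral_indicator measurableSet_Ioo, ← lintegral_indicator measurableSet_Ioo,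
      ← lintegral_neg_eq_self]
    refine lintegral_congr fun c => ?_
    by_cases hc : c ∈ Set.Ioo 0 r
    · rw [Set.indicator_of_mem hc, Set.indicator_of_mem (by constructor <;> linarith [hc.1, hc.2])]
    · rw [Set.indicator_of_notMem hc, Set.indicator_of_notMem]
      exact fun h' => hc (by constructor <;> linarith [h'.1, h'.2])
  have h2 : ∫⁻ c in Set.Ioo (-r) r, h c = ∫⁻ c in Set.Ioo (-r) 0 ∪ Set.Ioo 0 r, h c := by
    refine setLIntegral_congr ?_
    have h3 : ∀ᵐ c ∂(volume : Measure ℝ), c ≠ 0 := by simp [ae_iff]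
    filter_upwards [h3] with c hc
    refine propext ⟨fun h' => ?_, fun h' => ?_⟩
    · rcases lt_or_gt_of_ne hc with h0 | h0
      · exact Or.inl ⟨h'.1, h0⟩
      · exact Or.inr ⟨h0, h'.2⟩
    · rcases h' with h' | h'
      · exact ⟨h'.1, by linarith [h'.1, h'.2]⟩
      · exact ⟨by linarith [h'.1, h'.2], h'.2⟩
  rw [h2, lintegral_union measurableSet_Ioo, h1, lintegral_add_left hh, add_comm]
  rw [Set.disjoint_left]
  exact fun x hx hx' => by linarith [hx.2, hx'.1]

lemma lintegral_Ioo_even {h : ℝ → ENNReal} (hh : Measurable h) (he : ∀ c, h (-c) = h c) :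
    ∫⁻ c in Set.Ioo (-1) 1, h c = 2 * ∫⁻ c in Set.Ioo (0:ℝ) 1, h c := by
  rw [lintegral_Ioo_symm hh, ← lintegral_const_mul _ hh]
  simp_rw [he, two_mul]

/-- The hyperbolic translation `b ↦ (c + b) / (1 + c b)`, which maps `(0, 1)` onto `(c, 1)`,
removes the dependence on `c` of the inner integrand. -/
lemma lintegral_hyperbolic {a c : ℝ} (hc : c ∈ Set.Ioo (0:ℝ) 1) :
    ∫⁻ b in Set.Ioo (0:ℝ) 1, ENNReal.ofReal ((1 - c ^ 2) ^ a) * (ENNReal.ofReal ((1 - b ^ 2) ^ (a - 1))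
      * ENNReal.ofReal ((1 + c * b) ^ (-(2 * a))))
      = ∫⁻ w in Set.Ioo c 1, ENNReal.ofReal ((1 - w ^ 2) ^ (a - 1)) := by
  obtain ⟨hc0, hc1⟩ := hc
  have hpos : ∀ b ∈ Set.Ioo (0:ℝ) 1, 0 < 1 + c * b := fun b hb => by
    have := mul_pos hc0 hb.1; linarith
  have hd : ∀ b ∈ Set.Ioo (0:ℝ) 1, HasDerivWithinAt (fun b => (c + b) / (1 + c * b))
      ((1 - c ^ 2) / (1 + c * b) ^ 2) (Set.Ioo 0 1) b := by
    intro b hb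
    have h1 := ((hasDerivAt_id b).const_add c).div (((hasDerivAt_id b).const_mul c).const_add 1)
      (hpos b hb).ne'
    refine (h1.congr_deriv ?_).hasDerivWithinAt
    simp only [id]
    congr 1
    ring
  have hi : Set.InjOn (fun b => (c + b) / (1 + c * b)) (Set.Ioo 0 1) := by
    intro x hx y hy hxy
    have h1 := hpos x hx
    have h2 := hpos y hy
    simp only at hxy
    rw [div_eq_div_iff h1.ne' h2.ne'] at hxy
    have : (1 - c ^ 2) * (x - y) = 0 := by linarith
    rcases mul_eq_zero.1 this with h | h
    · nlinarith
    · linarith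
  have him : (fun b => (c + b) / (1 + c * b)) '' Set.Ioo 0 1 = Set.Ioo c 1 := by
    ext w
    constructor
    · rintro ⟨b, hb, rfl⟩
      have h1 := hpos b hb
      refine ⟨?_, ?_⟩
      · simp only
        rw [lt_div_iff₀ h1]
        nlinarith [hb.1, hb.2, mul_pos hc0 hb.1]
      · simp only
        rw [div_lt_one h1]
        nlinarith [hb.1, hb.2]
    · rintro ⟨hw1, hw2⟩
      have h0 : 0 < 1 - c * w := by nlinarith
      have hb : (w - c) / (1 - c * w) ∈ Set.Ioo (0:ℝ) 1 := by
        refine ⟨div_pos (by linarith) h0, ?_⟩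
        rw [div_lt_one h0]
        nlinarith
      refine ⟨(w - c) / (1 - c * w), hb, ?_⟩
      have h1 := hpos _ hb
      simp only
      rw [div_eq_iff h1.ne']
      field_simp
      ring
  rw [← him, lintegral_image_eq_lintegral_abs_deriv_mul measurableSet_Ioo hd hi]
  refine setLIntegral_congr_fun measurableSet_Ioo fun b hb => ?_
  have h1 := hpos b hb
  have h2 : 0 < 1 - c ^ 2 := by nlinarith
  have h3 : 0 < 1 - b ^ 2 := by nlinarith [hb.1, hb.2]
  have h4 : 1 - ((c + b) / (1 + c * b)) ^ 2 = (1 - c ^ 2) * (1 - b ^ 2) / (1 + c * b) ^ 2 := by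
    field_simp
    ring
  rw [abs_of_pos (by positivity), ← ENNReal.ofReal_mul (by positivity),
    ← ENNReal.ofReal_mul (by positivity), ← ENNReal.ofReal_mul (by positivity), h4]
  congr 1
  have e1 : (1 - c ^ 2) ^ a = (1 - c ^ 2) * (1 - c ^ 2) ^ (a - 1) := by
    rw [Real.rpow_sub_one h2.ne']; field_simp
  have e2 : (1 + c * b) ^ (-(2 * a)) = ((1 + c * b) ^ 2)⁻¹ * (((1 + c * b) ^ 2) ^ (a - 1))⁻¹ := by
    have : (1 + c * b) ^ (2 * a) = ((1 + c * b) ^ 2) ^ a := by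
      rw [Real.rpow_mul h1.le]; norm_num
    rw [Real.rpow_neg h1.le, this, Real.rpow_sub_one (by positivity)]
    field_simp
  rw [Real.div_rpow (by positivity) (by positivity), Real.mul_rpow h2.le h3.le, e1, e2]
  field_simp

lemma lintegral_weight {a : ℝ} (ha : 0 < a) :
    ∫⁻ w in Set.Ioo (0:ℝ) 1, ENNReal.ofReal (w * (1 - w ^ 2) ^ (a - 1)) = ENNReal.ofReal (1 / (2 * a)) := by
  -- substitute `u = 1 - w ^ 2`
  have hd : ∀ w ∈ Set.Ioo (0:ℝ) 1, HasDerivWithinAt (fun w => 1 - w ^ 2) (-(2 * w)) (Set.Ioo 0 1) w := by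
    intro w _
    have := ((hasDerivAt_id w).pow 2).const_sub 1
    refine (this.congr_deriv ?_).hasDerivWithinAt
    simp
  have hi : Set.InjOn (fun w : ℝ => 1 - w ^ 2) (Set.Ioo 0 1) := by
    intro x hx y hy hxy
    simp only at hxy
    have : (x - y) * (x + y) = 0 := by linarith
    rcases mul_eq_zero.1 this with h | h
    · linarith
    · linarith [hx.1, hy.1]
  have him : (fun w : ℝ => 1 - w ^ 2) '' Set.Ioo 0 1 = Set.Ioo 0 1 := by
    ext u
    constructor
    · rintro ⟨w, hw, rfl⟩
      constructor <;> simp only <;> nlinarith [hw.1, hw.2]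
    · rintro ⟨h0, h1⟩
      refine ⟨Real.sqrt (1 - u), ⟨Real.sqrt_pos.2 (by linarith), ?_⟩, ?_⟩
      · rw [Real.sqrt_lt' one_pos]; linarith
      · simp only
        rw [Real.sq_sqrt (by linarith)]; ring
  have h1 := lintegral_image_eq_lintegral_abs_deriv_mul measurableSet_Ioo hd hi
    (fun u => ENNReal.ofReal (1 / 2 * u ^ (a - 1)))
  rw [him] at h1
  have h2 : ∫⁻ w in Set.Ioo (0:ℝ) 1, ENNReal.ofReal (w * (1 - w ^ 2) ^ (a - 1))
      = ∫⁻ u in Set.Ioo (0:ℝ) 1, ENNReal.ofReal (1 / 2 * u ^ (a - 1)) := by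
    rw [h1]
    refine setLIntegral_congr_fun measurableSet_Ioo fun w hw => ?_
    have hw0 := hw.1
    rw [abs_neg, abs_of_pos (by positivity), ← ENNReal.ofReal_mul (by positivity)]
    congr 1
    ring
  have hInt : IntervalIntegrable (fun u : ℝ => u ^ (a - 1)) volume 0 1 :=
    intervalIntegral.intervalIntegrable_rpow' (by linarith)
  rw [h2, setLIntegral_congr Ioo_ae_eq_Ioc]
  rw [← ofReal_integral_eq_lintegral_ofReal, integral_const_mul,
    ← intervalIntegral.integral_of_le zero_le_one, integral_rpow (Or.inl (by linarith))]
  · congr 1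
    rw [sub_add_cancel, Real.zero_rpow ha.ne', Real.one_rpow]
    field_simp
    ring
  · exact ((intervalIntegrable_iff_integrableOn_Ioc_of_le zero_le_one).1 hInt).const_mul _
  · filter_upwards [ae_restrict_mem measurableSet_Ioc] with u hu
    have := hu.1
    positivity

/-- After the hyperbolic translation only the ordering `c < w` is left, and the integral over `c`
produces the factor `w`. -/
lemma lintegral_double {a : ℝ} (ha : 0 < a) :
    ∫⁻ c in Set.Ioo (0:ℝ) 1, ENNReal.ofReal ((1 - c ^ 2) ^ a) * ∫⁻ b in Set.Ioo (0:ℝ) 1,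
      (ENNReal.ofReal ((1 - b ^ 2) ^ (a - 1)) * ENNReal.ofReal ((1 + c * b) ^ (-(2 * a))))
      = ENNReal.ofReal (1 / (2 * a)) := by
  have hm : Measurable fun z : ℝ × ℝ => (Set.Ioo z.1 1).indicator
      (fun w => ENNReal.ofReal ((1 - w ^ 2) ^ (a - 1))) z.2 := by
    have : (fun z : ℝ × ℝ => (Set.Ioo z.1 1).indicator
      (fun w => ENNReal.ofReal ((1 - w ^ 2) ^ (a - 1))) z.2)
      = {z : ℝ × ℝ | z.1 < z.2 ∧ z.2 < 1}.indicator
        (fun z => ENNReal.ofReal ((1 - z.2 ^ 2) ^ (a - 1))) := by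
      funext z
      simp [Set.indicator]
    rw [this]
    refine Measurable.indicator (by fun_prop) ?_
    exact (measurableSet_lt measurable_fst measurable_snd).inter
      (measurableSet_lt measurable_snd measurable_const)
  calc _ = ∫⁻ c in Set.Ioo (0:ℝ) 1, ∫⁻ w, (Set.Ioo c 1).indicator
        (fun w => ENNReal.ofReal ((1 - w ^ 2) ^ (a - 1))) w := by
        refine setLIntegral_congr_fun measurableSet_Ioo fun c hc => ?_
        rw [← lintegral_const_mul _ (by fun_prop), lintegral_hyperbolic hc,
          lintegral_indicator measurableSet_Ioo]
    _ = ∫⁻ w, ∫⁻ c in Set.Ioo (0:ℝ) 1, (Set.Ioo c 1).indicator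
        (fun w => ENNReal.ofReal ((1 - w ^ 2) ^ (a - 1))) w :=
        lintegral_lintegral_swap hm.aemeasurable
    _ = ∫⁻ w in Set.Ioo (0:ℝ) 1, ENNReal.ofReal (w * (1 - w ^ 2) ^ (a - 1)) := by
        rw [← lintegral_indicator measurableSet_Ioo]
        refine lintegral_congr fun w => ?_
        by_cases hw : w ∈ Set.Ioo (0:ℝ) 1
        · rw [Set.indicator_of_mem hw, ENNReal.ofReal_mul hw.1.le,
            ← lintegral_indicator measurableSet_Ioo]
          have : ∀ c, (Set.Ioo (0:ℝ) 1).indicator (fun c => (Set.Ioo c 1).indicator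
              (fun w => ENNReal.ofReal ((1 - w ^ 2) ^ (a - 1))) w) c
              = (Set.Ioo (0:ℝ) w).indicator (fun _ => ENNReal.ofReal ((1 - w ^ 2) ^ (a - 1))) c := by
            intro c
            by_cases h1 : 0 < c <;> by_cases h2 : c < w
            · simp [Set.indicator, h1, h2, hw.2, h2.trans hw.2]
            · simp [Set.indicator, h2]
            · simp [Set.indicator, h1]
            · simp [Set.indicator, h1]
          simp_rw [this]
          rw [lintegral_indicator measurableSet_Ioo, setLIntegral_const, Real.volume_Ioo, sub_zero,
            mul_comm]
        · rw [Set.indicator_of_notMem hw, ← nonpos_iff_eq_zero,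
            ← lintegral_zero (μ := volume.restrict (Set.Ioo (0:ℝ) 1))]
          refine le_of_eq (setLIntegral_congr_fun measurableSet_Ioo fun c hc => ?_)
          refine Set.indicator_of_notMem (fun h => hw ⟨hc.1.trans h.1, h.2⟩) _
    _ = _ := lintegral_weight ha

/-- The separation probability over the complex numbers, before simplification of the constants. -/
lemma lintegral_complex_total {a : ℝ} (ha : 0 < a) :
    ENNReal.ofReal (symBetaConst (a + 1)) * ∫⁻ c in Set.Ioo (-1) 1, ENNReal.ofReal ((1 - c ^ 2) ^ (a + 1 - 1))
      * (ENNReal.ofReal (symBetaConst a) * ∫⁻ b in Set.Ioo (-1) 1,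
        ENNReal.ofReal ((1 - b ^ 2) ^ (a - 1)) * ENNReal.ofReal ((1 + max (c * b) 0) ^ (-(2 * a))))
      = ENNReal.ofReal (1 / 2 + symBetaConst (a + 1) * symBetaConst a / a) := by
  have hK1 := symBetaConst_pos ha
  have hK2 := symBetaConst_pos (by positivity : 0 < a + 1)
  have n1 := symBetaConst_mul_lintegral ha
  have n2 := symBetaConst_mul_lintegral (by positivity : 0 < a + 1)
  have hD := lintegral_double ha
  rw [add_sub_cancel_right] at n2 ⊢
  rw [lintegral_Ioo_even (by fun_prop) (by simp)] at n1 n2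
  have hin : ∀ c ∈ Set.Ioo (0:ℝ) 1, ∫⁻ b in Set.Ioo (-1) 1, ENNReal.ofReal ((1 - b ^ 2) ^ (a - 1))
      * ENNReal.ofReal ((1 + max (c * b) 0) ^ (-(2 * a)))
      = (∫⁻ b in Set.Ioo (0:ℝ) 1, (ENNReal.ofReal ((1 - b ^ 2) ^ (a - 1))
        * ENNReal.ofReal ((1 + c * b) ^ (-(2 * a)))))
        + ∫⁻ b in Set.Ioo (0:ℝ) 1, ENNReal.ofReal ((1 - b ^ 2) ^ (a - 1)) := by
    intro c hc
    rw [lintegral_Ioo_symm (by fun_prop), ← lintegral_add_left (by fun_prop)]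
    refine setLIntegral_congr_fun measurableSet_Ioo fun b hb => ?_
    have h1 : 0 < c * b := mul_pos hc.1 hb.1
    rw [max_eq_left h1.le, max_eq_right (by linarith), neg_sq, add_zero, Real.one_rpow,
      ENNReal.ofReal_one, mul_one]
  have hmin : Measurable fun c : ℝ => ∫⁻ b in Set.Ioo (-1) 1, ENNReal.ofReal ((1 - b ^ 2) ^ (a - 1))
      * ENNReal.ofReal ((1 + max (c * b) 0) ^ (-(2 * a))) :=
    Measurable.lintegral_prod_right' (f := fun z : ℝ × ℝ => ENNReal.ofReal ((1 - z.2 ^ 2) ^ (a - 1))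
      * ENNReal.ofReal ((1 + max (z.1 * z.2) 0) ^ (-(2 * a)))) (by fun_prop)
  have hmin2 : Measurable fun c : ℝ => ∫⁻ b in Set.Ioo (0:ℝ) 1, (ENNReal.ofReal ((1 - b ^ 2) ^ (a - 1))
        * ENNReal.ofReal ((1 + c * b) ^ (-(2 * a)))) :=
    Measurable.lintegral_prod_right' (f := fun z : ℝ × ℝ => ENNReal.ofReal ((1 - z.2 ^ 2) ^ (a - 1))
      * ENNReal.ofReal ((1 + z.1 * z.2) ^ (-(2 * a)))) (by fun_prop)
  have heven : ∀ c : ℝ, ∫⁻ b in Set.Ioo (-1) 1, ENNReal.ofReal ((1 - b ^ 2) ^ (a - 1))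
      * ENNReal.ofReal ((1 + max (-c * b) 0) ^ (-(2 * a)))
      = ∫⁻ b in Set.Ioo (-1) 1, ENNReal.ofReal ((1 - b ^ 2) ^ (a - 1))
      * ENNReal.ofReal ((1 + max (c * b) 0) ^ (-(2 * a))) := by
    intro c
    rw [lintegral_Ioo_symm (by fun_prop), lintegral_Ioo_symm (by fun_prop)]
    refine lintegral_congr fun b => ?_
    rw [neg_sq, neg_mul, mul_neg, mul_neg, neg_mul, neg_neg, add_comm]
  rw [lintegral_Ioo_even (by fun_prop) (by intro c; rw [neg_sq, heven])]
  set A := ∫⁻ c in Set.Ioo (0:ℝ) 1, ENNReal.ofReal ((1 - c ^ 2) ^ a) with hA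
  set B := ∫⁻ b in Set.Ioo (0:ℝ) 1, ENNReal.ofReal ((1 - b ^ 2) ^ (a - 1)) with hB
  have hsplit : ∫⁻ c in Set.Ioo (0:ℝ) 1, ENNReal.ofReal ((1 - c ^ 2) ^ a)
      * (ENNReal.ofReal (symBetaConst a) * ∫⁻ b in Set.Ioo (-1) 1, ENNReal.ofReal ((1 - b ^ 2) ^ (a - 1))
      * ENNReal.ofReal ((1 + max (c * b) 0) ^ (-(2 * a))))
      = ENNReal.ofReal (symBetaConst a) * (ENNReal.ofReal (1 / (2 * a)) + A * B) := by
    rw [← hD, hA, ← lintegral_mul_const _ (by fun_prop), ← lintegral_add_left (by fun_prop),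
      ← lintegral_const_mul _ (by fun_prop)]
    refine setLIntegral_congr_fun measurableSet_Ioo fun c hc => ?_
    rw [hin c hc]
    ring
  rw [hsplit]
  have hA2 : A ≠ ⊤ := by
    intro h
    rw [h, ENNReal.mul_top (by norm_num), ENNReal.mul_top (by simpa using hK2)] at n2
    exact ENNReal.top_ne_one n2
  have hB2 : B ≠ ⊤ := by
    intro h
    rw [h, ENNReal.mul_top (by norm_num), ENNReal.mul_top (by simpa using hK1)] at n1
    exact ENNReal.top_ne_one n1
  clear hA hB hsplit hin
  clear_value A B
  lift A to NNReal using hA2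
  lift B to NNReal using hB2
  have r1 : symBetaConst a * (2 * (B:ℝ)) = 1 := by
    have := congrArg ENNReal.toReal n1
    simpa [ENNReal.toReal_mul, hK1.le] using this
  have r2 : symBetaConst (a + 1) * (2 * (A:ℝ)) = 1 := by
    have := congrArg ENNReal.toReal n2
    simpa [ENNReal.toReal_mul, hK2.le] using this
  rw [← ENNReal.ofReal_coe_nnreal, ← ENNReal.ofReal_coe_nnreal, ← ENNReal.ofReal_mul (by positivity),
    ← ENNReal.ofReal_add (by positivity) (by positivity), ← ENNReal.ofReal_mul hK1.le,
    ← ENNReal.ofReal_ofNat, ← ENNReal.ofReal_mul (by norm_num), ← ENNReal.ofReal_mul hK2.le]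
  congr 1
  have r3 : (symBetaConst a * (2 * (B:ℝ))) * (symBetaConst (a + 1) * (2 * (A:ℝ))) = 1 := by
    rw [r1, r2, one_mul]
  field_simp
  linear_combination a * r3

/-! ### Gamma function identities, the limits of the closed forms, and the complex probability -/

/-- The ratio `Γ(x + 1/2) / Γ(x)`, in terms of which both closed forms become elementary. -/
def gammaRatio (x : ℝ) : ℝ := Real.Gamma (x + 1 / 2) / Real.Gamma x

lemma gammaRatio_pos {x : ℝ} (hx : 0 < x) : 0 < gammaRatio x :=
  div_pos (Real.Gamma_pos_of_pos (by linarith)) (Real.Gamma_pos_of_pos hx)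

lemma eulerBeta_eq_beta {a b : ℝ} (ha : 0 < a) (hb : 0 < b) : eulerBeta a b = beta a b := by
  rw [beta_eq_betaIntegralReal a b ha hb, Complex.betaIntegral, eulerBeta]
  have h : ∫ t in (0:ℝ)..1, (t:ℂ) ^ ((a:ℂ) - 1) * (1 - (t:ℂ)) ^ ((b:ℂ) - 1)
      = ∫ t in (0:ℝ)..1, ((t ^ (a - 1) * (1 - t) ^ (b - 1) : ℝ) : ℂ) := by
    refine intervalIntegral.integral_congr fun t ht => ?_
    rw [Set.uIcc_of_le zero_le_one] at ht
    rw [Complex.ofReal_mul, Complex.ofReal_cpow ht.1, Complex.ofReal_cpow (by linarith [ht.2])]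
    push_cast
    rfl
  rw [h, intervalIntegral.integral_ofReal, Complex.ofReal_re]

/-- Legendre's duplication formula for the diagonal Beta function. -/
lemma eulerBeta_diag {x : ℝ} (hx : 0 < x) :
    eulerBeta x x = √Real.pi / (gammaRatio x * 2 ^ (2 * x - 1)) := by
  have h1 := Real.Gamma_pos_of_pos hx
  have h2 := Real.Gamma_pos_of_pos (by linarith : 0 < x + 1 / 2)
  have h3 := Real.Gamma_pos_of_pos (by linarith : 0 < 2 * x)
  have hL := Real.Gamma_mul_Gamma_add_half x
  rw [show 1 - 2 * x = -(2 * x - 1) by ring, Real.rpow_neg (by norm_num)] at hL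
  have h4 : (0:ℝ) < 2 ^ (2 * x - 1) := by positivity
  rw [eulerBeta_eq_beta hx hx, beta, gammaRatio, ← two_mul]
  field_simp at hL ⊢
  linear_combination hL

lemma symBetaConst_eq {x : ℝ} (hx : 0 < x) : symBetaConst x = gammaRatio x / √Real.pi := by
  have h1 := Real.Gamma_pos_of_pos hx
  have hL := Real.Gamma_mul_Gamma_add_half x
  rw [show 1 - 2 * x = -(2 * x - 1) by ring, Real.rpow_neg (by norm_num)] at hL
  have h4 : (0:ℝ) < 2 ^ (2 * x - 1) := by positivity
  have h5 : 0 < √Real.pi := Real.sqrt_pos.2 Real.pi_pos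
  rw [symBetaConst, gammaRatio]
  field_simp at hL ⊢
  linear_combination -hL

lemma gammaRatio_mul_add_half {x : ℝ} (hx : 0 < x) : gammaRatio x * gammaRatio (x + 1 / 2) = x := by
  have h1 := Real.Gamma_pos_of_pos hx
  have h2 := Real.Gamma_pos_of_pos (by linarith : 0 < x + 1 / 2)
  rw [gammaRatio, gammaRatio, show x + 1 / 2 + 1 / 2 = x + 1 by ring, Real.Gamma_add_one hx.ne']
  field_simp

lemma gammaRatio_add_one {x : ℝ} (hx : 0 < x) : gammaRatio (x + 1) = (x + 1 / 2) / x * gammaRatio x := by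
  have h1 := Real.Gamma_pos_of_pos hx
  rw [gammaRatio, gammaRatio, show x + 1 + 1 / 2 = (x + 1 / 2) + 1 by ring,
    Real.Gamma_add_one hx.ne', Real.Gamma_add_one (by linarith)]
  field_simp

lemma gammaRatio_sq_le {x : ℝ} (hx : 0 < x) : gammaRatio x ^ 2 ≤ x := by
  have h1 := Real.Gamma_pos_of_pos hx
  have h2 := Real.Gamma_pos_of_pos (by linarith : 0 < x + 1 / 2)
  have h := Real.Gamma_mul_add_mul_le_rpow_Gamma_mul_rpow_Gamma hx (by linarith : 0 < x + 1)
    (by norm_num : (0:ℝ) < 1 / 2) (by norm_num : (0:ℝ) < 1 / 2) (by norm_num)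
  rw [← Real.mul_rpow h1.le (Real.Gamma_pos_of_pos (by linarith)).le, ← Real.sqrt_eq_rpow,
    Real.Gamma_add_one hx.ne', show 1 / 2 * x + 1 / 2 * (x + 1) = x + 1 / 2 by ring] at h
  rw [Real.le_sqrt h2.le (by positivity)] at h
  rw [gammaRatio, div_pow, div_le_iff₀ (by positivity)]
  linarith

lemma tendsto_gammaRatio : Filter.Tendsto (fun x => gammaRatio x ^ 2 / x) Filter.atTop (nhds 1) := by
  have hlow : Filter.Tendsto (fun x : ℝ => 1 - 1 / 2 / (x + 1 / 2)) Filter.atTop (nhds 1) := by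
    have := (Filter.tendsto_atTop_add_const_right _ (1 / 2 : ℝ) Filter.tendsto_id).const_div_atTop
      (1 / 2 : ℝ)
    simpa using this.const_sub 1
  refine tendsto_of_tendsto_of_tendsto_of_le_of_le' hlow tendsto_const_nhds ?_ ?_
  · filter_upwards [Filter.eventually_gt_atTop 0] with x hx
    have h1 := gammaRatio_sq_le (by linarith : 0 < x + 1 / 2)
    have h2 := gammaRatio_mul_add_half hx
    have h3 := gammaRatio_pos (by linarith : 0 < x + 1 / 2)
    have h4 : gammaRatio x = x / gammaRatio (x + 1 / 2) := by
      rw [eq_div_iff h3.ne']; exact h2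
    have h5 : 1 - 1 / 2 / (x + 1 / 2) = x / (x + 1 / 2) := by field_simp; ring
    rw [h5, h4, div_pow, div_div, div_le_div_iff₀ (by positivity) (by positivity)]
    nlinarith [mul_pos hx hx]
  · filter_upwards [Filter.eventually_gt_atTop 0] with x hx
    rw [div_le_one hx]
    exact gammaRatio_sq_le hx

lemma sepProbC_eq {n : ℕ} (hn : 2 ≤ n) : sepProbC n
    = 1 / 2 + (1 + 1 / 2 / ((n:ℝ) - 1)) * (gammaRatio ((n:ℝ) - 1) ^ 2 / ((n:ℝ) - 1)) / Real.pi := by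
  have hm : (0:ℝ) < (n:ℝ) - 1 := by
    have : (2:ℝ) ≤ n := by exact_mod_cast hn
    linarith
  rw [sepProbC, eulerBeta_diag hm]
  set m := (n:ℝ) - 1 with hmdef
  have h1 : (2:ℝ) ^ (4 * (n:ℝ) - 3) = 8 * ((2:ℝ) ^ (2 * m - 1)) ^ 2 := by
    rw [← Real.rpow_natCast, ← Real.rpow_mul (by norm_num), show (8:ℝ) = 2 ^ (3:ℝ) by norm_num,
      ← Real.rpow_add (by norm_num)]
    congr 1
    rw [hmdef]; push_cast; ring
  have h2 : (0:ℝ) < 2 ^ (2 * m - 1) := by positivity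
  have h3 := gammaRatio_pos hm
  have hpi := Real.pi_pos
  rw [h1, div_pow √Real.pi, Real.sq_sqrt hpi.le, show 8 * (n:ℝ) - 4 = 8 * m + 4 by rw [hmdef]; ring]
  field_simp
  ring

lemma sepProbR_eq {n : ℕ} (hn : 2 ≤ n) : sepProbR n
    = gammaRatio ((n:ℝ) - 1) / (2 * gammaRatio (((n:ℝ) - 1) / 2)) := by
  have hm : (0:ℝ) < (n:ℝ) - 1 := by
    have : (2:ℝ) ≤ n := by exact_mod_cast hn
    linarith
  rw [sepProbR, eulerBeta_diag hm, eulerBeta_diag (by positivity)]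
  have h1 : (2:ℝ) ^ (2 * ((n:ℝ) - 1) - 1) * 2 = 2 ^ n * (2:ℝ) ^ (2 * (((n:ℝ) - 1) / 2) - 1) := by
    rw [← Real.rpow_natCast 2 n, ← Real.rpow_add (by norm_num)]
    rw [← Real.rpow_add_one (by norm_num)]
    congr 1
    ring
  set m := (n:ℝ) - 1 with hmdef
  have h2 : (0:ℝ) < 2 ^ (2 * m - 1) := by positivity
  have h2' : (0:ℝ) < 2 ^ (2 * (m / 2) - 1) := by positivity
  have h3 := gammaRatio_pos hm
  have h4 := gammaRatio_pos (by positivity : 0 < m / 2)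
  have h5 : 0 < √Real.pi := Real.sqrt_pos.2 Real.pi_pos
  generalize (2:ℝ) ^ (2 * m - 1) = A at *
  generalize (2:ℝ) ^ (2 * (m / 2) - 1) = B at *
  field_simp
  linear_combination h1

lemma tendsto_natCast_sub_one : Filter.Tendsto (fun n : ℕ => (n:ℝ) - 1) Filter.atTop Filter.atTop :=
  Filter.tendsto_atTop_add_const_right _ (-1 : ℝ) tendsto_natCast_atTop_atTop

lemma tendsto_sepProbC : Filter.Tendsto sepProbC Filter.atTop (nhds (1 / 2 + 1 / Real.pi)) := by
  have h1 := tendsto_gammaRatio.comp tendsto_natCast_sub_one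
  have h2 := (tendsto_natCast_sub_one.const_div_atTop (1 / 2 : ℝ)).const_add 1
  have h3 := (((h2.mul h1).div_const Real.pi).const_add (1 / 2))
  rw [add_zero, one_mul] at h3
  refine h3.congr' ?_
  filter_upwards [Filter.eventually_ge_atTop 2] with n hn
  rw [sepProbC_eq hn]
  rfl

lemma tendsto_sepProbR : Filter.Tendsto sepProbR Filter.atTop (nhds (1 / √2)) := by
  have h1 := tendsto_gammaRatio.comp tendsto_natCast_sub_one
  have h2 := tendsto_gammaRatio.comp
    (tendsto_natCast_sub_one.atTop_div_const (by norm_num : (0:ℝ) < 2))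
  have h3 := ((h1.div h2 one_ne_zero).div_const 2).sqrt
  rw [div_one, Real.sqrt_div zero_le_one, Real.sqrt_one] at h3
  refine h3.congr' ?_
  filter_upwards [Filter.eventually_ge_atTop 2] with n hn
  have hm : (0:ℝ) < (n:ℝ) - 1 := by
    have : (2:ℝ) ≤ n := by exact_mod_cast hn
    linarith
  have h4 := gammaRatio_pos hm
  have h5 := gammaRatio_pos (by positivity : 0 < ((n:ℝ) - 1) / 2)
  rw [sepProbR_eq hn]
  simp only [Function.comp, Pi.div_apply]
  rw [Real.sqrt_eq_iff_eq_sq (by positivity) (by positivity)]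
  field_simp

lemma complex_prob {n : ℕ} (hn : 2 ≤ n) {ν : Measure (Matrix (Fin (2 * n)) (Fin (2 * n)) ℂ)}
    (hν : IsUniformProj n ν) (hd : 2 ≤ 2 * n) : (ν (sepEvent hd)).toReal = sepProbC n := by
  obtain ⟨m, rfl⟩ : ∃ m, n = m + 1 := ⟨n - 1, by omega⟩
  have : NeZero m := ⟨by omega⟩
  have hm : (0:ℝ) < m := by exact_mod_cast Nat.pos_of_ne_zero (NeZero.ne m)
  have d1 : (realDim ℂ (Fin m) : ℝ) / 2 = m := by simp [realDim]
  have d2 : (realDim ℂ Unit : ℝ) / 2 = 1 := by simp [realDim]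
  have d3 : (realDim ℂ (Fin (m + 1)) : ℝ) / 2 = m + 1 := by simp [realDim]
  rw [hν.measure_sepEvent, hν.lintegral_tForm (by simp) measurable_negIndicator
    negIndicator_mul]
  simp only [sqLaw, d1, d2]
  simp_rw [lintegral_complex_inner hm]
  rw [hν.lintegral_reflQ_density _ (f := fun c => ENNReal.ofReal (symBetaConst m) *
    ∫⁻ b in Set.Ioo (-1) 1, ENNReal.ofReal ((1 - b ^ 2) ^ ((m:ℝ) - 1))
      * ENNReal.ofReal ((1 + max (c * b) 0) ^ (-(2 * (m:ℝ))))) ?_ d3, lintegral_complex_total hm]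
  · have hK1 := symBetaConst_pos hm
    have hK2 := symBetaConst_pos (by positivity : (0:ℝ) < m + 1)
    have h3 := gammaRatio_pos hm
    have hpi := Real.pi_pos
    rw [ENNReal.toReal_ofReal (by positivity), sepProbC_eq hn, symBetaConst_eq hm,
      symBetaConst_eq (by positivity), gammaRatio_add_one hm]
    push_cast
    rw [add_sub_cancel_right]
    have h5 : √Real.pi ^ 2 = Real.pi := Real.sq_sqrt hpi.le
    have h6 : 0 < √Real.pi := Real.sqrt_pos.2 hpi
    field_simp
    rw [h5]
    ring
  · refine Measurable.const_mul ?_ _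
    exact Measurable.lintegral_prod_right' (f := fun z : ℝ × ℝ => ENNReal.ofReal
      ((1 - z.2 ^ 2) ^ ((m:ℝ) - 1)) * ENNReal.ofReal ((1 + max (z.1 * z.2) 0) ^ (-(2 * (m:ℝ)))))
      (by fun_prop)

/-! ### The real case: Crofton-type averaging over a circle -/

lemma lintegral_cos {δ : ℝ} (hδ : 0 < δ) (σ : ℝ) {φ : ℝ → ENNReal} :
    ∫⁻ t in Set.Ioo 0 Real.pi, φ (σ + δ * Real.cos t) * ENNReal.ofReal |δ * Real.sin t|
      = ∫⁻ s in Set.Icc (σ - δ) (σ + δ), φ s := by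
  have himg : (fun t => σ + δ * Real.cos t) '' Set.Icc 0 Real.pi = Set.Icc (σ - δ) (σ + δ) := by
    have h1 : (fun t => σ + δ * Real.cos t) = (fun x => σ + δ * x) ∘ Real.cos := rfl
    rw [h1, Set.image_comp, Real.bijOn_cos.image_eq]
    ext x
    constructor
    · rintro ⟨y, hy, rfl⟩
      constructor <;> simp only <;> nlinarith [hy.1, hy.2]
    · intro hx
      refine ⟨(x - σ) / δ, ⟨?_, ?_⟩, ?_⟩
      · rw [le_div_iff₀ hδ]; linarith [hx.1]
      · rw [div_le_iff₀ hδ]; linarith [hx.2]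
      · field_simp; ring
  rw [← himg, lintegral_image_eq_lintegral_abs_deriv_mul measurableSet_Icc
    (f' := fun t => δ * -Real.sin t)]
  · rw [setLIntegral_congr Ioo_ae_eq_Icc]
    refine lintegral_congr fun t => ?_
    rw [mul_neg, abs_neg, mul_comm]
  · intro t _
    exact (((Real.hasDerivAt_cos t).const_mul δ).const_add σ).hasDerivWithinAt
  · intro x hx y hy hxy
    refine Real.bijOn_cos.injOn hx hy ?_
    have : δ * Real.cos x = δ * Real.cos y := by simpa using hxy
    exact mul_left_cancel₀ hδ.ne' this

/-- As `t` runs over the circle, `σ + p cos t + q sin t` covers every value of the interval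
of radius `√(p² + q²)` about `σ` exactly twice. -/
lemma lintegral_circle (σ p q : ℝ) {φ : ℝ → ENNReal} (hφ : Measurable φ) :
    ∫⁻ t in Set.Ioc (-Real.pi) Real.pi, φ (σ + p * Real.cos t + q * Real.sin t)
        * ENNReal.ofReal |q * Real.cos t - p * Real.sin t|
      = 2 * ∫⁻ s, φ s * {s : ℝ | (s - σ) ^ 2 < p ^ 2 + q ^ 2}.indicator 1 s := by
  set z : ℂ := ⟨p, q⟩ with hz
  set δ : ℝ := ‖z‖ with hδ
  have hp : p = δ * Real.cos z.arg := (Complex.norm_mul_cos_arg z).symm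
  have hq : q = δ * Real.sin z.arg := (Complex.norm_mul_sin_arg z).symm
  have hpq : p ^ 2 + q ^ 2 = δ ^ 2 := by
    rw [hδ, Complex.sq_norm, Complex.normSq_apply]; ring
  have hδ0 : 0 ≤ δ := norm_nonneg _
  clear_value δ
  set θ := z.arg
  clear_value θ
  set G : ℝ → ENNReal := fun t => φ (σ + δ * Real.cos t) * ENNReal.ofReal |δ * Real.sin t| with hG
  have hGm : Measurable G := by
    have := hφ.comp (show Measurable fun t => σ + δ * Real.cos t by fun_prop)
    exact this.mul (by fun_prop)
  have hper : ∀ t, G (t + 2 * Real.pi) = G t := fun t => by simp [hG]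
  have h1 : ∀ t, φ (σ + p * Real.cos t + q * Real.sin t)
        * ENNReal.ofReal |q * Real.cos t - p * Real.sin t| = G (t - θ) := by
    intro t
    simp only [hG]
    have e1 : σ + p * Real.cos t + q * Real.sin t = σ + δ * Real.cos (t - θ) := by
      rw [Real.cos_sub, hp, hq]; ring
    have e2 : q * Real.cos t - p * Real.sin t = -(δ * Real.sin (t - θ)) := by
      rw [Real.sin_sub, hp, hq]; ring
    rw [e1, e2, abs_neg]
  have h2 : ∫⁻ t in Set.Ioc (-Real.pi) Real.pi, G (t - θ) = ∫⁻ t in Set.Ioc (-Real.pi) Real.pi, G t := by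
    have h3 : ∫⁻ t in Set.Ioc (-Real.pi) Real.pi, G (t - θ)
        = ∫⁻ t in Set.Ioc (-Real.pi - θ) (-Real.pi - θ + 2 * Real.pi), G t := by
      rw [← lintegral_indicator measurableSet_Ioc, ← lintegral_indicator measurableSet_Ioc,
        ← lintegral_sub_right_eq_self
          ((Set.Ioc (-Real.pi - θ) (-Real.pi - θ + 2 * Real.pi)).indicator fun t => G t) θ]
      refine lintegral_congr fun t => ?_
      by_cases ht : t ∈ Set.Ioc (-Real.pi) Real.pi
      · rw [Set.indicator_of_mem ht, Set.indicator_of_mem]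
        constructor <;> linarith [ht.1, ht.2]
      · rw [Set.indicator_of_notMem ht, Set.indicator_of_notMem]
        intro h
        exact ht ⟨by linarith [h.1], by linarith [h.2]⟩
    rw [h3, (isAddFundamentalDomain_Ioc Real.two_pi_pos (-Real.pi - θ) volume).setLIntegral_eq
      (isAddFundamentalDomain_Ioc Real.two_pi_pos (-Real.pi) volume) G]
    · rw [show -Real.pi + 2 * Real.pi = Real.pi by ring]
    · rintro ⟨g, hg⟩ x
      obtain ⟨k, rfl⟩ := AddSubgroup.mem_zmultiples_iff.1 hg
      have hp' : Function.Periodic G (2 * Real.pi) := hper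
      have := hp'.zsmul k x
      rw [← this]
      congr 1
      exact add_comm _ _
  simp_rw [h1, h2]
  have h4 : ∫⁻ t in Set.Ioc (-Real.pi) Real.pi, G t = 2 * ∫⁻ t in Set.Ioo 0 Real.pi, G t := by
    rw [← setLIntegral_congr Ioo_ae_eq_Ioc, lintegral_Ioo_symm hGm, two_mul, ← lintegral_add_left hGm]
    refine lintegral_congr fun t => ?_
    simp [hG]
  rw [h4]
  congr 1
  rw [hpq]
  have h5 : {s : ℝ | (s - σ) ^ 2 < δ ^ 2} = Set.Ioo (σ - δ) (σ + δ) := by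
    ext s
    rw [Set.mem_ofPred_eq, sq_lt_sq, abs_of_nonneg hδ0, abs_lt]
    constructor <;> rintro ⟨h, h'⟩ <;> constructor <;> linarith
  rw [h5]
  have h6 : ∀ s, φ s * (Set.Ioo (σ - δ) (σ + δ)).indicator 1 s
      = (Set.Ioo (σ - δ) (σ + δ)).indicator φ s := fun s => by
    by_cases hs : s ∈ Set.Ioo (σ - δ) (σ + δ) <;> simp [hs]
  simp_rw [h6]
  rw [lintegral_indicator measurableSet_Ioo]
  rcases hδ0.eq_or_lt with h0 | h0
  · simp [hG, ← h0]
  · exact (lintegral_cos h0 σ).trans (setLIntegral_congr Ioo_ae_eq_Icc).symm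

/-- The probability that `s` lies strictly between the eigenvalues of the corner of `2P - 1`
spanned by `e_i` and `e_j`. -/
def betweenProb {d : ℕ} (ν : Measure (Matrix (Fin d) (Fin d) ℝ)) (i j : Fin d) (s : ℝ) : ENNReal :=
  ∫⁻ P, (Set.Iio (0:ℝ)).indicator (fun _ => (1:ENNReal))
    ((reflQ P (Pi.single i 1) - s) * (reflQ P (Pi.single j 1) - s)
      - ‖reflS P (Pi.single i 1) (Pi.single j 1)‖ ^ 2) ∂ν

lemma measurable_between {d : ℕ} (i j : Fin d) :
    Measurable fun z : ℝ × Matrix (Fin d) (Fin d) ℝ => (reflQ z.2 (Pi.single i 1) - z.1)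
      * (reflQ z.2 (Pi.single j 1) - z.1) - ‖reflS z.2 (Pi.single i 1) (Pi.single j 1)‖ ^ 2 :=
  (((measurable_reflQ measurable_snd measurable_const).sub measurable_fst).mul
    ((measurable_reflQ measurable_snd measurable_const).sub measurable_fst)).sub
      ((measurable_reflS measurable_snd measurable_const measurable_const).norm.pow_const 2)

lemma measurable_betweenProb {d : ℕ} {ν : Measure (Matrix (Fin d) (Fin d) ℝ)}
    [IsProbabilityMeasure ν] (i j : Fin d) : Measurable (betweenProb ν i j) :=
  (measurable_negIndicator.comp (measurable_between i j)).lintegral_prod_right'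

/-- Rotating the pair `(e_i, e_j)` by the angle `t / 2` in its plane. -/
lemma IsUniformProj.lintegral_rotate {d k : ℕ} {ν : Measure (Matrix (Fin d) (Fin d) ℝ)}
    (hν : IsUniformProj k ν) {i j : Fin d} (hij : i ≠ j) {φ : ℝ → ENNReal} (hφ : Measurable φ)
    (t : ℝ) :
    ∫⁻ P, φ (reflQ P (Pi.single i 1))
        * ENNReal.ofReal ‖reflS P (Pi.single i 1) (Pi.single j 1)‖ ∂ν
      = ∫⁻ P, φ ((reflQ P (Pi.single i 1) + reflQ P (Pi.single j 1)) / 2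
            + (reflQ P (Pi.single i 1) - reflQ P (Pi.single j 1)) / 2 * Real.cos t
            + reflS P (Pi.single i 1) (Pi.single j 1) * Real.sin t)
        * ENNReal.ofReal |reflS P (Pi.single i 1) (Pi.single j 1) * Real.cos t
            - (reflQ P (Pi.single i 1) - reflQ P (Pi.single j 1)) / 2 * Real.sin t| ∂ν := by
  set c := Real.cos (t / 2) with hc
  set s := Real.sin (t / 2) with hs
  have hcs : s ^ 2 + c ^ 2 = 1 := Real.sin_sq_add_cos_sq _
  have hct : Real.cos t = c ^ 2 - s ^ 2 := by
    rw [show t = 2 * (t / 2) by ring, Real.cos_two_mul, ← hc]; linarith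
  have hst : Real.sin t = 2 * s * c := by
    rw [show t = 2 * (t / 2) by ring, Real.sin_two_mul]
  have hlen : ∀ x y : ℝ, sqLen (x • Pi.single i 1 + y • Pi.single j 1 : Fin d → ℝ)
      = x ^ 2 + y ^ 2 := by
    intro x y
    have h1 : ((sqLen (x • Pi.single i 1 + y • Pi.single j 1 : Fin d → ℝ) : ℝ) : ℝ)
        = x ^ 2 + y ^ 2 := by
      have := sqLen_eq_dotProduct (x • Pi.single i 1 + y • Pi.single j 1 : Fin d → ℝ)
      simp only [RCLike.ofReal_real_eq_id, id] at this
      rw [this]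
      simp [hij, hij.symm]
      ring
    exact h1
  have h := hν.lintegral_orthonormal hij
    (u := c • Pi.single i 1 + s • Pi.single j 1) (v := (-s) • Pi.single i 1 + c • Pi.single j 1)
    (by rw [hlen]; linarith) (by rw [hlen]; linarith) (by simp [hij, hij.symm]; ring)
    (f := fun x y _ => φ x * ENNReal.ofReal y)
    ((hφ.comp measurable_fst).mul (by fun_prop))
  refine h.trans (lintegral_congr_ae ?_)
  filter_upwards [hν.2.1] with P hP
  have hsym : reflS P (Pi.single j 1) (Pi.single i 1) = reflS P (Pi.single i 1) (Pi.single j 1) := by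
    rw [← reflS_star hP.1]; rfl
  have hQ : ∀ v : Fin d → ℝ, reflS P v v = reflQ P v := fun v => rfl
  have e1 : reflQ P (c • Pi.single i 1 + s • Pi.single j 1)
      = (reflQ P (Pi.single i 1) + reflQ P (Pi.single j 1)) / 2
        + (reflQ P (Pi.single i 1) - reflQ P (Pi.single j 1)) / 2 * Real.cos t
        + reflS P (Pi.single i 1) (Pi.single j 1) * Real.sin t := by
    rw [← hQ]
    simp only [reflS_add_left, reflS_add_right, reflS_smul_left, reflS_smul_right, hsym]
    simp only [star_trivial, hct, hst]
    change c * (c * reflQ P (Pi.single i 1) + s * reflS P (Pi.single i 1) (Pi.single j 1))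
      + s * (c * reflS P (Pi.single i 1) (Pi.single j 1) + s * reflQ P (Pi.single j 1)) = _
    linear_combination ((reflQ P (Pi.single i 1) + reflQ P (Pi.single j 1)) / 2) * hcs
  have e2 : reflS P (c • Pi.single i 1 + s • Pi.single j 1)
      ((-s) • Pi.single i 1 + c • Pi.single j 1)
      = reflS P (Pi.single i 1) (Pi.single j 1) * Real.cos t
        - (reflQ P (Pi.single i 1) - reflQ P (Pi.single j 1)) / 2 * Real.sin t := by
    simp only [reflS_add_left, reflS_add_right, reflS_smul_left, reflS_smul_right, hsym]
    simp only [star_trivial, hct, hst]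
    change (-s) * (c * reflQ P (Pi.single i 1) + s * reflS P (Pi.single i 1) (Pi.single j 1))
      + c * (c * reflS P (Pi.single i 1) (Pi.single j 1) + s * reflQ P (Pi.single j 1)) = _
    ring
  rw [e1, e2, Real.norm_eq_abs]

/-- If the law of the symmetric `2 × 2` matrix with diagonal `α`, `γ` and off-diagonal entry `β` has
rotation invariant first moments of the form `φ(α) |β|`, these are given by the probability that `s`
lies strictly between its eigenvalues. -/
lemma lintegral_rotation_average {Ω : Type} [MeasurableSpace Ω] {ν : Measure Ω}
    [IsProbabilityMeasure ν] {α β γ : Ω → ℝ} (hα : Measurable α) (hβ : Measurable β)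
    (hγ : Measurable γ) {φ : ℝ → ENNReal} (hφ : Measurable φ) {A : ENNReal}
    (hrot : ∀ t : ℝ, A
      = ∫⁻ P, φ ((α P + γ P) / 2 + (α P - γ P) / 2 * Real.cos t + β P * Real.sin t)
        * ENNReal.ofReal |β P * Real.cos t - (α P - γ P) / 2 * Real.sin t| ∂ν) :
    ENNReal.ofReal Real.pi * A
      = ∫⁻ s, φ s * ∫⁻ P, (Set.Iio (0:ℝ)).indicator (fun _ => (1:ENNReal))
          ((α P - s) * (γ P - s) - β P ^ 2) ∂ν := by
  have hα' : Measurable fun z : ℝ × Ω => α z.2 := hα.comp measurable_snd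
  have hγ' : Measurable fun z : ℝ × Ω => γ z.2 := hγ.comp measurable_snd
  have hβ' : Measurable fun z : ℝ × Ω => β z.2 := hβ.comp measurable_snd
  have hmeas : Measurable fun z : ℝ × Ω =>
      φ ((α z.2 + γ z.2) / 2 + (α z.2 - γ z.2) / 2 * Real.cos z.1 + β z.2 * Real.sin z.1)
        * ENNReal.ofReal |β z.2 * Real.cos z.1 - (α z.2 - γ z.2) / 2 * Real.sin z.1| := by
    exact (hφ.comp (by fun_prop)).mul (by fun_prop)
  have hmI : Measurable fun z : ℝ × Ω =>
      (Set.Iio (0:ℝ)).indicator (fun _ => (1:ENNReal))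
        ((α z.2 - z.1) * (γ z.2 - z.1) - β z.2 ^ 2) :=
    measurable_negIndicator.comp (((hα'.sub measurable_fst).mul (hγ'.sub measurable_fst)).sub
      (hβ'.pow_const 2))
  have hmI1 : ∀ s, Measurable fun P => (Set.Iio (0:ℝ)).indicator (fun _ => (1:ENNReal))
      ((α P - s) * (γ P - s) - β P ^ 2) := fun s =>
    hmI.comp (measurable_const.prodMk measurable_id)
  have hmI2 : Measurable fun z : Ω × ℝ =>
      φ z.2 * (Set.Iio (0:ℝ)).indicator (fun _ => (1:ENNReal))
        ((α z.1 - z.2) * (γ z.1 - z.2) - β z.1 ^ 2) :=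
    (hφ.comp measurable_snd).mul (hmI.comp (measurable_snd.prodMk measurable_fst))
  have h2 : 2 * (ENNReal.ofReal Real.pi * A)
      = 2 * ∫⁻ s, φ s * ∫⁻ P, (Set.Iio (0:ℝ)).indicator (fun _ => (1:ENNReal))
          ((α P - s) * (γ P - s) - β P ^ 2) ∂ν := by
    calc 2 * (ENNReal.ofReal Real.pi * A)
        = ∫⁻ _t in Set.Ioc (-Real.pi) Real.pi, A  := by
          rw [setLIntegral_const, Real.volume_Ioc, mul_comm _ (ENNReal.ofReal _), ← mul_assoc]
          congr 1
          rw [show Real.pi - -Real.pi = 2 * Real.pi by ring, ENNReal.ofReal_mul (by norm_num)]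
          simp
      _ = ∫⁻ t in Set.Ioc (-Real.pi) Real.pi, ∫⁻ P,
          φ ((α P + γ P) / 2 + (α P - γ P) / 2 * Real.cos t + β P * Real.sin t)
          * ENNReal.ofReal |β P * Real.cos t - (α P - γ P) / 2 * Real.sin t| ∂ν :=
        lintegral_congr fun t => hrot t
      _ = ∫⁻ P, (∫⁻ t in Set.Ioc (-Real.pi) Real.pi,
          φ ((α P + γ P) / 2 + (α P - γ P) / 2 * Real.cos t + β P * Real.sin t)
          * ENNReal.ofReal |β P * Real.cos t - (α P - γ P) / 2 * Real.sin t|) ∂ν :=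
        lintegral_lintegral_swap hmeas.aemeasurable
      _ = ∫⁻ P, 2 * (∫⁻ s, φ s * (Set.Iio (0:ℝ)).indicator (fun _ => (1:ENNReal))
            ((α P - s) * (γ P - s) - β P ^ 2)) ∂ν := by
          refine lintegral_congr fun P => ?_
          rw [lintegral_circle _ _ _ hφ]
          congr 1
          refine lintegral_congr fun s => ?_
          congr 1
          have : s ∈ {s : ℝ | (s - (α P + γ P) / 2) ^ 2 < ((α P - γ P) / 2) ^ 2 + β P ^ 2}
              ↔ (α P - s) * (γ P - s) - β P ^ 2 ∈ Set.Iio (0:ℝ) := by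
            rw [Set.mem_ofPred_eq, Set.mem_Iio]
            constructor <;> intro h <;> linarith
          by_cases hs : (α P - s) * (γ P - s) - β P ^ 2 ∈ Set.Iio (0:ℝ)
          · rw [Set.indicator_of_mem hs, Set.indicator_of_mem (this.2 hs)]; rfl
          · rw [Set.indicator_of_notMem hs, Set.indicator_of_notMem fun h => hs (this.1 h)]
      _ = 2 * ∫⁻ s, φ s * ∫⁻ P, (Set.Iio (0:ℝ)).indicator (fun _ => (1:ENNReal))
          ((α P - s) * (γ P - s) - β P ^ 2) ∂ν := by
          rw [lintegral_const_mul' _ _ (by simp)]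
          congr 1
          rw [lintegral_lintegral_swap hmI2.aemeasurable]
          refine lintegral_congr fun s => ?_
          rw [lintegral_const_mul _ (hmI1 s)]
  exact (ENNReal.mul_right_inj (by simp) (by simp)).1 h2

/-- Rotating the pair `(e_i, e_j)` in its plane makes the diagonal entry sweep the interval between
the two eigenvalues of the corner, with speed twice the off-diagonal entry. -/
lemma IsUniformProj.crofton {d k : ℕ} {ν : Measure (Matrix (Fin d) (Fin d) ℝ)}
    (hν : IsUniformProj k ν) {i j : Fin d} (hij : i ≠ j) {φ : ℝ → ENNReal} (hφ : Measurable φ) :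
    ENNReal.ofReal Real.pi * ∫⁻ P, φ (reflQ P (Pi.single i 1))
        * ENNReal.ofReal ‖reflS P (Pi.single i 1) (Pi.single j 1)‖ ∂ν
      = ∫⁻ s, φ s * betweenProb ν i j s := by
  have := hν.1
  have h := lintegral_rotation_average (ν := ν)
    (α := fun P => reflQ P (Pi.single i 1)) (γ := fun P => reflQ P (Pi.single j 1))
    (β := fun P => reflS P (Pi.single i 1) (Pi.single j 1))
    (measurable_reflQ measurable_id measurable_const)
    (measurable_reflS measurable_id measurable_const measurable_const)
    (measurable_reflQ measurable_id measurable_const) hφ (hν.lintegral_rotate hij hφ)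
  rw [h]
  refine lintegral_congr fun s => ?_
  simp only [betweenProb, Real.norm_eq_abs, sq_abs]

/-! ### The real case: the off-diagonal entry given the diagonal one -/

lemma lintegral_sqrt_gamma {a : ℝ} (ha : 0 < a) :
    ∫⁻ t, ENNReal.ofReal (√t) ∂gammaMeasure a 1 = ENNReal.ofReal (gammaRatio a) := by
  have hG := Real.Gamma_pos_of_pos ha
  have hG2 := Real.Gamma_pos_of_pos (by linarith : 0 < a + 1 / 2)
  rw [lintegral_gammaMeasure ha (by fun_prop)]
  have h1 : ∀ t ∈ Set.Ioi (0:ℝ), ENNReal.ofReal (t ^ (a - 1)) * (ENNReal.ofReal (Real.exp (-t))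
      * ENNReal.ofReal (√t)) = ENNReal.ofReal (Real.exp (-t) * t ^ (a + 1 / 2 - 1)) := by
    intro t ht
    have ht' : 0 < t := ht
    rw [← ENNReal.ofReal_mul (by positivity), ← ENNReal.ofReal_mul (by positivity),
      Real.sqrt_eq_rpow, show a + 1 / 2 - 1 = (a - 1) + 1 / 2 by ring, Real.rpow_add ht']
    congr 1
    ring
  rw [setLIntegral_congr_fun measurableSet_Ioi h1, ← ofReal_integral_eq_lintegral_ofReal
    (Real.GammaIntegral_convergent (by linarith)), ← Real.Gamma_eq_integral (by linarith),
    ← ENNReal.ofReal_mul (by positivity), gammaRatio]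
  · congr 1
    field_simp
  · filter_upwards [ae_restrict_mem measurableSet_Ioi] with t ht
    have ht' : 0 < t := ht
    positivity

lemma lintegral_gauss_sqLen_subtype {ι : Type} [Fintype ι] (p : ι → Prop)
    [Fintype {k // p k}] [Fintype {k // ¬ p k}] [Nonempty {k // p k}] [Nonempty {k // ¬ p k}]
    {f : ℝ → ENNReal} (hf : Measurable f) :
    ∫⁻ v, f (sqLen fun k : {k // p k} => v k) ∂gauss 𝕜 ι = ∫⁻ a, f a ∂sqLaw 𝕜 {k // p k} := by
  have hm : Measurable fun y : {k // p k} ⊕ {k // ¬ p k} → 𝕜 =>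
      f (sqLen fun k => y (Sum.inl k)) :=
    hf.comp (measurable_sqLen.comp (measurable_pi_iff.2 fun k => measurable_pi_apply _))
  have h1 := (measurePreserving_gauss_reindex (𝕜 := 𝕜) (Equiv.sumCompl p)).lintegral_comp hm
  have h2 := lintegral_gauss_sqLen_sum (𝕜 := 𝕜) (ι := {k // p k}) (κ := {k // ¬ p k})
    (f := fun a _ => f a) (hf.comp measurable_fst)
  simp only [lintegral_const, measure_univ, mul_one] at h2
  exact h1.trans h2

lemma lintegral_gauss_abs_apply {d : ℕ} (hd : 2 ≤ d) (i : Fin d) :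
    ∫⁻ v, ENNReal.ofReal |v i| ∂gauss ℝ (Fin d) = ENNReal.ofReal (gammaRatio (1 / 2)) := by
  have : Nontrivial (Fin d) := Fin.nontrivial_iff_two_le.2 hd
  obtain ⟨j, hj⟩ := exists_ne i
  have : Nonempty {k // k = i} := ⟨⟨i, rfl⟩⟩
  have : Nonempty {k // ¬ k = i} := ⟨⟨j, hj⟩⟩
  have h := lintegral_gauss_sqLen_subtype (𝕜 := ℝ) (fun k => k = i)
    (f := fun t => ENNReal.ofReal (√t)) (by fun_prop)
  rw [sqLaw, lintegral_sqrt_gamma realDim_half_pos] at h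
  have hdim : realDim ℝ {k // k = i} = 1 := by simp [realDim]
  rw [hdim, Nat.cast_one] at h
  rw [← h]
  refine lintegral_congr fun v => ?_
  congr 1
  have h2 : (default : {k // k = i}) = ⟨i, rfl⟩ := Subsingleton.elim _ _
  simp [sqLen, Real.sqrt_sq_eq_abs, h2]

lemma lintegral_gauss_abs_dotProduct {d : ℕ} (hd : 2 ≤ d) (z : Fin d → ℝ) :
    ∫⁻ v, ENNReal.ofReal |z ⬝ᵥ v| ∂gauss ℝ (Fin d)
      = ENNReal.ofReal (√(sqLen z)) * ENNReal.ofReal (gammaRatio (1 / 2)) := by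
  set i : Fin d := ⟨0, by omega⟩
  rcases (sqLen_nonneg z).eq_or_lt with h0 | h0
  · rw [sqLen_eq_zero.1 h0.symm]
    simp [sqLen]
  · set r := √(sqLen z) with hr
    have hrpos : 0 < r := Real.sqrt_pos.2 h0
    have hu : sqLen (r⁻¹ • z) = 1 := by
      rw [sqLen_smul, Real.norm_eq_abs, sq_abs, inv_pow, hr, Real.sq_sqrt h0.le,
        inv_mul_cancel₀ h0.ne']
    obtain ⟨U, hU, hUi⟩ := exists_unitary_of_unit i hu
    have hz : z = r • (U *ᵥ Pi.single i 1) := by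
      rw [hUi, smul_smul, mul_inv_cancel₀ hrpos.ne', one_smul]
    have hm : Measurable fun v : Fin d → ℝ => ENNReal.ofReal |z ⬝ᵥ v| := by
      unfold dotProduct; fun_prop
    have h1 : ∀ v, ENNReal.ofReal |z ⬝ᵥ (U *ᵥ v)| = ENNReal.ofReal r * ENNReal.ofReal |v i| := by
      intro v
      have h2 : (U *ᵥ Pi.single i 1) ⬝ᵥ (U *ᵥ v) = v i := by
        have hUU : Uᵀ * U = 1 := by
          have := mem_unitaryGroup_iff'.1 hU
          rwa [star_eq_conjTranspose, conjTranspose_eq_transpose_of_trivial] at this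
        rw [dotProduct_mulVec, ← mulVec_transpose, mulVec_mulVec, hUU, one_mulVec]
        simp
      rw [hz, smul_dotProduct, h2, smul_eq_mul, abs_mul, abs_of_pos hrpos,
        ENNReal.ofReal_mul hrpos.le]
    rw [← (measurePreserving_gauss_mulVec hU).lintegral_comp hm]
    simp_rw [h1]
    rw [lintegral_const_mul' _ _ ENNReal.ofReal_ne_top, lintegral_gauss_abs_apply hd]

/-- Given the diagonal entry `α` of `2P - 1`, the rest of its row is uniformly distributed on a
sphere of radius `√(1 - α²)`. -/
lemma IsUniformProj.lintegral_offdiag {d k : ℕ} {ν : Measure (Matrix (Fin d) (Fin d) ℝ)}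
    (hν : IsUniformProj k ν) {i j : Fin d} (hij : i ≠ j) {φ : ℝ → ENNReal} (hφ : Measurable φ) :
    ENNReal.ofReal (gammaRatio (((d - 1 : ℕ) : ℝ) / 2)) * ∫⁻ P, φ (reflQ P (Pi.single i 1))
        * ENNReal.ofReal ‖reflS P (Pi.single i 1) (Pi.single j 1)‖ ∂ν
      = ENNReal.ofReal (gammaRatio (1 / 2)) * ∫⁻ P, φ (reflQ P (Pi.single i 1))
        * ENNReal.ofReal (√(1 - reflQ P (Pi.single i 1) ^ 2)) ∂ν := by
  have := hν.1
  have hd : 2 ≤ d := by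
    have h1 := i.isLt
    have h2 := j.isLt
    have h3 : (i : ℕ) ≠ j := fun h => hij (Fin.ext h)
    omega
  set A := ∫⁻ P, φ (reflQ P (Pi.single i 1))
        * ENNReal.ofReal ‖reflS P (Pi.single i 1) (Pi.single j 1)‖ ∂ν with hA
  set w : (Fin d → ℝ) → Fin d → ℝ := fun v => v - v i • Pi.single i 1 with hw
  have hwm : Measurable w := by
    refine measurable_pi_iff.2 fun k => ?_
    simp only [hw, Pi.sub_apply, Pi.smul_apply]
    fun_prop
  -- the length of the projection of a Gaussian vector onto the complement of `e_i`
  have hlen : ∫⁻ v, ENNReal.ofReal (√(sqLen (w v))) ∂gauss ℝ (Fin d)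
      = ENNReal.ofReal (gammaRatio (((d - 1 : ℕ) : ℝ) / 2)) := by
    have : Nonempty {k // ¬ k = i} := ⟨⟨j, hij.symm⟩⟩
    have : Nonempty {k // ¬ ¬ k = i} := ⟨⟨i, not_not.2 rfl⟩⟩
    have h := lintegral_gauss_sqLen_subtype (𝕜 := ℝ) (fun k => ¬ k = i)
      (f := fun t => ENNReal.ofReal (√t)) (by fun_prop)
    rw [sqLaw, lintegral_sqrt_gamma realDim_half_pos] at h
    have hdim : realDim ℝ {k // ¬ k = i} = d - 1 := by
      simp [realDim, Fintype.card_subtype_compl]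
    rw [hdim] at h
    rw [← h]
    refine lintegral_congr fun v => ?_
    congr 2
    rw [sqLen, sqLen, ← (Equiv.sumCompl fun k => ¬ k = i).sum_comp, Fintype.sum_sum_type]
    have hz : ∑ k : {k // ¬ ¬ k = i}, ‖w v (Equiv.sumCompl (fun k => ¬ k = i) (Sum.inr k))‖ ^ 2
        = 0 := Finset.sum_eq_zero fun k _ => by
      have hk : (k : Fin d) = i := not_not.1 k.2
      simp [hw, hk]
    rw [hz, add_zero]
    refine Finset.sum_congr rfl fun k _ => ?_
    simp [hw, k.2]
  have h1 : ∀ᵐ v ∂gauss ℝ (Fin d), ENNReal.ofReal (√(sqLen (w v))) * A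
      = ∫⁻ P, φ (reflQ P (Pi.single i 1)) * ENNReal.ofReal |reflS P (Pi.single i 1) (w v)| ∂ν := by
    filter_upwards [gauss_ae_apply_ne_zero j] with v hv
    have hpos : 0 < sqLen (w v) := lt_of_le_of_ne (sqLen_nonneg _) fun h => by
      have h2 := congrFun (sqLen_eq_zero.1 h.symm) j
      simp [hw, hij.symm] at h2
      exact hv h2
    set r : ℝ := Real.sqrt (sqLen (w v)) with hr
    have hrpos : 0 < r := Real.sqrt_pos.2 hpos
    have hu : sqLen (r⁻¹ • w v) = 1 := by
      rw [sqLen_smul, Real.norm_eq_abs, sq_abs, inv_pow, hr, Real.sq_sqrt hpos.le,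
        inv_mul_cancel₀ hpos.ne']
    have hinv := hν.lintegral_orthonormal hij (u := Pi.single i 1) (v := r⁻¹ • w v)
      (by simp [sqLen, Pi.single_apply, apply_ite]) hu (by simp [hw])
      (f := fun x y _ => φ x * ENNReal.ofReal y) ((hφ.comp measurable_fst).mul (by fun_prop))
    rw [hA, hinv, ← lintegral_const_mul' _ _ ENNReal.ofReal_ne_top]
    refine lintegral_congr fun P => ?_
    rw [reflS_smul_right, mul_left_comm, ← ENNReal.ofReal_mul hrpos.le, Real.norm_eq_abs, abs_mul,
      abs_of_pos (inv_pos.2 hrpos), mul_inv_cancel_left₀ hrpos.ne']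
  have hmeas : Measurable fun z : (Fin d → ℝ) × Matrix (Fin d) (Fin d) ℝ =>
      φ (reflQ z.2 (Pi.single i 1)) * ENNReal.ofReal |reflS z.2 (Pi.single i 1) (w z.1)| := by
    have h2 : Measurable fun z : (Fin d → ℝ) × Matrix (Fin d) (Fin d) ℝ =>
        reflQ z.2 (Pi.single i 1) := measurable_reflQ measurable_snd measurable_const
    have h3 : Measurable fun z : (Fin d → ℝ) × Matrix (Fin d) (Fin d) ℝ =>
        reflS z.2 (Pi.single i 1) (w z.1) :=
      measurable_reflS measurable_snd measurable_const (hwm.comp measurable_fst)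
    exact (hφ.comp h2).mul h3.abs.ennreal_ofReal
  have hwl : Measurable fun v => ENNReal.ofReal (√(sqLen (w v))) :=
    ((measurable_sqLen.comp hwm).sqrt).ennreal_ofReal
  calc ENNReal.ofReal (gammaRatio (((d - 1 : ℕ) : ℝ) / 2)) * A
      = ∫⁻ v, ENNReal.ofReal (√(sqLen (w v))) * A ∂gauss ℝ (Fin d) := by
        rw [lintegral_mul_const _ hwl, hlen]
    _ = ∫⁻ v, (∫⁻ P, φ (reflQ P (Pi.single i 1))
          * ENNReal.ofReal |reflS P (Pi.single i 1) (w v)| ∂ν) ∂gauss ℝ (Fin d) :=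
        lintegral_congr_ae h1
    _ = ∫⁻ P, (∫⁻ v, φ (reflQ P (Pi.single i 1))
          * ENNReal.ofReal |reflS P (Pi.single i 1) (w v)| ∂gauss ℝ (Fin d)) ∂ν :=
        lintegral_lintegral_swap hmeas.aemeasurable
    _ = ∫⁻ P, ENNReal.ofReal (gammaRatio (1 / 2)) * (φ (reflQ P (Pi.single i 1))
          * ENNReal.ofReal (√(1 - reflQ P (Pi.single i 1) ^ 2))) ∂ν := by
        refine lintegral_congr_ae ?_
        filter_upwards [hν.2.1] with P hP
        set e : Fin d → ℝ := Pi.single i 1 with he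
        set α := reflQ P e with hα
        set z : Fin d → ℝ := reflMat P *ᵥ e - α • e with hz
        have hR : (reflMat P)ᵀ = reflMat P := by
          have := reflMat_isHermitian hP.1
          rwa [IsHermitian, conjTranspose_eq_transpose_of_trivial] at this
        have hee : e ⬝ᵥ e = 1 := by simp [he]
        have heR : e ⬝ᵥ (reflMat P *ᵥ e) = α := rfl
        have hRR : (reflMat P *ᵥ e) ⬝ᵥ (reflMat P *ᵥ e) = 1 := by
          rw [dotProduct_mulVec, ← mulVec_transpose, hR, mulVec_mulVec, reflMat_mul_self hP.2.1,
            one_mulVec, hee]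
        have hzl : sqLen z = 1 - α ^ 2 := by
          have := sqLen_eq_dotProduct z
          simp only [RCLike.ofReal_real_eq_id, id, star_trivial] at this
          rw [this, hz]
          simp only [sub_dotProduct, dotProduct_sub, smul_dotProduct, dotProduct_smul, hRR, heR, hee,
            dotProduct_comm _ e, smul_eq_mul]
          ring
        have hzv : ∀ v, reflS P e (w v) = z ⬝ᵥ v := by
          intro v
          have h4 : ∀ u, reflS P e u = (reflMat P *ᵥ e) ⬝ᵥ u := fun u => by
            rw [reflS, star_trivial, dotProduct_mulVec, ← mulVec_transpose, hR]
          rw [h4, hw, hz]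
          simp only [dotProduct_sub, sub_dotProduct, dotProduct_smul, smul_dotProduct, smul_eq_mul,
            dotProduct_comm _ e, heR]
          rw [show e ⬝ᵥ v = v i by simp [he]]
          ring
        simp_rw [hzv]
        rw [lintegral_const_mul, lintegral_gauss_abs_dotProduct hd, hzl]
        · ring
        · unfold dotProduct; fun_prop
    _ = _ := lintegral_const_mul' _ _ ENNReal.ofReal_ne_top

/-! ### The real case: the probability of separation -/

lemma gammaMeasure_absolutelyContinuous (a : ℝ) : gammaMeasure a 1 ≪ volume := by
  unfold gammaMeasure
  exact withDensity_absolutelyContinuous _ _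

lemma lintegral_zero_indicator_inner {a b : ℝ} (ha : 0 < a) (hb : 0 < b) (c : ℝ) :
    ∫⁻ g, ∫⁻ x, ∫⁻ y, ({0} : Set ℝ).indicator (fun _ => (1:ENNReal)) (c * (x - y) - g)
      ∂gammaMeasure a 1 ∂gammaMeasure a 1 ∂gammaMeasure b 1 = 0 := by
  have : IsProbabilityMeasure (gammaMeasure a 1) := isProbabilityMeasure_gammaMeasure ha one_pos
  have : IsProbabilityMeasure (gammaMeasure b 1) := isProbabilityMeasure_gammaMeasure hb one_pos
  have hm0 : Measurable (({0} : Set ℝ).indicator (fun _ => (1:ENNReal))) :=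
    measurable_const.indicator (measurableSet_singleton 0)
  have hm : Measurable fun z : (ℝ × ℝ) × ℝ => ({0} : Set ℝ).indicator (fun _ => (1:ENNReal))
      (c * (z.1.2 - z.2) - z.1.1) := hm0.comp (by fun_prop)
  have hm2 : ∀ x : ℝ, Measurable fun z : ℝ × ℝ => ({0} : Set ℝ).indicator (fun _ => (1:ENNReal))
      (c * (x - z.2) - z.1) := fun x => hm0.comp (by fun_prop)
  rw [lintegral_lintegral_swap (hm.lintegral_prod_right').aemeasurable]
  have h1 : ∀ x, ∫⁻ g, ∫⁻ y, ({0} : Set ℝ).indicator (fun _ => (1:ENNReal)) (c * (x - y) - g)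
      ∂gammaMeasure a 1 ∂gammaMeasure b 1 = 0 := by
    intro x
    rw [lintegral_lintegral_swap (hm2 x).aemeasurable]
    have h2 : ∀ y : ℝ, ∫⁻ g, ({0} : Set ℝ).indicator (fun _ => (1:ENNReal)) (c * (x - y) - g)
        ∂gammaMeasure b 1 = 0 := by
      intro y
      have h3 : ∀ᵐ g ∂gammaMeasure b 1, g ≠ c * (x - y) :=
        (gammaMeasure_absolutelyContinuous b).ae_le (Measure.ae_ne volume _)
      rw [lintegral_congr_ae (g := fun _ => 0), lintegral_zero]
      filter_upwards [h3] with g hg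
      refine Set.indicator_of_notMem (fun h => hg ?_) _
      rw [Set.mem_singleton_iff] at h
      linarith
    simp_rw [h2, lintegral_zero]
  simp_rw [h1, lintegral_zero]

/-- Almost surely, no eigenvalue of the corner of `2P - 1` vanishes. -/
lemma IsUniformProj.ae_tForm_ne_zero {m : ℕ} [NeZero m]
    {ν : Measure (Matrix (Fin (2 * (m + 1))) (Fin (2 * (m + 1))) 𝕜)}
    (hν : IsUniformProj (m + 1) ν) {i j : Fin (2 * (m + 1))} (hij : i ≠ j) :
    ∀ᵐ P ∂ν, tForm P i (Pi.single j 1) ≠ 0 := by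
  have hm0 : Measurable (({0} : Set ℝ).indicator (fun _ => (1:ENNReal))) :=
    measurable_const.indicator (measurableSet_singleton 0)
  have h := hν.lintegral_tForm hij hm0 (fun r x hr => by
    have : r * x ∈ ({0} : Set ℝ) ↔ x ∈ ({0} : Set ℝ) := by simp [hr.ne']
    by_cases h : x ∈ ({0} : Set ℝ)
    · rw [Set.indicator_of_mem h, Set.indicator_of_mem (this.2 h)]
    · rw [Set.indicator_of_notMem h, Set.indicator_of_notMem fun h' => h (this.1 h')])
  simp only [sqLaw] at h
  simp_rw [lintegral_zero_indicator_inner (realDim_half_pos (𝕜 := 𝕜) (ι := Fin m))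
    (realDim_half_pos (𝕜 := 𝕜) (ι := Unit)), lintegral_zero] at h
  have hmt : Measurable fun P : Matrix (Fin (2 * (m + 1))) (Fin (2 * (m + 1))) 𝕜 =>
      ({0} : Set ℝ).indicator (fun _ => (1:ENNReal)) (tForm P i (Pi.single j 1)) :=
    hm0.comp (measurable_tForm measurable_id measurable_const i)
  filter_upwards [(lintegral_eq_zero_iff hmt).1 h] with P hP h0
  rw [h0] at hP
  simp at hP

/-- The Crofton identity determines `betweenProb` up to a null set. -/
lemma IsUniformProj.betweenProb_ae {m : ℕ}
    {ν : Measure (Matrix (Fin (2 * (m + 1))) (Fin (2 * (m + 1))) ℝ)}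
    (hν : IsUniformProj (m + 1) ν) {i j : Fin (2 * (m + 1))} (hij : i ≠ j) :
    ∀ᵐ s : ℝ, ENNReal.ofReal (gammaRatio (m + 1 / 2)) * betweenProb ν i j s
      = ENNReal.ofReal (Real.pi * gammaRatio (1 / 2) * symBetaConst (((m:ℝ) + 1) / 2))
        * (Set.Ioo (-1) 1).indicator
          (fun s : ℝ => ENNReal.ofReal ((1 - s ^ 2) ^ ((m:ℝ) / 2))) s := by
  have := hν.1
  have hK := symBetaConst_pos (by positivity : 0 < ((m:ℝ) + 1) / 2)
  have hG := gammaRatio_pos (by norm_num : (0:ℝ) < 1 / 2)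
  have hpi := Real.pi_pos
  have hfm : Measurable fun s : ℝ => ENNReal.ofReal ((1 - s ^ 2) ^ ((m:ℝ) / 2)) := by fun_prop
  have key : ∀ φ : ℝ → ENNReal, Measurable φ →
      ∫⁻ s, φ s * (ENNReal.ofReal (gammaRatio (m + 1 / 2)) * betweenProb ν i j s)
        = ∫⁻ s, φ s * (ENNReal.ofReal (Real.pi * gammaRatio (1 / 2)
            * symBetaConst (((m:ℝ) + 1) / 2)) * (Set.Ioo (-1) 1).indicator
          (fun s : ℝ => ENNReal.ofReal ((1 - s ^ 2) ^ ((m:ℝ) / 2))) s) := by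
    intro φ hφ
    have h1 := hν.crofton hij hφ
    have h2 := hν.lintegral_offdiag hij hφ
    have hd : (((2 * (m + 1) - 1 : ℕ) : ℝ)) / 2 = m + 1 / 2 := by
      rw [show 2 * (m + 1) - 1 = 2 * m + 1 by omega]
      push_cast
      ring
    rw [hd, hν.lintegral_reflQ_density i (f := fun c => φ c * ENNReal.ofReal (√(1 - c ^ 2)))
      (by fun_prop) (a := ((m:ℝ) + 1) / 2) (by simp [realDim])] at h2
    have h3 : ∀ s, φ s * (ENNReal.ofReal (gammaRatio (m + 1 / 2)) * betweenProb ν i j s)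
        = ENNReal.ofReal (gammaRatio (m + 1 / 2)) * (φ s * betweenProb ν i j s) :=
      fun s => mul_left_comm _ _ _
    simp_rw [h3]
    rw [lintegral_const_mul' _ _ ENNReal.ofReal_ne_top, ← h1, mul_left_comm, h2]
    simp_rw [mul_left_comm (φ _)]
    rw [lintegral_const_mul' _ _ ENNReal.ofReal_ne_top, ENNReal.ofReal_mul (by positivity),
      ENNReal.ofReal_mul (by positivity), mul_assoc, mul_assoc]
    congr 3
    rw [← lintegral_indicator measurableSet_Ioo]
    refine lintegral_congr fun s => ?_
    by_cases hs : s ∈ Set.Ioo (-1:ℝ) 1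
    · rw [Set.indicator_of_mem hs, Set.indicator_of_mem hs, mul_left_comm]
      have hs' : 0 < 1 - s ^ 2 := by nlinarith [hs.1, hs.2]
      rw [← ENNReal.ofReal_mul (by positivity), Real.sqrt_eq_rpow, ← Real.rpow_add hs']
      congr 4
      ring
    · rw [Set.indicator_of_notMem hs, Set.indicator_of_notMem hs, mul_zero]
  refine ae_eq_of_forall_setLIntegral_eq_of_sigmaFinite
    ((measurable_betweenProb i j).const_mul _) ((hfm.indicator measurableSet_Ioo).const_mul _)
    fun S hS _ => ?_
  have h := key (S.indicator fun _ => 1) (measurable_const.indicator hS)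
  rw [← lintegral_indicator hS, ← lintegral_indicator hS]
  convert h using 3 with s s
  · by_cases hs : s ∈ S <;> simp [hs]
  · by_cases hs : s ∈ S <;> simp [hs]

lemma tendsto_between_zero {Ω : Type} [MeasurableSpace Ω] {ν : Measure Ω} [IsProbabilityMeasure ν]
    {α β γ : Ω → ℝ} (hα : Measurable α) (hβ : Measurable β) (hγ : Measurable γ)
    (h0 : ∀ᵐ P ∂ν, α P * γ P - β P ^ 2 ≠ 0) :
    Filter.Tendsto (fun s : ℝ => ∫⁻ P, (Set.Iio (0:ℝ)).indicator (fun _ => (1:ENNReal))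
        ((α P - s) * (γ P - s) - β P ^ 2) ∂ν) (nhds 0)
      (nhds (∫⁻ P, (Set.Iio (0:ℝ)).indicator (fun _ => (1:ENNReal))
        ((α P - 0) * (γ P - 0) - β P ^ 2) ∂ν)) := by
  refine tendsto_lintegral_filter_of_dominated_convergence (fun _ => 1) ?_ ?_ (by simp) ?_
  · exact Filter.Eventually.of_forall fun s => measurable_negIndicator.comp
      (((hα.sub_const s).mul (hγ.sub_const s)).sub (hβ.pow_const 2))
  · exact Filter.Eventually.of_forall fun s => Filter.Eventually.of_forall fun P =>
      Set.indicator_le_self' (fun _ _ => zero_le) _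
  · filter_upwards [h0] with P hP
    have hP' : (α P - 0) * (γ P - 0) - β P ^ 2 ≠ 0 := by
      rw [sub_zero, sub_zero]; exact hP
    have hc : Filter.Tendsto (fun s : ℝ => (α P - s) * (γ P - s) - β P ^ 2) (nhds 0)
        (nhds ((α P - 0) * (γ P - 0) - β P ^ 2)) :=
      Continuous.tendsto (by fun_prop) 0
    rcases hP'.lt_or_gt with h | h
    · rw [Set.indicator_of_mem (Set.mem_Iio.2 h)]
      refine tendsto_const_nhds.congr' ?_
      filter_upwards [hc.eventually_lt_const h] with s hs
      rw [Set.indicator_of_mem (Set.mem_Iio.2 hs)]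
    · rw [Set.indicator_of_notMem (Set.notMem_Iio.2 h.le)]
      refine tendsto_const_nhds.congr' ?_
      filter_upwards [hc.eventually_const_lt h] with s hs
      rw [Set.indicator_of_notMem (Set.notMem_Iio.2 hs.le)]

/-- Continuity at `0`, which extends the almost everywhere formula for `betweenProb` to `s = 0`. -/
lemma IsUniformProj.tendsto_betweenProb {m : ℕ} [NeZero m]
    {ν : Measure (Matrix (Fin (2 * (m + 1))) (Fin (2 * (m + 1))) ℝ)}
    (hν : IsUniformProj (m + 1) ν) {i j : Fin (2 * (m + 1))} (hij : i ≠ j) :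
    Filter.Tendsto (betweenProb ν i j) (nhds 0) (nhds (betweenProb ν i j 0)) := by
  have := hν.1
  exact tendsto_between_zero (ν := ν)
    (α := fun P => reflQ P (Pi.single i 1)) (γ := fun P => reflQ P (Pi.single j 1))
    (β := fun P => ‖reflS P (Pi.single i 1) (Pi.single j 1)‖)
    (measurable_reflQ measurable_id measurable_const)
    (measurable_reflS measurable_id measurable_const measurable_const).norm
    (measurable_reflQ measurable_id measurable_const) (hν.ae_tForm_ne_zero hij)

lemma real_prob {n : ℕ} (hn : 2 ≤ n) {ν : Measure (Matrix (Fin (2 * n)) (Fin (2 * n)) ℝ)}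
    (hν : IsUniformProj n ν) (hd : 2 ≤ 2 * n) : (ν (sepEvent hd)).toReal = sepProbR n := by
  obtain ⟨m, rfl⟩ : ∃ m, n = m + 1 := ⟨n - 1, by omega⟩
  have : NeZero m := ⟨by omega⟩
  have hm : (0:ℝ) < m := by exact_mod_cast Nat.pos_of_ne_zero (NeZero.ne m)
  set i : Fin (2 * (m + 1)) := ⟨0, by omega⟩ with hi
  set j : Fin (2 * (m + 1)) := ⟨1, by omega⟩ with hj
  have hij : i ≠ j := by simp [hi, hj]
  have hsep : ν (sepEvent hd) = betweenProb ν i j 0 := by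
    rw [hν.measure_sepEvent, betweenProb]
    simp only [sub_zero]
    rfl
  have hae := hν.betweenProb_ae hij
  set G := gammaRatio (m + 1 / 2) with hGdef
  set C := Real.pi * gammaRatio (1 / 2) * symBetaConst (((m:ℝ) + 1) / 2) with hCdef
  have hG : 0 < G := gammaRatio_pos (by positivity)
  have hG2 := gammaRatio_pos (by norm_num : (0:ℝ) < 1 / 2)
  have hK := symBetaConst_pos (by positivity : 0 < ((m:ℝ) + 1) / 2)
  have hpi := Real.pi_pos
  have hC : 0 < C := by positivity
  have hval : ENNReal.ofReal G * betweenProb ν i j 0 = ENNReal.ofReal C := by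
    set S := {s : ℝ | ENNReal.ofReal G * betweenProb ν i j s = ENNReal.ofReal C
      * (Set.Ioo (-1) 1).indicator (fun s : ℝ => ENNReal.ofReal ((1 - s ^ 2) ^ ((m:ℝ) / 2))) s}
      with hS
    have hdense : Dense S := Measure.dense_of_ae hae
    have hne : (nhdsWithin (0:ℝ) S).NeBot := mem_closure_iff_nhdsWithin_neBot.1 (hdense 0)
    have h1 : Filter.Tendsto (fun s => ENNReal.ofReal G * betweenProb ν i j s)
        (nhdsWithin 0 S) (nhds (ENNReal.ofReal G * betweenProb ν i j 0)) :=
      ENNReal.Tendsto.const_mul ((hν.tendsto_betweenProb hij).mono_left nhdsWithin_le_nhds)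
        (Or.inr ENNReal.ofReal_ne_top)
    have h2 : Filter.Tendsto (fun s : ℝ => ENNReal.ofReal C
        * ENNReal.ofReal ((1 - s ^ 2) ^ ((m:ℝ) / 2))) (nhdsWithin 0 S)
        (nhds (ENNReal.ofReal C)) := by
      have h3 : Continuous fun s : ℝ => (1 - s ^ 2) ^ ((m:ℝ) / 2) :=
        (by fun_prop : Continuous fun s : ℝ => 1 - s ^ 2).rpow_const
          fun _ => Or.inr (by positivity)
      have h4 := ENNReal.tendsto_ofReal (h3.tendsto 0)
      have h5 := ENNReal.Tendsto.const_mul (a := ENNReal.ofReal C) h4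
        (Or.inr ENNReal.ofReal_ne_top)
      simp only [ne_eq, OfNat.ofNat_ne_zero, not_false_eq_true, zero_pow, sub_zero, Real.one_rpow,
        ENNReal.ofReal_one, mul_one] at h5
      exact h5.mono_left nhdsWithin_le_nhds
    refine tendsto_nhds_unique h1 (h2.congr' ?_)
    filter_upwards [self_mem_nhdsWithin,
      mem_nhdsWithin_of_mem_nhds (Ioo_mem_nhds (by norm_num : (-1:ℝ) < 0) one_pos)] with s hs hs2
    have hs' : ENNReal.ofReal G * betweenProb ν i j s = _ := hs
    rw [hs', Set.indicator_of_mem hs2]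
  have hval2 : G * (betweenProb ν i j 0).toReal = C := by
    have := congrArg ENNReal.toReal hval
    rwa [ENNReal.toReal_mul, ENNReal.toReal_ofReal hG.le, ENNReal.toReal_ofReal hC.le] at this
  have hg1 : gammaRatio (1 / 2) = 1 / √Real.pi := by
    rw [gammaRatio, Real.Gamma_one_half_eq]
    norm_num
  have e1 := gammaRatio_mul_add_half hm
  have e2 := gammaRatio_mul_add_half (by positivity : 0 < (m:ℝ) / 2)
  have p1 := gammaRatio_pos hm
  have p2 := gammaRatio_pos (by positivity : 0 < (m:ℝ) / 2)
  rw [hsep, sepProbR_eq hn]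
  push_cast
  rw [add_sub_cancel_right]
  rw [← hGdef] at e1
  rw [show (m:ℝ) / 2 + 1 / 2 = (m + 1) / 2 by ring] at e2
  have hCv : C = gammaRatio (((m:ℝ) + 1) / 2) := by
    rw [hCdef, hg1, symBetaConst_eq (by positivity)]
    have h5 : 0 < √Real.pi := Real.sqrt_pos.2 hpi
    field_simp
    rw [Real.sq_sqrt hpi.le]
  rw [hCv] at hval2
  rw [eq_div_iff (by positivity)]
  refine mul_left_cancel₀ hG.ne' ?_
  linear_combination (2 * gammaRatio ((m:ℝ) / 2)) * hval2 + 2 * e2 - e1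

theorem statement16 :
    (∀ n : ℕ, ∀ hn : 2 ≤ n, ∀ ν : Measure (Matrix (Fin (2*n)) (Fin (2*n)) ℝ),
        IsUniformProj n ν →
        (ν (sepEvent (by omega))).toReal = sepProbR n) ∧
    Filter.Tendsto sepProbR Filter.atTop (nhds (1 / Real.sqrt 2)) ∧
    (∀ n : ℕ, ∀ hn : 2 ≤ n, ∀ ν : Measure (Matrix (Fin (2*n)) (Fin (2*n)) ℂ),
        IsUniformProj n ν →
        (ν (sepEvent (by omega))).toReal = sepProbC n) ∧
    Filter.Tendsto sepProbC Filter.atTop (nhds (1/2 + 1/Real.pi)) := by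
  exact ⟨fun n hn ν hν => real_prob hn hν _, tendsto_sepProbR,
    fun n hn ν hν => complex_prob hn hν _, tendsto_sepProbC⟩

end
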